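/- For p ∈ {2,3} and every integer k ≥ 1, the group C_p × C_p × C_{p^k} is separable with respect to the class 𝒦_A of finite abelian groups if and only if k = 1 (here C_n denotes the cyclic group of order n). -/

import Mathlib

/-!
An S-ring over an abelian group `U` is encoded by a colouring of `U` whose colour classes are the
basic sets, and an algebraic isomorphism by a `Pair` of colourings `a : U → C`, `b : V → C` with the
same colours and the same structure constants. Separability says that for every such pair there is
a bijection `f : U ≃ V` with `b (f y - f x) = a (y - x)` (`Ind a b`); `sepAbelian_of` is the
translation.

For `k ≥ 2` the group contains `C_p × C_p × C_{p²}`, and a non-induced pair over a subgroup extends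
to the whole group by giving all elements outside the subgroup one further colour (`not_sep`). So it
suffices to exhibit one S-ring over `C₂ × C₂ × C₄` (`col2`) and one over `C₃ × C₃ × C₉` (`col3`),
each with a permutation of the basic sets that preserves the structure constants but is not induced
by a bijection. Both properties are finite checks.

For `k = 1` the S-rings over the elementary abelian groups of order `8` and `27` are classified up to
automorphisms. Tensor products, (generalized) wreath products and trivial S-rings reduce to smaller
groups: a pair restricts to closed subgroups, descends to quotients, and the isomorphisms so obtained
can be glued. For `p = 2` this covers all S-rings (`sep_E32`), as a verified exhaustive search shows.
The search runs through the partitions class by class, cutting off as soon as a structure constant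
fails to be constant on a class; sets are packed into natural numbers, so that a structure constant
is the residue modulo `31` of a bitwise conjunction.

For `p = 3` there are too many partitions, and the search is applied first to the symmetrization,
whose classes are the unions of a class and its negative (`symGood`), and then to the refinements of
each symmetric pattern (`class_of_sym`). Besides the decomposable S-rings, seven special partitions
remain (`class_E33`): two refinements of the partition by Hamming weight, four refinements of a
partition into parabolic cones, and the squares and non-squares of the field of order `27`. For
these, every nonzero translation moves more than a third of the elements to another class. Since
multiplication by `4` is the identity on the elementary abelian group, it preserves each class of the
group on the other side of the pair, and this forces that group to be elementary abelian as well
(`Pair.elem`). Finally, all correspondences between the special partitions that preserve the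
structure constants are realized by linear maps (`good_special`, `sep_E33`).
-/

open scoped Pointwise

namespace SRingPaper

/-- The number of representations of `z` as `x * y` with `x ∈ X`, `y ∈ Y`
(the structure constant `c^Z_{X,Y}` evaluated at `z ∈ Z`). -/
noncomputable def structConst {G : Type*} [Group G] (X Y : Set G) (z : G) : ℕ :=
  Nat.card {p : G × G // p.1 ∈ X ∧ p.2 ∈ Y ∧ p.1 * p.2 = z}

/-- An S-ring (Schur ring) over a finite group `G`, given by its partition of `G`
into basic sets: the partition contains `{1}`, is closed under taking inverses,
and the structure constants are constant on each class (equivalently, the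
ℤ-span of the indicator elements of the classes is a subring of ℤG). -/
structure SRing (G : Type*) [Group G] [Finite G] where
  parts : Set (Set G)
  nonempty_mem : ∀ X ∈ parts, X.Nonempty
  exists_mem : ∀ g : G, ∃ X ∈ parts, g ∈ X
  eq_of_mem : ∀ X ∈ parts, ∀ Y ∈ parts, ∀ g : G, g ∈ X → g ∈ Y → X = Y
  one_mem : ({1} : Set G) ∈ parts
  inv_mem : ∀ X ∈ parts, X⁻¹ ∈ parts
  structConst_const : ∀ X ∈ parts, ∀ Y ∈ parts, ∀ Z ∈ parts, ∀ z ∈ Z, ∀ z' ∈ Z,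
    structConst X Y z = structConst X Y z'

/-- `R(X) = {(g, x*g) : x ∈ X, g ∈ G}`, the edge set of the Cayley graph `Cay(G,X)`. -/
def RSet {G : Type*} [Group G] (X : Set G) : Set (G × G) :=
  {p | ∃ x ∈ X, p.2 = x * p.1}

/-- The image of a binary relation under a map applied to both coordinates. -/
def mapRel {G G' : Type*} (f : G → G') (R : Set (G × G)) : Set (G' × G') :=
  (fun p : G × G => (f p.1, f p.2)) '' R

section Defs

variable {G G' : Type*} [Group G] [Finite G] [Group G'] [Finite G']

/-- A combinatorial isomorphism from the S-ring `A` to the S-ring `B`. -/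
structure IsIso (A : SRing G) (B : SRing G') (f : G → G') : Prop where
  bijective : Function.Bijective f
  image_eq : (fun X : Set G => mapRel f (RSet X)) '' A.parts = RSet '' B.parts

/-- An algebraic isomorphism from the S-ring `A` to the S-ring `B`:
a bijection between the basic sets preserving all structure constants. -/
structure IsAlgIso (A : SRing G) (B : SRing G') (φ : Set G → Set G') : Prop where
  bijOn : Set.BijOn φ A.parts B.parts
  structConst_eq : ∀ X ∈ A.parts, ∀ Y ∈ A.parts, ∀ Z ∈ A.parts,
    ∀ z ∈ Z, ∀ z' ∈ φ Z, structConst X Y z = structConst (φ X) (φ Y) z'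

/-- The algebraic isomorphism `φ` is induced by the combinatorial isomorphism `f`
(i.e. `φ = φ_f`). -/
def InducedBy (A : SRing G) (φ : Set G → Set G') (f : G → G') : Prop :=
  Function.Bijective f ∧ ∀ X ∈ A.parts, mapRel f (RSet X) = RSet (φ X)

/-- `A` is separable with respect to the class `𝒦_A` of finite abelian groups. -/
def SepAbelian (A : SRing G) : Prop :=
  ∀ (H : Type*) [CommGroup H] [Finite H] (B : SRing H) (φ : Set G → Set H),
    IsAlgIso A B φ → ∃ f : G → H, InducedBy A φ f

/-- `A` is separable with respect to the class `𝒦_C` of finite cyclic groups. -/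
def SepCyclic (A : SRing G) : Prop :=
  ∀ (H : Type*) [Group H] [Finite H], IsCyclic H → ∀ (B : SRing H) (φ : Set G → Set H),
    IsAlgIso A B φ → ∃ f : G → H, InducedBy A φ f

/-- `A` is schurian: `A = V(K, G)` for some group `K` with `G_right ≤ K ≤ Sym(G)`,
i.e. the basic sets of `A` are the orbits on `G` of the stabilizer of `1` in `K`. -/
def IsSchurian (A : SRing G) : Prop :=
  ∃ K : Subgroup (Equiv.Perm G),
    (∀ g : G, Equiv.mulRight g ∈ K) ∧
    A.parts = {X : Set G | ∃ g : G, X = {h : G | ∃ f ∈ K, f 1 = 1 ∧ f g = h}}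

lemma mapRel_comp {A B C : Type*} (f : B → C) (g : A → B) (R : Set (A × A)) :
    mapRel (f ∘ g) R = mapRel f (mapRel g R) := by
  simp only [mapRel, Set.image_image]
  rfl

lemma mapRel_id {A : Type*} (R : Set (A × A)) : mapRel (fun x => x) R = R := by
  simp [mapRel]

/-- The automorphism group `Aut(A)` of an S-ring, as a subgroup of `Sym(G)`. -/
def autSubgroup (A : SRing G) : Subgroup (Equiv.Perm G) where
  carrier := {f : Equiv.Perm G | ∀ X ∈ A.parts, mapRel f (RSet X) = RSet X}
  one_mem' := by
    intro X hX
    have h : ⇑(1 : Equiv.Perm G) = fun x => x := rfl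
    rw [h, mapRel_id]
  mul_mem' := by
    intro f g hf hg X hX
    have h : ⇑(f * g) = ⇑f ∘ ⇑g := rfl
    rw [h, mapRel_comp, hg X hX, hf X hX]
  inv_mem' := by
    intro f hf X hX
    conv_lhs => rw [← hf X hX]
    rw [← mapRel_comp]
    have h : ⇑f⁻¹ ∘ ⇑f = fun x => x := by
      funext x
      simp
    rw [h, mapRel_id]

/-- `A` is a normal S-ring: `G_right` is normal in `Aut(A)`. -/
def IsNormalSRing (A : SRing G) : Prop :=
  ∀ f ∈ autSubgroup A, ∀ g : G,
    ∃ g' : G, f * (Equiv.mulRight g : Equiv.Perm G) * f⁻¹ = Equiv.mulRight g'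

/-- The partition of `G` into the orbits of `K ≤ Aut(G)`: the basic sets of the
cyclotomic S-ring `cyc(K, G)`. -/
def cycParts (K : Subgroup (MulAut G)) : Set (Set G) :=
  {X : Set G | ∃ g : G, X = {h : G | ∃ f ∈ K, f g = h}}

/-- `H` is an `A`-subgroup: `H` is a union of basic sets of `A`. -/
def IsASubgroup (A : SRing G) (H : Subgroup G) : Prop :=
  ∀ X ∈ A.parts, X ⊆ (H : Set G) ∨ Disjoint X (H : Set G)

/-- `rad(X) = {g ∈ G : gX = Xg = X}`. -/
def radSet (X : Set G) : Set G :=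
  {g : G | (fun x => g * x) '' X = X ∧ (fun x => x * g) '' X = X}

/-- A subset of a cyclic group is highest if it contains a generator. -/
def IsHighest (X : Set G) : Prop :=
  ∃ x ∈ X, ∀ g : G, g ∈ Subgroup.zpowers x

/-- `A` is the `S`-wreath product with respect to the section `S = U/L`:
`U` and `L` are `A`-subgroups, `L ≤ U`, `L` is normal in `G`, and every basic
set outside `U` has `L` in its radical. -/
def IsSWreath (A : SRing G) (U L : Subgroup G) : Prop :=
  IsASubgroup A U ∧ IsASubgroup A L ∧ L ≤ U ∧ L.Normal ∧
    ∀ X ∈ A.parts, ¬ X ⊆ (U : Set G) → (L : Set G) ⊆ radSet X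

/-- `AU` is the restriction `A_U` of `A` to the `A`-subgroup `U`. -/
def IsRestriction (A : SRing G) (U : Subgroup G) (AU : SRing ↥U) : Prop :=
  AU.parts = {Y : Set ↥U | ∃ X ∈ A.parts, X ⊆ (U : Set G) ∧ Y = (Subtype.val ⁻¹' X : Set ↥U)}

/-- `AQ` is the quotient S-ring `A_{G/L}`. -/
def IsQuotientSRing (A : SRing G) (L : Subgroup G) [L.Normal] (AQ : SRing (G ⧸ L)) : Prop :=
  AQ.parts = {Y : Set (G ⧸ L) | ∃ X ∈ A.parts, Y = ((QuotientGroup.mk : G → G ⧸ L) '' X)}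

/-- The orbit of a pair under a permutation group, for the definition of 2-equivalence. -/
def orb2 {Ω : Type*} (K : Subgroup (Equiv.Perm Ω)) (p : Ω × Ω) : Set (Ω × Ω) :=
  {q : Ω × Ω | ∃ f ∈ K, (f p.1, f p.2) = q}

/-- Two permutation groups are 2-equivalent if they have the same orbits on `Ω × Ω`. -/
def TwoEquiv {Ω : Type*} (K K' : Subgroup (Equiv.Perm Ω)) : Prop :=
  {S : Set (Ω × Ω) | ∃ p, S = orb2 K p} = {S : Set (Ω × Ω) | ∃ p, S = orb2 K' p}

/-- A permutation group is 2-isolated if it is the only group 2-equivalent to it. -/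
def TwoIsolated {Ω : Type*} (K : Subgroup (Equiv.Perm Ω)) : Prop :=
  ∀ K' : Subgroup (Equiv.Perm Ω), TwoEquiv K K' → K' = K

end Defs

/-- `Aut(A)^S` for the section `S = G/N`: the permutations of `G/N` induced by
automorphisms of `A` permuting the `N`-cosets. -/
def inducedOnQuotient {G : Type*} [Group G] [Finite G] (A : SRing G) (N : Subgroup G)
    [N.Normal] : Set ((G ⧸ N) → (G ⧸ N)) :=
  {q : (G ⧸ N) → (G ⧸ N) | ∃ f : Equiv.Perm G, f ∈ autSubgroup A ∧
    (∀ u v : G, (u : G ⧸ N) = (v : G ⧸ N) → ((f u : G) : G ⧸ N) = ((f v : G) : G ⧸ N)) ∧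
    ∀ u : G, q (u : G ⧸ N) = ((f u : G) : G ⧸ N)}

end SRingPaper

/-! ### Pairs of colourings -/

namespace SepProof

universe u v w

/-- Additive, coloured form of an algebraic isomorphism between S-rings over abelian groups. The
basic sets of both S-rings are named by colours in `C`; `a` and `b` send an element to the colour
of its basic set, and a basic set corresponds to the one of the same colour. The equality of the
structure constants is recorded as the existence of a colour-preserving bijection between the
triangles over `x` and the triangles over `h`. -/
structure Pair {C : Type w} {U : Type u} {V : Type v} [AddCommGroup U] [AddCommGroup V]
    (a : U → C) (b : V → C) : Prop where
  zero : a 0 = b 0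
  zero_iff : ∀ {x h}, a x = b h → (x = 0 ↔ h = 0)
  neg : ∀ {x h}, a x = b h → a (-x) = b (-h)
  tri : ∀ {x h}, a x = b h → ∃ e : U ≃ V, ∀ u, b (e u) = a u ∧ b (h - e u) = a (x - u)

/-- The colour correspondence of `a` and `b` is induced by a combinatorial isomorphism. -/
def Ind {C : Type w} {U : Type u} {V : Type v} [AddCommGroup U] [AddCommGroup V]
    (a : U → C) (b : V → C) : Prop :=
  ∃ f : U ≃ V, ∀ x y, b (f y - f x) = a (y - x)

/-- Two maps from finite types with equinumerous fibres differ by a bijection. -/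
lemma exists_equiv_of_fibers {X : Type u} {Y : Type v} {K : Type w} [Finite X] [Finite Y]
    (F : X → K) (F' : Y → K)
    (h : ∀ k, Nat.card {x // F x = k} = Nat.card {y // F' y = k}) :
    ∃ e : X ≃ Y, ∀ x, F' (e x) = F x := by
  let e : ∀ k, {x // F x = k} ≃ {y // F' y = k} := fun k => (Finite.card_eq.1 (h k)).some
  refine ⟨(Equiv.sigmaFiberEquiv F).symm.trans
    ((Equiv.sigmaCongrRight e).trans (Equiv.sigmaFiberEquiv F')), fun x => ?_⟩
  exact (e (F x) ⟨x, rfl⟩).2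

namespace Pair

variable {C : Type w} {U : Type u} {V : Type v} [AddCommGroup U] [AddCommGroup V]
  {a : U → C} {b : V → C}

lemma base (P : Pair a b) : ∃ e : U ≃ V, ∀ u, b (e u) = a u := by
  obtain ⟨e, he⟩ := P.tri P.zero
  exact ⟨e, fun u => (he u).1⟩

lemma symm (P : Pair a b) : Pair b a where
  zero := P.zero.symm
  zero_iff h := (P.zero_iff h.symm).symm
  neg h := (P.neg h.symm).symm
  tri {x h} hx := by
    obtain ⟨e, he⟩ := P.tri hx.symm
    refine ⟨e.symm, fun u => ?_⟩
    have := he (e.symm u)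
    simp only [Equiv.apply_symm_apply] at this
    exact ⟨this.1.symm, this.2.symm⟩

lemma surj (P : Pair a b) (x : U) : ∃ h, b h = a x := by
  obtain ⟨e, he⟩ := P.base
  exact ⟨e x, he x⟩

lemma eq_zero (P : Pair a b) {x : U} (h : a x = a 0) : x = 0 :=
  (P.zero_iff (h.trans P.zero)).2 rfl

lemma eq_zero' (P : Pair a b) {x : V} (h : b x = a 0) : x = 0 :=
  (P.zero_iff h.symm).1 rfl

/-- Transfer of a triangle. -/
lemma ex (P : Pair a b) {x h} (hx : a x = b h) (u : U) :
    ∃ k, b k = a u ∧ b (h - k) = a (x - u) := by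
  obtain ⟨e, he⟩ := P.tri hx
  exact ⟨e u, he u⟩

/-- Transfer of a sum. -/
lemma exadd (P : Pair a b) {u w : U} {h : V} (hx : a (u + w) = b h) :
    ∃ k l, k + l = h ∧ b k = a u ∧ b l = a w := by
  obtain ⟨k, h1, h2⟩ := P.ex hx u
  exact ⟨k, h - k, by abel, h1, by simpa using h2⟩

lemma card_eq (P : Pair a b) : Nat.card U = Nat.card V := by
  obtain ⟨e, -⟩ := P.base
  exact Nat.card_congr e

lemma count (P : Pair a b) {x h} (hx : a x = b h) (Q : C → C → Prop) :
    Nat.card {u // Q (a u) (a (x - u))} = Nat.card {k // Q (b k) (b (h - k))} := by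
  obtain ⟨e, he⟩ := P.tri hx
  exact Nat.card_congr (e.subtypeEquiv fun u => by rw [(he u).1, (he u).2])

lemma count1 (P : Pair a b) (Q : C → Prop) :
    Nat.card {u // Q (a u)} = Nat.card {k // Q (b k)} := by
  obtain ⟨e, he⟩ := P.base
  exact Nat.card_congr (e.subtypeEquiv fun u => by rw [he u])

lemma neg_self (P : Pair a b) {x y : U} (h : a x = a y) : a (-x) = a (-y) := by
  obtain ⟨k, hk⟩ := P.surj x
  rw [P.neg hk.symm, P.neg (h.symm.trans hk.symm)]

lemma refl (P : Pair a b) : Pair a a where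
  zero := rfl
  zero_iff {x y} h := by
    obtain ⟨k, hk⟩ := P.surj x
    rw [P.zero_iff hk.symm, P.zero_iff (h.symm.trans hk.symm)]
  neg h := P.neg_self h
  tri {x y} h := by
    obtain ⟨k, hk⟩ := P.surj x
    obtain ⟨e, he⟩ := P.tri hk.symm
    obtain ⟨e', he'⟩ := P.tri (h.symm.trans hk.symm)
    refine ⟨e.trans e'.symm, fun u => ?_⟩
    have h1 := he u
    have h2 := he' (e'.symm (e u))
    simp only [Equiv.apply_symm_apply] at h2
    exact ⟨h2.1.symm.trans h1.1, h2.2.symm.trans h1.2⟩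

/-- Change of coordinates on the left. -/
lemma comp {U' : Type*} [AddCommGroup U'] (P : Pair a b) (T : U' ≃+ U) :
    Pair (a ∘ T) b where
  zero := by simpa using P.zero
  zero_iff h := by simpa using P.zero_iff h
  neg h := by simpa using P.neg h
  tri {x h} hx := by
    obtain ⟨e, he⟩ := P.tri hx
    exact ⟨T.toEquiv.trans e, fun u => by simpa using he (T u)⟩

/-- Coarsening-free recolouring: a colour-wise injective renaming. -/
lemma ofEquiv (P : Pair a b) {D : Type*} {a' : U → D} {b' : V → D}
    (h : ∀ x y, a' x = b' y ↔ a x = b y) : Pair a' b' where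
  zero := (h _ _).2 P.zero
  zero_iff hx := P.zero_iff ((h _ _).1 hx)
  neg hx := (h _ _).2 (P.neg ((h _ _).1 hx))
  tri {x y} hx := by
    obtain ⟨e, he⟩ := P.tri ((h _ _).1 hx)
    exact ⟨e, fun u => ⟨((h _ _).2 (he u).1.symm).symm, ((h _ _).2 (he u).2.symm).symm⟩⟩

end Pair

namespace Ind
variable {C : Type w} {U : Type u} {V : Type v} [AddCommGroup U] [AddCommGroup V]
  {a : U → C} {b : V → C}

lemma of_comp {U' : Type*} [AddCommGroup U'] (T : U' ≃+ U) (h : Ind (a ∘ T) b) : Ind a b := by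
  obtain ⟨f, hf⟩ := h
  exact ⟨T.symm.toEquiv.trans f, fun x y => by
    have := hf (T.symm x) (T.symm y)
    simpa using this⟩

lemma symm (h : Ind a b) : Ind b a := by
  obtain ⟨f, hf⟩ := h
  exact ⟨f.symm, fun x y => by simpa using (hf (f.symm x) (f.symm y)).symm⟩

/-- A combinatorial isomorphism may be taken to fix zero. -/
lemma fix_zero (h : Ind a b) : ∃ f : U ≃ V, f 0 = 0 ∧ ∀ x y, b (f y - f x) = a (y - x) := by
  obtain ⟨f, hf⟩ := h
  refine ⟨f.trans (Equiv.subRight (f 0)), by simp, fun x y => ?_⟩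
  simpa using hf x y

/-- A linear colour-preserving bijection induces. -/
lemma of_add (T : U ≃+ V) (h : ∀ x, b (T x) = a x) : Ind a b :=
  ⟨T.toEquiv, fun x y => by simpa using h (y - x)⟩

end Ind

end SepProof

/-! ### Pairs of colourings and algebraic isomorphisms -/

namespace SepProof
open SRingPaper

universe u v w

lemma card_tri {U : Type u} {K : Type v} [AddCommGroup U] [Group K]
    (σ : Multiplicative U ≃* K) (X Y : Set K) (x : U) :
    Nat.card {u // σ (.ofAdd u) ∈ X ∧ σ (.ofAdd (x - u)) ∈ Y} =
      structConst X Y (σ (.ofAdd x)) := by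
  refine Nat.card_congr ⟨fun u => ⟨(σ (.ofAdd u.1), σ (.ofAdd (x - u.1))), u.2.1, u.2.2, ?_⟩,
    fun q => ⟨(σ.symm q.1.1).toAdd, ?_⟩, fun u => ?_, fun q => ?_⟩
  · rw [← map_mul, ← ofAdd_add]; simp
  · obtain ⟨⟨q1, q2⟩, h1, h2, h3⟩ := q
    have : Multiplicative.ofAdd (x - (σ.symm q1).toAdd) = σ.symm q2 := by
      have h4 : Multiplicative.ofAdd x = σ.symm q1 * σ.symm q2 := by
        rw [← map_mul]; exact (σ.symm_apply_eq.2 h3).symm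
      rw [ofAdd_sub, h4]; simp
    refine ⟨by simpa using h1, ?_⟩
    rw [this]; simpa using h2
  · simp
  · obtain ⟨⟨q1, q2⟩, h1, h2, h3⟩ := q
    have : Multiplicative.ofAdd (x - (σ.symm q1).toAdd) = σ.symm q2 := by
      have h4 : Multiplicative.ofAdd x = σ.symm q1 * σ.symm q2 := by
        rw [← map_mul]; exact (σ.symm_apply_eq.2 h3).symm
      rw [ofAdd_sub, h4]; simp
    simp [this]

/-- Separability follows from the coloured additive version. -/
lemma sepAbelian_of {U : Type w} [AddCommGroup U] {G : Type u} [Group G] [Finite G]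
    (σ : Multiplicative U ≃* G)
    (hU : ∀ (V : Type v) [AddCommGroup V] [Finite V] (C : Type u) (a : U → C) (b : V → C),
      Pair a b → Ind a b) (A : SRing G) : SepAbelian.{u, v} A := by
  intro H _ _ B φ hφ
  have : Finite U := Finite.of_equiv G ((σ.symm.toEquiv).trans Multiplicative.toAdd)
  let τ : Multiplicative (Additive H) ≃* H :=
    { toFun := fun h => h.toAdd.toMul, invFun := fun h => .ofAdd (.ofMul h)
      left_inv := fun _ => rfl, right_inv := fun _ => rfl, map_mul' := fun _ _ => rfl }
  choose p hp hp' using A.exists_mem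
  have hb : ∀ h : H, ∃ X ∈ A.parts, h ∈ φ X := fun h => by
    obtain ⟨Y, hY, hh⟩ := B.exists_mem h
    obtain ⟨X, hX, rfl⟩ := hφ.bijOn.surjOn hY
    exact ⟨X, hX, hh⟩
  choose q hq hq' using hb
  have hpX : ∀ g X, X ∈ A.parts → (p g = X ↔ g ∈ X) := fun g X hX =>
    ⟨fun h => h ▸ hp' g, fun h => A.eq_of_mem _ (hp g) _ hX g (hp' g) h⟩
  have hqX : ∀ h X, X ∈ A.parts → (q h = X ↔ h ∈ φ X) := fun h X hX =>
    ⟨fun e => e ▸ hq' h, fun e => hφ.bijOn.injOn (hq h) hX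
      (B.eq_of_mem _ (hφ.bijOn.mapsTo (hq h)) _ (hφ.bijOn.mapsTo hX) h (hq' h) e)⟩
  have key : ∀ X ∈ A.parts, ∀ Y ∈ A.parts, ∀ g h, p g = q h →
      structConst X Y g = structConst (φ X) (φ Y) h := fun X hX Y hY g h e =>
    hφ.structConst_eq X hX Y hY _ (hp g) g (hp' g) h (e ▸ hq' h)
  have inj_one : ∀ g : G, p g = p 1 → g = 1 := fun g hg => by
    have h1 : p 1 = {1} := (hpX 1 _ A.one_mem).2 rfl
    exact (hpX g _ A.one_mem).1 (hg.trans h1)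
  have p1 : p 1 = {1} := (hpX 1 _ A.one_mem).2 rfl
  -- `φ X = {1}` for some `X`; since `{1} X = X`, a triangle over `1` shows `1 ∈ φ {1}`
  have phi_one : φ {1} = {1} := by
    obtain ⟨X, hX, hX1⟩ := hφ.bijOn.surjOn B.one_mem
    obtain ⟨g, hg⟩ := A.nonempty_mem X hX
    have hgq : p g = q 1 := by
      rw [(hpX g X hX).2 hg, (hqX 1 X hX).2 (by rw [hX1]; rfl)]
    have h3 := key {1} A.one_mem X hX
    have h4 := h3 g 1 hgq
    have h5 : structConst ({1} : Set G) X g ≠ 0 := by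
      have : Nonempty {p : G × G // p.1 ∈ ({1} : Set G) ∧ p.2 ∈ X ∧ p.1 * p.2 = g} :=
        ⟨⟨(1, g), rfl, hg, one_mul g⟩⟩
      exact Nat.card_pos.ne'
    rw [h4, hX1] at h5
    have : Nonempty {p : H × H // p.1 ∈ φ {1} ∧ p.2 ∈ ({1} : Set H) ∧ p.1 * p.2 = 1} := by
      by_contra hne
      exact h5 (Nat.card_eq_zero.2 (Or.inl (not_nonempty_iff.1 hne)))
    obtain ⟨⟨⟨c, d⟩, hc, hd, hcd⟩⟩ := this
    simp only [Set.mem_singleton_iff] at hd hcd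
    rw [hd, mul_one] at hcd
    rw [hcd] at hc
    exact B.eq_of_mem _ (hφ.bijOn.mapsTo A.one_mem) _ B.one_mem 1 hc rfl
  have q1 : q 1 = {1} := (hqX 1 _ A.one_mem).2 (by rw [phi_one]; rfl)
  let a : U → Set G := fun x => p (σ (.ofAdd x))
  let b : Additive H → Set G := fun h => q h.toMul
  have P : Pair a b :=
    { zero := by
        change p (σ 1) = q 1
        rw [map_one, p1, q1]
      zero_iff := by
        intro x h e
        change p (σ (.ofAdd x)) = q h.toMul at e
        constructor
        · rintro rfl
          have : q h.toMul = {1} := by rw [← e, ofAdd_zero, map_one, p1]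
          have := (hqX _ _ A.one_mem).1 this
          rw [phi_one] at this
          exact this
        · rintro rfl
          rw [toMul_zero, q1, ← p1] at e
          have := inj_one _ e
          simpa using this
      neg := by
        intro x h e
        change p (σ (.ofAdd (-x))) = q (-h).toMul
        change p (σ (.ofAdd x)) = q h.toMul at e
        -- the class of `h⁻¹` is the class paired with that of `g` by a triangle over `1`
        set g := σ (.ofAdd x) with hg
        have hgi : σ (.ofAdd (-x)) = g⁻¹ := by rw [hg, ofAdd_neg, map_inv]
        rw [hgi, toMul_neg]
        set k := h.toMul
        have h1 := key (p g) (hp g) (p g⁻¹) (hp _) 1 1 (by rw [p1, q1])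
        have h2 : structConst (p g) (p g⁻¹) 1 ≠ 0 := by
          have : Nonempty {r : G × G // r.1 ∈ p g ∧ r.2 ∈ p g⁻¹ ∧ r.1 * r.2 = 1} :=
            ⟨⟨(g, g⁻¹), hp' _, hp' _, mul_inv_cancel g⟩⟩
          exact Nat.card_pos.ne'
        rw [h1] at h2
        have : Nonempty {r : H × H // r.1 ∈ φ (p g) ∧ r.2 ∈ φ (p g⁻¹) ∧ r.1 * r.2 = 1} := by
          by_contra hne
          exact h2 (Nat.card_eq_zero.2 (Or.inl (not_nonempty_iff.1 hne)))
        obtain ⟨⟨⟨c, d⟩, hc, hd, hcd⟩⟩ := this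
        have hd' : d = c⁻¹ := (inv_eq_of_mul_eq_one_right hcd).symm
        refine ((hqX _ _ (hp _)).2 ?_).symm
        have hinv : (φ (p g))⁻¹ = φ (p g⁻¹) :=
          B.eq_of_mem _ (B.inv_mem _ (hφ.bijOn.mapsTo (hp g))) _ (hφ.bijOn.mapsTo (hp _)) c⁻¹
            (by simpa using hc) (hd' ▸ hd)
        rw [← hinv, e]
        simpa using hq' k
      tri := by
        intro x h e
        obtain ⟨e', he'⟩ := exists_equiv_of_fibers (fun u => (a u, a (x - u)))
          (fun k => (b k, b (h - k))) (by
            rintro ⟨X, Y⟩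
            simp only [Prod.mk.injEq]
            by_cases hXY : X ∈ A.parts ∧ Y ∈ A.parts
            · obtain ⟨hX, hY⟩ := hXY
              have e1 := card_tri σ X Y x
              have e2 := card_tri τ (φ X) (φ Y) h
              have e3 := key X hX Y hY _ _ e
              simp only [a, b, hpX _ X hX, hpX _ Y hY, hqX _ X hX, hqX _ Y hY]
              exact e1.trans (e3.trans e2.symm)
            · rw [Nat.card_eq_zero.2, Nat.card_eq_zero.2]
              · exact Or.inl ⟨fun ⟨k, hk⟩ => hXY ⟨hk.1 ▸ hq _, hk.2 ▸ hq _⟩⟩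
              · exact Or.inl ⟨fun ⟨k, hk⟩ => hXY ⟨hk.1 ▸ hp _, hk.2 ▸ hp _⟩⟩)
        exact ⟨e', fun u => by simpa using he' u⟩ }
  obtain ⟨f, hf⟩ := hU (Additive H) (Set G) a b P
  refine ⟨fun g => (f (σ.symm g).toAdd).toMul, ?_, ?_⟩
  · exact ((σ.symm.toEquiv.trans Multiplicative.toAdd).trans
      (f.trans Additive.toMul)).bijective
  · have hf' : ∀ g g' : G, q ((f (σ.symm g').toAdd).toMul * ((f (σ.symm g).toAdd).toMul)⁻¹) =
        p (g' * g⁻¹) := fun g g' => by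
      have := hf (σ.symm g).toAdd (σ.symm g').toAdd
      simp only [a, b, toMul_sub, ofAdd_sub, ofAdd_toAdd, div_eq_mul_inv, map_mul, map_inv,
        MulEquiv.apply_symm_apply] at this
      exact this
    intro X hX
    ext ⟨h1, h2⟩
    constructor
    · rintro ⟨⟨g1, g2⟩, ⟨x, hx, hx'⟩, he⟩
      simp only [Prod.mk.injEq] at he hx'
      refine ⟨h2 * h1⁻¹, ?_, by simp⟩
      rw [← hqX _ X hX, ← he.1, ← he.2, hf', hpX _ X hX, hx']
      simpa using hx
    · rintro ⟨x, hx, hx'⟩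
      simp only at hx'
      have hs : ∀ h : H, (f (σ.symm (σ (.ofAdd (f.symm (.ofMul h))))).toAdd).toMul = h := by
        simp
      refine ⟨(σ (.ofAdd (f.symm (.ofMul h1))), σ (.ofAdd (f.symm (.ofMul h2)))),
        ⟨_, ?_, (inv_mul_cancel_right _ _).symm⟩, by simp⟩
      rw [← hpX _ X hX, ← hf', hs, hs, hqX _ X hX, hx']
      simpa using hx

end SepProof

namespace SepProof
open SRingPaper

universe u v w

/-- The basic set of colour `c`, transported to a multiplicative group. -/
def cls {U : Type*} {G : Type*} {C : Type*} [AddCommGroup U] [Group G]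
    (σ : Multiplicative U ≃* G) (a : U → C) (c : C) : Set G := {g | a (σ.symm g).toAdd = c}

lemma structConst_cls {U : Type*} {G : Type*} {C : Type*} [AddCommGroup U] [Group G]
    (σ : Multiplicative U ≃* G) (a : U → C) (c d : C) (g : G) :
    structConst (cls σ a c) (cls σ a d) g =
      Nat.card {u // a u = c ∧ a ((σ.symm g).toAdd - u) = d} := by
  have := card_tri σ (cls σ a c) (cls σ a d) (σ.symm g).toAdd
  simp only [ofAdd_toAdd, MulEquiv.apply_symm_apply] at this
  rw [← this]
  simp [cls]

/-- The S-ring whose basic sets are the colour classes of `a`. -/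
def mkSRing {U : Type*} {G : Type*} {C : Type*} [AddCommGroup U] [Group G] [Finite G]
    (σ : Multiplicative U ≃* G) (a : U → C) (P : Pair a a) : SRing G where
  parts := Set.range fun x : U => cls σ a (a x)
  nonempty_mem := by
    rintro _ ⟨x, rfl⟩
    exact ⟨σ (.ofAdd x), by simp [cls]⟩
  exists_mem g := ⟨_, ⟨(σ.symm g).toAdd, rfl⟩, rfl⟩
  eq_of_mem := by
    rintro _ ⟨x, rfl⟩ _ ⟨y, rfl⟩ g hx hy
    simp only [cls, Set.mem_ofPred_eq] at hx hy ⊢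
    rw [← hx, ← hy]
  one_mem := by
    refine ⟨0, ?_⟩
    ext g
    simp only [cls, Set.mem_ofPred_eq, Set.mem_singleton_iff]
    constructor
    · intro h
      have := P.eq_zero h
      simpa using this
    · rintro rfl
      simp
  inv_mem := by
    rintro _ ⟨x, rfl⟩
    refine ⟨-x, ?_⟩
    ext g
    simp only [cls, Set.mem_ofPred_eq, Set.mem_inv, map_inv, toAdd_inv]
    constructor
    · intro h
      simpa using P.neg h
    · intro h
      simpa using P.neg h
  structConst_const := by
    rintro _ ⟨x, rfl⟩ _ ⟨y, rfl⟩ _ ⟨z, rfl⟩ g hg g' hg'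
    rw [structConst_cls, structConst_cls]
    exact P.count (hg.trans hg'.symm) fun c d => c = a x ∧ d = a y

/-- If all S-rings over `G` are separable, then every pair of colourings is induced. -/
lemma ind_of_sep {U : Type w} {V : Type v} {C : Type*} [AddCommGroup U] [AddCommGroup V]
    [Finite V] {G : Type u} [Group G] [Finite G] (σ : Multiplicative U ≃* G)
    (hG : ∀ A : SRing G, SepAbelian.{u, v} A) (a : U → C) (b : V → C) (P : Pair a b) :
    Ind a b := by
  let τ : Multiplicative V ≃* Multiplicative V := MulEquiv.refl _
  let A := mkSRing σ a P.refl
  let B := mkSRing τ b P.symm.refl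
  have hcol : ∀ x, ∃ h, b h = a x := P.surj
  let φ : Set G → Set (Multiplicative V) := fun X =>
    {h | ∃ g ∈ X, b h.toAdd = a (σ.symm g).toAdd}
  have hφ : ∀ x, φ (cls σ a (a x)) = cls τ b (a x) := by
    intro x
    ext h
    constructor
    · rintro ⟨g, hg, e⟩
      exact e.trans hg
    · intro e
      exact ⟨σ (.ofAdd x), by simp [cls], (show b h.toAdd = a x from e).trans (by simp)⟩
  have iso : IsAlgIso A B φ :=
    { bijOn := by
        refine ⟨?_, ?_, ?_⟩
        · rintro _ ⟨x, rfl⟩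
          obtain ⟨h, hh⟩ := hcol x
          exact ⟨h, by simp only [hφ]; rw [hh]⟩
        · rintro _ ⟨x, rfl⟩ _ ⟨y, rfl⟩ e
          simp only [hφ] at e
          obtain ⟨h, hh⟩ := hcol x
          have h1 : Multiplicative.ofAdd h ∈ cls τ b (a x) := hh
          rw [e] at h1
          have h2 : b h = a y := h1
          simp only
          rw [← hh, h2]
        · rintro _ ⟨h, rfl⟩
          obtain ⟨x, hx⟩ := P.symm.surj h
          exact ⟨_, ⟨x, rfl⟩, by rw [hφ, hx]⟩
      structConst_eq := by
        rintro _ ⟨x, rfl⟩ _ ⟨y, rfl⟩ _ ⟨z, rfl⟩ g hg h hh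
        simp only [hφ] at hh ⊢
        rw [structConst_cls, structConst_cls]
        exact P.count (hg.trans (Eq.symm hh)) fun c d => c = a x ∧ d = a y }
  obtain ⟨f, hf, hf'⟩ := hG A _ B φ iso
  refine ⟨(Multiplicative.ofAdd.trans σ.toEquiv).trans
    ((Equiv.ofBijective f hf).trans Multiplicative.toAdd), fun x y => ?_⟩
  have h1 := hf' _ ⟨y - x, rfl⟩
  simp only [hφ] at h1
  have h2 : (f (σ (.ofAdd x)), f (σ (.ofAdd y))) ∈ RSet (cls τ b (a (y - x))) := by
    rw [← h1]
    refine ⟨(σ (.ofAdd x), σ (.ofAdd y)), ⟨σ (.ofAdd (y - x)), by simp [cls], ?_⟩, rfl⟩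
    simp [ofAdd_sub]
  obtain ⟨k, hk, hk'⟩ := h2
  simp only at hk'
  have h3 : b k.toAdd = a (y - x) := hk
  rw [← h3]
  change b (Multiplicative.toAdd (f (σ (.ofAdd y))) - Multiplicative.toAdd (f (σ (.ofAdd x)))) = _
  rw [hk']
  simp

end SepProof

/-! ### Non-separability for `k ≥ 2` -/

namespace SepProof
open SRingPaper

universe u v w

open Classical in
/-- The wreath extension of a colouring along `ι`: all elements outside the image of `ι` share
one further colour. -/
noncomputable def ext {U : Type*} {W : Type*} {C : Type*} (ι : U → W) (a : U → C) (x : W) :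
    Option C := if h : ∃ u, ι u = x then some (a h.choose) else none

section ext
variable {U : Type*} {W : Type*} {C : Type*} [AddCommGroup U] [AddCommGroup W]
  {ι : U →+ W} {a b : U → C}

lemma ext_apply (hι : Function.Injective ι) (u : U) : ext ι a (ι u) = some (a u) := by
  have h : ∃ v, ι v = ι u := ⟨u, rfl⟩
  rw [ext, dif_pos h, hι h.choose_spec]

lemma ext_none {x : W} (h : ¬ ∃ u, ι u = x) : ext ι a x = none := by
  rw [ext, dif_neg h]

lemma ext_some (hι : Function.Injective ι) {x : W} {c : C} (h : ext ι a x = some c) : ∃ u, ι u = x ∧ a u = c := by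
  by_cases hx : ∃ u, ι u = x
  · obtain ⟨u, rfl⟩ := hx
    rw [ext_apply hι] at h
    exact ⟨u, rfl, by simpa using h⟩
  · rw [ext_none hx] at h
    simp at h

lemma ext_eq_none {x : W} : ext ι a x = none ↔ ¬ ∃ u, ι u = x := by
  rw [ext]; split_ifs with h <;> simp [h]

lemma card_ext_some (hι : Function.Injective ι) (c : C) :
    Nat.card {x // ext ι a x = some c} = Nat.card {u // a u = c} := by
  refine (Nat.card_congr (Equiv.ofBijective (fun u => ⟨ι u.1, by rw [ext_apply hι, u.2]⟩)
    ⟨fun u v h => ?_, fun x => ?_⟩)).symm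
  · exact Subtype.ext (hι (by simpa using h))
  · obtain ⟨u, h1, h2⟩ := ext_some hι x.2
    exact ⟨⟨u, h2⟩, Subtype.ext h1⟩

lemma pair_ext (hι : Function.Injective ι) [Finite W] (P : Pair a b) : Pair (ext ι a) (ext ι b) where
  zero := by
    rw [← map_zero ι, ext_apply hι, ext_apply hι, P.zero]
  zero_iff {x h} e := by
    by_cases hx : ∃ u, ι u = x
    · obtain ⟨u, rfl⟩ := hx
      rw [ext_apply hι] at e
      obtain ⟨k, rfl, hk⟩ := ext_some hι e.symm
      rw [map_eq_zero_iff ι hι, map_eq_zero_iff ι hι]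
      exact P.zero_iff hk.symm
    · rw [ext_none hx] at e
      have hh := ext_eq_none.1 e.symm
      exact ⟨fun h0 => (hx ⟨0, by simp [h0]⟩).elim, fun h0 => (hh ⟨0, by simp [h0]⟩).elim⟩
  neg {x h} e := by
    by_cases hx : ∃ u, ι u = x
    · obtain ⟨u, rfl⟩ := hx
      rw [ext_apply hι] at e
      obtain ⟨k, rfl, hk⟩ := ext_some hι e.symm
      rw [← map_neg, ← map_neg, ext_apply hι, ext_apply hι, P.neg hk.symm]
    · rw [ext_none hx] at e
      have hh := ext_eq_none.1 e.symm
      rw [ext_none, ext_none]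
      · rintro ⟨u, hu⟩; exact hh ⟨-u, by rw [map_neg, hu, neg_neg]⟩
      · rintro ⟨u, hu⟩; exact hx ⟨-u, by rw [map_neg, hu, neg_neg]⟩
  tri {x h} e := by
    by_cases hx : ∃ u, ι u = x
    · obtain ⟨x, rfl⟩ := hx
      rw [ext_apply hι] at e
      obtain ⟨h, rfl, hk⟩ := ext_some hι e.symm
      obtain ⟨e, he⟩ := P.tri hk.symm
      classical
      let E : Equiv.Perm W := Equiv.Perm.extendDomain e
        (Equiv.ofInjective ι hι : U ≃ {w // w ∈ Set.range ι})
      have hE : ∀ u, E (ι u) = ι (e u) := fun u =>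
        Equiv.Perm.extendDomain_apply_image e (Equiv.ofInjective ι hι) u
      refine ⟨E, fun w => ?_⟩
      by_cases hw : ∃ u, ι u = w
      · obtain ⟨u, rfl⟩ := hw
        rw [hE, ← map_sub, ← map_sub, ext_apply hι, ext_apply hι, ext_apply hι, ext_apply hι,
          (he u).1, (he u).2]
        exact ⟨rfl, rfl⟩
      · have : E w = w := Equiv.Perm.extendDomain_apply_not_subtype e _ hw
        rw [this, ext_none hw, ext_none hw, ext_none, ext_none]
        · exact ⟨rfl, rfl⟩
        · rintro ⟨u, hu⟩
          exact hw ⟨x - u, by rw [map_sub, hu]; abel⟩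
        · rintro ⟨u, hu⟩
          exact hw ⟨h - u, by rw [map_sub, hu]; abel⟩
    · rw [ext_none hx] at e
      have hh := ext_eq_none.1 e.symm
      -- the triangles over an element outside the subgroup have at most one side inside
      have one : ∀ (d : U → C) (y : W), (¬ ∃ u, ι u = y) → ∀ k : Option C × Option C,
          Nat.card {w // (ext ι d w, ext ι d (y - w)) = k} = match k with
            | (some _, some _) => 0
            | (some c, none) => Nat.card {u // d u = c}
            | (none, some c) => Nat.card {u // d u = c}
            | (none, none) => Nat.card W - Nat.card U - Nat.card U := by
        intro d y hy k
        have hno : ∀ w, ¬ ((∃ u, ι u = w) ∧ ∃ u, ι u = y - w) := by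
          rintro w ⟨⟨u, hu⟩, ⟨v, hv⟩⟩
          exact hy ⟨u + v, by rw [map_add, hu, hv]; abel⟩
        match k with
        | (some c, some c') =>
          refine Nat.card_eq_zero.2 (Or.inl ⟨fun ⟨w, hw⟩ => ?_⟩)
          simp only [Prod.mk.injEq] at hw
          obtain ⟨u, h1, -⟩ := ext_some hι hw.1
          obtain ⟨v, h2, -⟩ := ext_some hι hw.2
          exact hno w ⟨⟨u, h1⟩, ⟨v, h2⟩⟩
        | (some c, none) =>
          refine Eq.trans ?_ (card_ext_some hι c)
          refine Nat.card_congr (Equiv.subtypeEquivRight fun w => ?_)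
          simp only [Prod.mk.injEq, and_iff_left_iff_imp]
          intro h1
          obtain ⟨u, h1, -⟩ := ext_some hι h1
          exact ext_none fun h2 => hno w ⟨⟨u, h1⟩, h2⟩
        | (none, some c) =>
          refine Eq.trans ?_ (card_ext_some hι c)
          refine Nat.card_congr ((Equiv.subLeft y).subtypeEquiv fun w => ?_)
          simp only [Prod.mk.injEq, Equiv.subLeft_apply, and_iff_right_iff_imp]
          intro h1
          obtain ⟨u, h1, -⟩ := ext_some hι h1
          exact ext_none fun h2 => hno w ⟨h2, ⟨u, h1⟩⟩
        | (none, none) =>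
          have hs : Nat.card {w // (ext ι d w, ext ι d (y - w)) = (none, none)} =
              (((Set.univ : Set W) \ Set.range ι) \ ((fun w => y - w) '' Set.range ι)).ncard := by
            rw [← Nat.card_coe_set_eq]
            refine Nat.card_congr (Equiv.subtypeEquivRight fun w => ?_)
            simp only [Prod.mk.injEq, ext_eq_none, Set.mem_sdiff, Set.mem_univ, true_and,
              Set.mem_range, Set.mem_image, exists_exists_eq_and]
            refine and_congr_right fun _ => not_congr ⟨?_, ?_⟩
            · rintro ⟨u, hu⟩; exact ⟨u, by rw [hu]; abel⟩
            · rintro ⟨u, hu⟩; exact ⟨u, by rw [← hu]; abel⟩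
          have hinj : Function.Injective fun w : W => y - w := fun w w' h => by simpa using h
          have hr : (Set.range ι).ncard = Nat.card U := by
            rw [← Set.image_univ, Set.ncard_image_of_injective _ hι, Set.ncard_univ]
          rw [hs, Set.ncard_sdiff, Set.ncard_sdiff (Set.subset_univ _), Set.ncard_univ,
            Set.ncard_image_of_injective _ hinj, hr]
          rintro _ ⟨_, ⟨u, rfl⟩, rfl⟩
          refine ⟨Set.mem_univ _, ?_⟩
          rintro ⟨v, hv⟩
          exact hy ⟨v + u, by rw [map_add, hv]; simp⟩
      obtain ⟨e', he'⟩ := exists_equiv_of_fibers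
        (fun w => (ext ι a w, ext ι a (x - w))) (fun w => (ext ι b w, ext ι b (h - w))) (by
          intro k
          rw [one a x hx k, one b h hh k]
          match k with
          | (some _, some _) => rfl
          | (some c, none) => exact P.count1 (· = c)
          | (none, some c) => exact P.count1 (· = c)
          | (none, none) => rfl)
      exact ⟨e', fun u => by simpa using he' u⟩

lemma ind_ext (hι : Function.Injective ι) (h : Ind (ext ι a) (ext ι b)) :
    ∃ g : U → U, g 0 = 0 ∧ ∀ x y, b (g y - g x) = a (y - x) := by
  obtain ⟨f, f0, hf⟩ := h.fix_zero
  have h1 : ∀ u, ∃ v, ι v = f (ι u) := by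
    intro u
    have := hf 0 (ι u)
    rw [f0, sub_zero, sub_zero, ext_apply hι] at this
    obtain ⟨v, hv, -⟩ := ext_some hι this
    exact ⟨v, hv⟩
  choose g hg using h1
  refine ⟨g, hι (by rw [hg, map_zero, f0]), fun x y => ?_⟩
  have := hf (ι x) (ι y)
  rw [← hg, ← hg, ← map_sub, ← map_sub, ext_apply hι, ext_apply hι] at this
  simpa using this

end ext

/-- A pair on a subgroup of `W` that is not induced shows that `W` is not separable. -/
lemma not_sep {U : Type} {W : Type} {C : Type} [AddCommGroup U] [AddCommGroup W] [Finite W]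
    {ι : U →+ W} (hι : Function.Injective ι) {a b : U → C} (P : Pair a b)
    (hno : ¬ ∃ g : U → U, g 0 = 0 ∧ ∀ x y, b (g y - g x) = a (y - x))
    {G : Type u} [Group G] [Finite G] (σ : G ≃* Multiplicative W)
    (hG : ∀ A : SRing G, SepAbelian.{u, v} A) : False := by
  have P1 := pair_ext hι P
  let T : ULift.{v} W ≃+ W := AddEquiv.ulift
  have P2 := (P1.symm.comp T).symm
  have h := ind_of_sep σ.symm hG _ _ P2
  exact hno (ind_ext hι (Ind.of_comp T h.symm).symm)

lemma exists_emb (p k : ℕ) (hp : 1 < p) (hk : 2 ≤ k) :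
    ∃ ι : ZMod (p ^ 2) →+ ZMod (p ^ k), Function.Injective ι := by
  obtain ⟨m, rfl⟩ := Nat.exists_eq_add_of_le hk
  have h0 : (zmultiplesHom (ZMod (p ^ (2 + m)))) ((p ^ m : ℕ) : ZMod (p ^ (2 + m)))
      ((p ^ 2 : ℕ) : ℤ) = 0 := by
    simp only [zmultiplesHom_apply, natCast_zsmul, nsmul_eq_mul]
    rw [← Nat.cast_mul, ← pow_add]
    exact ZMod.natCast_self _
  refine ⟨ZMod.lift (p ^ 2) ⟨_, h0⟩, ?_⟩
  rw [ZMod.lift_injective]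
  intro z hz
  simp only [zmultiplesHom_apply, zsmul_eq_mul] at hz
  have h1 : ((z * (p ^ m : ℕ) : ℤ) : ZMod (p ^ (2 + m))) = 0 := by push_cast at hz ⊢; exact hz
  rw [ZMod.intCast_zmod_eq_zero_iff_dvd] at h1 
  rw [ZMod.intCast_zmod_eq_zero_iff_dvd]
  have hpm : ((p ^ m : ℕ) : ℤ) ≠ 0 := by positivity
  rw [pow_add] at h1
  push_cast at h1 hpm ⊢
  exact (mul_dvd_mul_iff_right hpm).1 h1

end SepProof

namespace SepProof
open SRingPaper

universe u v w

/-- Histogram of a list of keys, packed in base `128`. -/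
def hist (l : List ℕ) : ℕ := (l.map fun k => 128 ^ k).sum

lemma hist_eq (l : List ℕ) :
    hist l = l.count 0 + 128 * hist ((l.filter (· ≠ 0)).map Nat.pred) := by
  induction l with
  | nil => simp [hist]
  | cons k l ih =>
    rcases k with _ | k
    · simp only [hist, List.map_cons, List.sum_cons] at ih ⊢
      rw [ih]
      simp
      ring
    · simp only [hist, List.map_cons, List.sum_cons] at ih ⊢
      rw [ih]
      simp [pow_succ]
      ring

/-- Short lists with the same packed histogram have the same counts. -/
lemma count_eq_of_hist (n : ℕ) : ∀ l l' : List ℕ, l.length < 128 → l'.length < 128 →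
    hist l = hist l' → l.count n = l'.count n := by
  have h0 : ∀ l l' : List ℕ, l.length < 128 → l'.length < 128 → hist l = hist l' →
      l.count 0 = l'.count 0 ∧ hist ((l.filter (· ≠ 0)).map Nat.pred) =
        hist ((l'.filter (· ≠ 0)).map Nat.pred) := by
    intro l l' h h' e
    have := List.count_le_length (a := 0) (l := l)
    have := List.count_le_length (a := 0) (l := l')
    rw [hist_eq l, hist_eq l'] at e
    omega
  have h1 : ∀ (l : List ℕ) (m : ℕ),
      l.count (m + 1) = ((l.filter (· ≠ 0)).map Nat.pred).count m := by
    intro l m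
    induction l with
    | nil => simp
    | cons k l ih =>
      rcases k with _ | k
      · simpa using ih
      · by_cases hk : k = m <;> simp_all
  induction n with
  | zero => exact fun l l' h h' e => (h0 l l' h h' e).1
  | succ m ih =>
    intro l l' h h' e
    rw [h1, h1]
    refine ih _ _ ?_ ?_ (h0 l l' h h' e).2
    · rw [List.length_map]; exact (List.length_filter_le _ _).trans_lt h
    · rw [List.length_map]; exact (List.length_filter_le _ _).trans_lt h'

/-- Colours (packed into one number) of the two sides of the triangles over `x`. -/
def sig {U : Type*} [Sub U] (els : List U) (a : U → ℕ) (x : U) : List ℕ :=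
  els.map fun u => 10 * a u + a (x - u)

/-- Computable criterion for a pair of colourings of one group by numbers below `10`: `ν` is the
negation of colours and `ref c` is the packed histogram of the triangles over a colour. -/
lemma pair_of_sig {U : Type} [AddCommGroup U] [Finite U] (els : List U) (hn : els.Nodup)
    (hl : els.length < 128) (hm : ∀ x, x ∈ els) (a b : U → ℕ) (ν ref : ℕ → ℕ)
    (ha : ∀ x, a x < 10 ∧ (a x = a 0 → x = 0) ∧ a (-x) = ν (a x) ∧
      hist (sig els a x) = ref (a x))
    (hb : ∀ x, b x < 10 ∧ (b x = a 0 → x = 0) ∧ b (-x) = ν (b x) ∧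
      hist (sig els b x) = ref (b x)) (h0 : b 0 = a 0) : Pair a b where
  zero := h0.symm
  zero_iff {x h} e := by
    constructor
    · rintro rfl; exact (hb h).2.1 e.symm
    · rintro rfl; exact (ha x).2.1 (e.trans h0)
  neg {x h} e := by rw [(ha x).2.2.1, (hb h).2.2.1, e]
  tri {x h} e := by
    have h1 : ∀ n, (sig els a x).count n = (sig els b h).count n := fun n =>
      count_eq_of_hist n _ _ (by simpa [sig] using hl) (by simpa [sig] using hl)
        (by rw [(ha x).2.2.2, (hb h).2.2.2, e])
    have key : ∀ (c : U → ℕ) (y : U) (n : ℕ),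
        Nat.card {u // 10 * c u + c (y - u) = n} = (sig els c y).count n := by
      classical
      intro c y n
      have e1 : Nat.card {u // 10 * c u + c (y - u) = n} =
          (els.filter fun u => 10 * c u + c (y - u) = n).toFinset.card := by
        rw [← Nat.card_eq_finsetCard]
        refine Nat.card_congr (Equiv.subtypeEquivRight fun u => ?_)
        simp [hm]
      rw [e1, List.toFinset_card_of_nodup (hn.filter _), sig, List.count, List.countP_map,
        List.countP_eq_length_filter]
      congr 1
    obtain ⟨E, hE⟩ := exists_equiv_of_fibers (fun u => 10 * a u + a (x - u))
      (fun u => 10 * b u + b (h - u)) (fun n => by rw [key, key, h1])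
    refine ⟨E, fun u => ?_⟩
    have h2 := hE u
    have h3 := (ha (x - u)).1
    have h4 := (hb (h - E u)).1
    omega

/-- The colouring of `C₂ × C₂ × C₄` by the ten basic sets of an S-ring. -/
def col2 (x : ZMod 2 × ZMod 2 × ZMod 4) : ℕ :=
  [0, 1, 2, 3, 4, 5, 4, 6, 7, 3, 8, 1, 9, 5, 9, 6].getD
    (x.2.2.val * 4 + x.1.val * 2 + x.2.1.val) 0

/-- A permutation of the basic sets of `col2` that preserves the structure constants. -/
def perm2 (n : ℕ) : ℕ := [0, 5, 2, 6, 4, 1, 3, 8, 7, 9].getD n 0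

def els2 : List (ZMod 2 × ZMod 2 × ZMod 4) :=
  [0, 1] ×ˢ ([0, 1] ×ˢ [0, 1, 2, 3])

lemma mem_els2 (x) : x ∈ els2 :=
  List.mem_product.2 ⟨(by decide : ∀ y : ZMod 2, y ∈ [0, 1]) x.1, List.mem_product.2
    ⟨(by decide : ∀ y : ZMod 2, y ∈ [0, 1]) x.2.1,
      (by decide : ∀ y : ZMod 4, y ∈ [0, 1, 2, 3]) x.2.2⟩⟩

def rep2 (n : ℕ) : ZMod 2 × ZMod 2 × ZMod 4 :=
  (els2.find? fun x => col2 x == n).getD 0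

def neg2 (n : ℕ) : ℕ := col2 (-rep2 n)

lemma pair2 : Pair col2 (fun x => perm2 (col2 x)) := by
  apply pair_of_sig els2 (by decide +kernel) (by decide +kernel) mem_els2 _ _ neg2
    (fun n => hist (sig els2 col2 (rep2 n)))
  · decide +kernel
  · decide +kernel
  · decide +kernel

lemma not_ind2 : ¬ ∃ g : ZMod 2 × ZMod 2 × ZMod 4 → ZMod 2 × ZMod 2 × ZMod 4,
    g 0 = 0 ∧ ∀ x y, perm2 (col2 (g y - g x)) = col2 (y - x) := by
  rintro ⟨g, h0, h⟩
  have e : ∃ x, col2 x = 1 ∧ ∃ y, col2 y = 4 ∧ col2 (y - x) = 5 ∧ ∃ z, col2 z = 5 ∧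
      col2 (z - x) = 4 ∧ col2 (z - y) = 1 := by decide +kernel
  have n : ∀ x, perm2 (col2 x) = 1 → ∀ y, perm2 (col2 y) = 4 → perm2 (col2 (y - x)) = 5 →
      ∀ z, perm2 (col2 z) = 5 → perm2 (col2 (z - x)) = 4 → perm2 (col2 (z - y)) ≠ 1 := by
    decide +kernel
  obtain ⟨x, hx, y, hy, hxy, z, hz, hxz, hyz⟩ := e
  have k : ∀ x, perm2 (col2 (g x)) = col2 x := fun x => by simpa [h0] using h 0 x
  exact n (g x) (by rw [k, hx]) (g y) (by rw [k, hy]) (by rw [h, hxy]) (g z) (by rw [k, hz])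
    (by rw [h, hxz]) (by rw [h, hyz])

/-- The colouring of `C₃ × C₃ × C₉` by the seven basic sets of an S-ring: the subgroup
`C₃ × C₃ × 3 C₉` is coloured through the hyperbolic quadratic form `u v` on `C₃ × C₃`, and the
elements outside by the deviation of the last coordinate from that form. -/
def col3N (u v w : ℕ) : ℕ :=
  if w % 3 = 0 then
    if u = 0 ∧ v = 0 then (if w = 0 then 0 else 1) else if u * v = 0 then 2 else 3
  else
    let w' := if w % 3 = 2 then 9 - w else w
    4 + ((w' - 1) / 3 + 2 * (u * v)) % 3

/-- `col3N` read on residues. -/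
def col3 (x : ZMod 3 × ZMod 3 × ZMod 9) : ℕ := col3N x.1.val x.2.1.val x.2.2.val

/-- The exchange of the isotropic and anisotropic basic sets of `col3`. -/
def perm3 (n : ℕ) : ℕ := [0, 1, 3, 2, 4, 5, 6].getD n 0

def els3 : List (ZMod 3 × ZMod 3 × ZMod 9) :=
  [0, 1, 2] ×ˢ ([0, 1, 2] ×ˢ [0, 1, 2, 3, 4, 5, 6, 7, 8])

lemma mem_els3 (x) : x ∈ els3 :=
  List.mem_product.2 ⟨(by decide : ∀ y : ZMod 3, y ∈ [0, 1, 2]) x.1, List.mem_product.2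
    ⟨(by decide : ∀ y : ZMod 3, y ∈ [0, 1, 2]) x.2.1,
      (by decide : ∀ y : ZMod 9, y ∈ [0, 1, 2, 3, 4, 5, 6, 7, 8]) x.2.2⟩⟩

/-- `hist ∘ sig` for colourings of `C₃ × C₃ × C₉`, computed on natural numbers. -/
def hist3 (a : ℕ → ℕ → ℕ → ℕ) (i j k : ℕ) : ℕ :=
  (([0, 1, 2] ×ˢ ([0, 1, 2] ×ˢ [0, 1, 2, 3, 4, 5, 6, 7, 8])).map fun u : ℕ × ℕ × ℕ =>
    128 ^ (10 * a u.1 u.2.1 u.2.2 +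
      a ((i + 3 - u.1) % 3) ((j + 3 - u.2.1) % 3) ((k + 9 - u.2.2) % 9))).sum

lemma hist_sig3 (a : ℕ → ℕ → ℕ → ℕ) (x : ZMod 3 × ZMod 3 × ZMod 9) :
    hist (sig els3 (fun x => a x.1.val x.2.1.val x.2.2.val) x) =
      hist3 a x.1.val x.2.1.val x.2.2.val := by
  have e3 : ∀ x y : ZMod 3, (x - y).val = (x.val + 3 - y.val) % 3 := by decide +kernel
  have e9 : ∀ x y : ZMod 9, (x - y).val = (x.val + 9 - y.val) % 9 := by decide +kernel
  have h : ([0, 1, 2] ×ˢ ([0, 1, 2] ×ˢ [0, 1, 2, 3, 4, 5, 6, 7, 8]) : List (ℕ × ℕ × ℕ)) =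
      els3.map fun x => (x.1.val, x.2.1.val, x.2.2.val) := by decide +kernel
  rw [hist3, h, List.map_map, hist, sig, List.map_map]
  congr 1
  refine List.map_congr_left fun u _ => ?_
  simp only [Function.comp_apply, Prod.fst_sub, Prod.snd_sub, e3, e9]

/-- Packed histogram of the triangles over a colour of `col3`. -/
def ref3 (n : ℕ) : ℕ :=
  match n with
  | 0 => hist3 col3N 0 0 0
  | 1 => hist3 col3N 0 0 3
  | 2 => hist3 col3N 0 1 0
  | 3 => hist3 col3N 1 1 0
  | 4 => hist3 col3N 0 0 1
  | 5 => hist3 col3N 0 0 4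
  | _ => hist3 col3N 0 0 7

lemma pair3 : Pair col3 (fun x => perm3 (col3 x)) := by
  have hv3 : ∀ x : ZMod 3, x.val ∈ [0, 1, 2] := by decide
  have hv9 : ∀ x : ZMod 9, x.val ∈ [0, 1, 2, 3, 4, 5, 6, 7, 8] := by decide
  have h1 : ∀ i ∈ [0, 1, 2], ∀ j ∈ [0, 1, 2], ∀ k ∈ [0, 1, 2, 3, 4, 5, 6, 7, 8],
      hist3 col3N i j k = ref3 (col3N i j k) := by decide +kernel
  have h2 : ∀ i ∈ [0, 1, 2], ∀ j ∈ [0, 1, 2], ∀ k ∈ [0, 1, 2, 3, 4, 5, 6, 7, 8],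
      hist3 (fun u v w => perm3 (col3N u v w)) i j k = ref3 (perm3 (col3N i j k)) := by
    decide +kernel
  have h3 : ∀ x, col3 x < 10 ∧ (col3 x = col3 0 → x = 0) ∧ col3 (-x) = col3 x := by
    decide +kernel
  have h4 : ∀ x, perm3 (col3 x) < 10 ∧ (perm3 (col3 x) = col3 0 → x = 0) := by
    decide +kernel
  refine pair_of_sig els3 (by decide +kernel) (by decide +kernel) mem_els3 _ _ id ref3
    (fun x => ⟨(h3 x).1, (h3 x).2.1, (h3 x).2.2, ?_⟩)
    (fun x => ⟨(h4 x).1, (h4 x).2, by rw [(h3 x).2.2]; rfl, ?_⟩) (by decide +kernel)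
  · exact (hist_sig3 col3N x).trans (h1 _ (hv3 _) _ (hv3 _) _ (hv9 _))
  · exact (hist_sig3 (fun u v w => perm3 (col3N u v w)) x).trans
      (h2 _ (hv3 _) _ (hv3 _) _ (hv9 _))

lemma not_ind3 : ¬ ∃ g : ZMod 3 × ZMod 3 × ZMod 9 → ZMod 3 × ZMod 3 × ZMod 9,
    g 0 = 0 ∧ ∀ x y, perm3 (col3 (g y - g x)) = col3 (y - x) := by
  rintro ⟨g, h0, h⟩
  have e : ∃ x, col3 x = 2 ∧ ∃ y, col3 y = 2 ∧ col3 (y - x) = 2 ∧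
      ∃ z, col3 z = 4 ∧ col3 (z - x) = 4 ∧ col3 (z - y) = 4 ∧
      ∃ t, col3 t = 4 ∧ col3 (t - x) = 4 ∧ col3 (t - y) = 4 ∧ 4 ≤ col3 (t - z) := by
    decide +kernel
  have n : ∀ x, perm3 (col3 x) = 2 → ∀ y, perm3 (col3 y) = 2 ∧ perm3 (col3 (y - x)) = 2 →
      ∀ z, perm3 (col3 z) = 4 ∧ perm3 (col3 (z - x)) = 4 ∧ perm3 (col3 (z - y)) = 4 →
      ∀ t, perm3 (col3 t) = 4 ∧ perm3 (col3 (t - x)) = 4 ∧ perm3 (col3 (t - y)) = 4 →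
      ¬ 4 ≤ perm3 (col3 (t - z)) := by
    decide +kernel
  obtain ⟨x, hx, y, hy, hxy, z, hz, hxz, hyz, t, ht, hxt, hyt, hzt⟩ := e
  have k : ∀ x, perm3 (col3 (g x)) = col3 x := fun x => by simpa [h0] using h 0 x
  exact n (g x) (by rw [k, hx]) (g y) ⟨by rw [k, hy], by rw [h, hxy]⟩ (g z) ⟨by rw [k, hz],
    by rw [h, hxz], by rw [h, hyz]⟩ (g t) ⟨by rw [k, ht], by rw [h, hxt], by rw [h, hyt]⟩ (by rw [h]; exact hzt)

/-- `C_p × C_p × C_{p^k}` is not separable for `k ≥ 2`. -/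
lemma not_sep_of_two_le (p k : ℕ) (hp : p = 2 ∨ p = 3) (hk : 2 ≤ k)
    {G : Type u} [Group G] [Finite G]
    (σ : G ≃* Multiplicative (ZMod p × ZMod p × ZMod (p ^ k)))
    (hG : ∀ A : SRing G, SepAbelian.{u, v} A) : False := by
  have hpk : 0 < p ^ k := by rcases hp with rfl | rfl <;> positivity
  have : NeZero (p ^ k) := ⟨hpk.ne'⟩
  obtain ⟨ι, hι⟩ := exists_emb p k (by omega) hk
  have hι' : Function.Injective
      (((AddMonoidHom.id (ZMod p)).prodMap ((AddMonoidHom.id (ZMod p)).prodMap ι))) := by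
    rintro ⟨x, y, z⟩ ⟨x', y', z'⟩ h
    simp only [AddMonoidHom.prodMap_def, AddMonoidHom.prod_apply, AddMonoidHom.comp_apply,
      AddMonoidHom.id_apply, Prod.mk.injEq, AddMonoidHom.coe_fst, AddMonoidHom.coe_snd] at h ⊢
    exact ⟨h.1, h.2.1, hι h.2.2⟩
  rcases hp with rfl | rfl
  · exact not_sep hι' pair2 not_ind2 σ hG
  · exact not_sep hι' pair3 not_ind3 σ hG

end SepProof

/-! ### Counting with packed sets -/

namespace SepProof

/-- A finite set of naturals packed into one number: the digit `1` in base `32` at each member.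
Intersections are bitwise, translations are shifts, and the cardinality is the residue
modulo `31`. -/
def pk (A : Finset ℕ) : ℕ := ∑ c ∈ A, 32 ^ c

lemma testBit_pk (A : Finset ℕ) (i : ℕ) : (pk A).testBit i = true ↔ ∃ c ∈ A, 5 * c = i := by
  have h : pk A = ∑ i ∈ A.image (5 * ·), 2 ^ i := by
    rw [Finset.sum_image (by intro x _ y _ h; simpa using h)]
    exact Finset.sum_congr rfl fun c _ => by rw [pow_mul]; norm_num
  rw [h, ← Nat.mem_bitIndices, ← List.mem_toFinset, Finset.toFinset_bitIndices_sum_two_pow]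
  simp

lemma shift_land_pk (A B : Finset ℕ) (s : ℕ) :
    ((pk A >>> (5 * s)) &&& pk B) = pk (B.filter fun c => c + s ∈ A) := by
  apply Nat.eq_of_testBit_eq
  intro i
  rw [Bool.eq_iff_iff, Nat.testBit_and, Bool.and_eq_true, Nat.testBit_shiftRight, testBit_pk,
    testBit_pk, testBit_pk]
  constructor
  · rintro ⟨⟨c, hc, h1⟩, d, hd, rfl⟩
    exact ⟨d, Finset.mem_filter.2 ⟨hd, by convert hc using 1; omega⟩, rfl⟩
  · rintro ⟨d, hd, rfl⟩
    obtain ⟨hd, h⟩ := Finset.mem_filter.1 hd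
    exact ⟨⟨_, h, by omega⟩, d, hd, rfl⟩

lemma land_pk (A B : Finset ℕ) : (pk A &&& pk B) = pk (B.filter fun c => c ∈ A) := by
  simpa using shift_land_pk A B 0

lemma pk_mod (A : Finset ℕ) (h : A.card < 31) : pk A % 31 = A.card := by
  have h1 : pk A ≡ ∑ c ∈ A, 1 [MOD 31] := by
    unfold pk
    induction A using Finset.induction_on with
    | empty => rfl
    | insert x s hx ih =>
      rw [Finset.sum_insert hx, Finset.sum_insert hx]
      have h3 : s.card < 31 := lt_of_le_of_lt (Finset.card_le_card (Finset.subset_insert x s)) h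
      refine Nat.ModEq.add ?_ (ih h3)
      have := Nat.ModEq.pow x (show 32 ≡ 1 [MOD 31] from rfl)
      simpa using this
  rw [Finset.sum_const, smul_eq_mul, mul_one] at h1
  rw [h1, Nat.mod_eq_of_lt h]

lemma pk_inj {A B : Finset ℕ} (h : pk A = pk B) : A = B := by
  ext c
  have h1 := testBit_pk A (5 * c)
  rw [h, testBit_pk] at h1
  simpa using h1.symm

lemma pk_union {A B : Finset ℕ} (h : Disjoint A B) : pk (A ∪ B) = pk A + pk B :=
  Finset.sum_union h

/-! ### The search engine -/

/-- An atom of the search, a nonempty set of group elements that is not to be split: `sh` is five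
times the code of a representative, `r` and `e` are the packed sets of the reflected codes and of
all codes of its elements. -/
structure At where
  sh : ℕ
  r : ℕ
  e : ℕ

/-- A union of atoms, with the sums of the packed sets. -/
structure Cl where
  mem : List At
  r : ℕ
  e : ℕ

/-- The number of `u` in the first set such that `z - u` lies in the second set. -/
def cnt (r e : ℕ) (z : At) : ℕ := Nat.mod (Nat.land (Nat.shiftRight e z.sh) r) 31

def allEq (r e v : ℕ) : List At → Bool
  | [] => true
  | z :: t => Bool.rec false (allEq r e v t) (Nat.beq (cnt r e z) v)

/-- The counts of `X` and `Y` are constant on the given list. -/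
def cst (X Y : Cl) : List At → Bool
  | [] => true
  | z :: t => allEq X.r Y.e (cnt X.r Y.e z) t

/-- Conjunction that evaluates its second argument only if needed. -/
def bAnd (x y : Bool) : Bool := Bool.rec false y x

/-- Implication that evaluates its second argument only if needed. -/
def bImp (x y : Bool) : Bool := Bool.rec true y x

def allP (f : Cl → Bool) : List Cl → Bool
  | [] => true
  | Y :: t => bAnd (f Y) (allP f t)

/-- The new class `X` has constant counts together with the classes in `ps`. -/
def ok (X : Cl) (ps : List Cl) : Bool :=
  bAnd (allP (fun Y => cst X Y X.mem) ps) <| bAnd (cst X X X.mem) <|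
  bAnd (allP (fun Z => bAnd (allP (fun Y => cst X Y Z.mem) ps) (cst X X Z.mem)) ps)
    (allP (fun Y => allP (fun Z => cst Y Z X.mem) ps) ps)

/-- Run `k` on all ways to distribute the atoms of the first list to the class `cur` and to the
remainder `rest`. -/
def enum : List At → List At → ℕ → ℕ → List At → (Cl → List At → Bool) → Bool
  | [], cur, r, e, rest, k => k ⟨cur, r, e⟩ rest
  | j :: t, cur, r, e, rest, k =>
    bAnd (enum t (j :: cur) (Nat.add r j.r) (Nat.add e j.e) rest k) (enum t cur r e (j :: rest) k)

/-- Depth-first search through the partitions that refine the list of blocks. The classes found so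
far are `ps`; a candidate class is dropped unless `keep` and `ok` hold, and `leaf` has to hold
for every complete partition. -/
def go (leaf : List Cl → Bool) (keep : Cl → Bool) : ℕ → List Cl → List (List At) → Bool
  | 0, _, _ => false
  | _ + 1, ps, [] => leaf ps
  | f + 1, ps, [] :: bs => go leaf keep f ps bs
  | f + 1, ps, (i :: t) :: bs =>
    enum t [i] i.r i.e [] fun X rest =>
      bImp (keep X) (bImp (ok X ps) (go leaf keep f (X :: ps) (rest :: bs)))

lemma bAnd_eq {x y : Bool} : bAnd x y = true ↔ x = true ∧ y = true := by
  cases x <;> simp [bAnd]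

lemma bImp_eq {x y : Bool} : bImp x y = true ↔ (x = true → y = true) := by
  cases x <;> simp [bImp]

lemma allP_eq {f : Cl → Bool} {l : List Cl} : allP f l = true ↔ ∀ Y ∈ l, f Y = true := by
  induction l with
  | nil => simp [allP]
  | cons x t ih => simp [allP, bAnd_eq, ih]

lemma allEq_eq {r e v : ℕ} {l : List At} : allEq r e v l = true ↔ ∀ z ∈ l, cnt r e z = v := by
  induction l with
  | nil => simp [allEq]
  | cons x t ih =>
    have h : allEq r e v (x :: t) = bAnd (Nat.beq (cnt r e x) v) (allEq r e v t) := rfl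
    rw [h, bAnd_eq, ih, Nat.beq_eq]
    simp

lemma cst_of {X Y : Cl} {l : List At} (h : ∀ z ∈ l, ∀ z' ∈ l, cnt X.r Y.e z = cnt X.r Y.e z') :
    cst X Y l = true := by
  cases l with
  | nil => rfl
  | cons z t => exact allEq_eq.2 fun z' hz' => h _ (List.mem_cons_of_mem _ hz') _ (by simp)

/-- Codes for the elements of a group: `pre u` lists all codes of `u`, among them `code u`, such
that differences can be computed by adding a code to a code reflected in `K`. -/
structure Codec (U : Type*) [AddCommGroup U] where
  code : U → ℕ
  K : ℕ
  pre : U → List ℕ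
  le : ∀ u, code u ≤ K
  inj : Function.Injective code
  nodup : ∀ u, (pre u).Nodup
  disj : ∀ y y' c, c ∈ pre y → c ∈ pre y' → y = y'
  mem : ∀ u z, K - code u + code z ∈ pre (z - u)

namespace Codec

variable {U : Type*} [AddCommGroup U] (D : Codec U)

/-- The atom of the set `S u`. -/
def atom (S : U → List U) (u : U) : At :=
  ⟨5 * D.code u, ((S u).map fun v => 32 ^ (D.K - D.code v)).sum,
    ((S u).map fun v => ((D.pre v).map fun c => 32 ^ c).sum).sum⟩

variable (S : U → List U)

/-- The class of a list of atoms. -/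
def clOf (l : List U) : Cl :=
  ⟨l.map (D.atom S), (l.map fun u => (D.atom S u).r).sum, (l.map fun u => (D.atom S u).e).sum⟩

/-- The packed set of reflected codes. -/
def mask (l : List U) : ℕ := (l.map fun v => 32 ^ (D.K - D.code v)).sum

open Classical in
lemma cnt_pk (A B : Finset U) (hA : A.card < 31) (z : U) :
    (pk (B.biUnion fun v => (D.pre v).toFinset) >>> (5 * D.code z) &&&
      pk (A.image fun v => D.K - D.code v)) % 31 = (A.filter fun u => z - u ∈ B).card := by
  have hinj : Function.Injective fun v => D.K - D.code v := fun u v h => by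
    have h1 := D.le u
    have h2 := D.le v
    exact D.inj (by simp only at h; omega)
  have h : (A.image fun v => D.K - D.code v).filter
      (fun c => c + D.code z ∈ B.biUnion fun v => (D.pre v).toFinset) =
      (A.filter fun u => z - u ∈ B).image fun v => D.K - D.code v := by
    ext c
    simp only [Finset.mem_filter, Finset.mem_image, Finset.mem_biUnion, List.mem_toFinset]
    constructor
    · rintro ⟨⟨u, hu, rfl⟩, v, hv, hc⟩
      have := D.disj _ _ _ hc (D.mem u z)
      exact ⟨u, ⟨hu, this ▸ hv⟩, rfl⟩
    · rintro ⟨u, ⟨hu, hv⟩, rfl⟩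
      exact ⟨⟨u, hu, rfl⟩, _, hv, D.mem u z⟩
  rw [shift_land_pk, h, pk_mod, Finset.card_image_of_injective _ hinj]
  rw [Finset.card_image_of_injective _ hinj]
  exact lt_of_le_of_lt (Finset.card_filter_le _ _) hA

open Classical in
lemma mask_eq {l : List U} (hl : l.Nodup) :
    D.mask l = pk (l.toFinset.image fun v => D.K - D.code v) := by
  have hinj : Function.Injective fun v => D.K - D.code v := fun u v h => by
    have h1 := D.le u
    have h2 := D.le v
    exact D.inj (by simp only at h; omega)
  rw [pk, Finset.sum_image (fun x _ y _ h => hinj h), List.sum_toFinset _ hl, mask]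

lemma clOf_r_mask (l : List U) : (D.clOf S l).r = D.mask (l.flatMap S) := by
  simp only [clOf, mask, atom]
  induction l with
  | nil => rfl
  | cons x t ih => simp [ih]

open Classical in
lemma clOf_e {l : List U} (hl : (l.flatMap S).Nodup) :
    (D.clOf S l).e = pk ((l.flatMap S).toFinset.biUnion fun v => (D.pre v).toFinset) := by
  rw [pk, Finset.sum_biUnion, List.sum_toFinset _ hl]
  · have : ∀ v, ∑ c ∈ (D.pre v).toFinset, 32 ^ c = ((D.pre v).map fun c => 32 ^ c).sum :=
      fun v => List.sum_toFinset _ (D.nodup v)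
    simp only [this, clOf, atom]
    clear this hl
    induction l with
    | nil => rfl
    | cons x t ih => simp [ih]
  · intro x _ y _ hxy
    rw [Function.onFun, Finset.disjoint_left]
    intro c h1 h2
    rw [List.mem_toFinset] at h1 h2
    exact hxy (D.disj _ _ _ h1 h2)

open Classical in
lemma cnt_clOf {l m : List U} (hl : (l.flatMap S).Nodup) (hm : (m.flatMap S).Nodup)
    (hc : (l.flatMap S).toFinset.card < 31) (z : U) :
    cnt (D.clOf S l).r (D.clOf S m).e (D.atom S z) =
      ((l.flatMap S).toFinset.filter fun u => z - u ∈ m.flatMap S).card := by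
  have := D.cnt_pk (l.flatMap S).toFinset (m.flatMap S).toFinset hc z
  rw [← mask_eq _ hl, ← clOf_r_mask, ← clOf_e _ _ hm] at this
  simp only [List.mem_toFinset] at this
  exact this

end Codec

end SepProof

/-! ### Soundness of the search -/

namespace SepProof

universe u w

/-- The sets `S u`, for `u` in the list `A`, partition the nonzero elements, and the colouring is
constant on each of them. -/
structure Atoms {U : Type u} [AddCommGroup U] {C : Type w} (S : U → List U) (A : List U)
    (col : U → C) : Prop where
  nodup : ∀ u ∈ A, (S u).Nodup
  disj : ∀ u ∈ A, ∀ v ∈ A, ∀ x, x ∈ S u → x ∈ S v → u = v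
  mem : ∀ u ∈ A, u ∈ S u
  cover : ∀ v, v ≠ 0 → ∃ u ∈ A, v ∈ S u
  zero : ∀ u ∈ A, 0 ∉ S u
  col : ∀ u ∈ A, ∀ v ∈ S u, col v = col u

/-- The list consists of the atoms of one colour. -/
structure IsCl {U : Type u} {C : Type w} (A : List U) (col : U → C) (q : List U) : Prop where
  ne : q ≠ []
  sub : ∀ u ∈ q, u ∈ A
  nodup : q.Nodup
  iff : ∀ u ∈ q, ∀ v ∈ A, (v ∈ q ↔ col v = col u)

/-- Search with a prescribed part `cur` of the first class and a prescribed part `rest` of its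
complement. -/
def start (leaf : List Cl → Bool) (keep : Cl → Bool) (f : ℕ) (ps : List Cl) (t cur : List At)
    (r e : ℕ) (rest : List At) (bs : List (List At)) : Bool :=
  enum t cur r e rest fun X rest =>
    bImp (keep X) (bImp (ok X ps) (go leaf keep f (X :: ps) (rest :: bs)))

variable {U : Type u} [AddCommGroup U] {C : Type w} {D : Codec U} {S : U → List U} {A : List U}
  {col : U → C}

namespace Codec

lemma enum_sound (p : U → Bool) (k : Cl → List At → Bool) (t : List U) :
    ∀ (cur rest : List U) (r e : ℕ), r = (D.clOf S cur).r → e = (D.clOf S cur).e →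
    enum (t.map (D.atom S)) (cur.map (D.atom S)) r e (rest.map (D.atom S)) k = true →
    ∃ X rest' : List U, X.Perm (t.filter p ++ cur) ∧ rest'.Perm (t.filter (fun u => !p u) ++ rest) ∧
      k (D.clOf S X) (rest'.map (D.atom S)) = true := by
  induction t with
  | nil =>
    rintro cur rest r e rfl rfl h
    exact ⟨cur, rest, by simp, by simp, h⟩
  | cons j t ih =>
    intro cur rest r e hr he h
    simp only [List.map_cons, enum, bAnd_eq] at h
    by_cases hp : p j = true
    · obtain ⟨X, rest', h1, h2, h3⟩ := ih (j :: cur) rest _ _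
        (show r + _ = _ by subst hr; simp [clOf, add_comm])
        (show e + _ = _ by subst he; simp [clOf, add_comm]) h.1
      refine ⟨X, rest', h1.trans ?_, ?_, h3⟩
      · rw [List.filter_cons_of_pos hp]; exact List.perm_middle
      · rw [List.filter_cons_of_neg (by simpa using hp)]; exact h2
    · obtain ⟨X, rest', h1, h2, h3⟩ := ih cur (j :: rest) _ _ hr he h.2
      refine ⟨X, rest', ?_, h2.trans ?_, h3⟩
      · rw [List.filter_cons_of_neg hp]; exact h1
      · rw [List.filter_cons_of_pos (by simpa using hp)]; exact List.perm_middle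

end Codec

lemma Atoms.nodup_flatMap (hA : Atoms S A col) {q : List U}
    (h1 : ∀ u ∈ q, u ∈ A) (h2 : q.Nodup) :
    (q.flatMap S).Nodup := by
  rw [List.nodup_flatMap]
  refine ⟨fun u hu => hA.nodup u (h1 u hu), ?_⟩
  refine List.Pairwise.imp_of_mem ?_ h2
  intro u v hu hv huv x hx hx'
  exact huv (hA.disj u (h1 u hu) v (h1 v hv) x hx hx')

lemma IsCl.mem_iff (hA : Atoms S A col) (P : Pair col col)
    {q : List U} (h : IsCl A col q) {u : U} (hu : u ∈ q) (v : U) :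
    v ∈ q.flatMap S ↔ col v = col u := by
  rw [List.mem_flatMap]
  constructor
  · rintro ⟨w, hw, hv⟩
    exact (hA.col w (h.sub w hw) v hv).trans ((h.iff u hu w (h.sub w hw)).1 hw)
  · intro hv
    have hu0 : u ≠ 0 := fun e => hA.zero u (h.sub u hu) (e ▸ hA.mem u (h.sub u hu))
    have hv0 : v ≠ 0 := fun e => hu0 (P.eq_zero (by rw [← hv, e]))
    obtain ⟨w, hw, hvw⟩ := hA.cover v hv0
    exact ⟨w, (h.iff u hu w hw).2 ((hA.col w hw v hvw).symm.trans hv), hvw⟩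

lemma IsCl.cnt_eq (hA : Atoms S A col) (P : Pair col col)
    [Finite U] (hc : Nat.card U < 31) {X Y : List U} (hX : IsCl A col X)
    (hY : IsCl A col Y) {x y : U} (hx : x ∈ X) (hy : y ∈ Y) (z : U) :
    cnt (D.clOf S X).r (D.clOf S Y).e (D.atom S z) =
      Nat.card {u // col u = col x ∧ col (z - u) = col y} := by
  classical
  have := Fintype.ofFinite U
  rw [D.cnt_clOf S (hA.nodup_flatMap hX.sub hX.nodup) (hA.nodup_flatMap hY.sub hY.nodup)]
  · rw [Nat.card_eq_fintype_card, Fintype.card_subtype]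
    congr 1
    ext u
    simp only [Finset.mem_filter, List.mem_toFinset, Finset.mem_univ, true_and]
    rw [hX.mem_iff hA P hx, hY.mem_iff hA P hy]
  · refine lt_of_le_of_lt (Finset.card_le_univ _) ?_
    rwa [← Nat.card_eq_fintype_card]

lemma cst_true (hA : Atoms S A col) (P : Pair col col)
    [Finite U] (hc : Nat.card U < 31) {X Y Z : List U} (hX : IsCl A col X)
    (hY : IsCl A col Y) (hZ : IsCl A col Z) :
    cst (D.clOf S X) (D.clOf S Y) (D.clOf S Z).mem = true := by
  obtain ⟨x, hx⟩ := List.exists_mem_of_ne_nil _ hX.ne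
  obtain ⟨y, hy⟩ := List.exists_mem_of_ne_nil _ hY.ne
  apply cst_of
  intro z hz z' hz'
  obtain ⟨z, hz1, rfl⟩ := List.mem_map.1 hz
  obtain ⟨z', hz2, rfl⟩ := List.mem_map.1 hz'
  rw [hX.cnt_eq hA P hc hY hx hy, hX.cnt_eq hA P hc hY hx hy]
  exact P.count ((hZ.iff z' hz2 z (hZ.sub z hz1)).1 hz1)
    (fun c d => c = col x ∧ d = col y)

lemma ok_true (hA : Atoms S A col) (P : Pair col col)
    [Finite U] (hc : Nat.card U < 31) {X : List U} {ps : List (List U)}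
    (hX : IsCl A col X) (hps : ∀ q ∈ ps, IsCl A col q) :
    ok (D.clOf S X) (ps.map (D.clOf S)) = true := by
  have key := @cst_true U _ C D S A col hA P _ hc
  simp only [ok, bAnd_eq, allP_eq, List.forall_mem_map]
  exact ⟨fun Y hY => key hX (hps Y hY) hX, key hX hX hX,
    fun Z hZ => ⟨fun Y hY => key hX (hps Y hY) (hps Z hZ), key hX hX (hps Z hZ)⟩,
    fun Y hY Z hZ => key (hps Y hY) (hps Z hZ) hX⟩

/-- The search step with prescribed parts. -/
lemma step_sound (hA : Atoms S A col) (P : Pair col col)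
    [Finite U] (hc : Nat.card U < 31) {keep : Cl → Bool}
    {k : Cl → List At → Bool} {ps : List (List U)} {t cur rest : List U} {c : C} {r e : ℕ}
    (hr : r = (D.clOf S cur).r) (he : e = (D.clOf S cur).e)
    (hps : ∀ q ∈ ps, IsCl A col q)
    (hne : cur ≠ []) (hcur : ∀ u ∈ cur, col u = c) (hrest : ∀ u ∈ rest, col u ≠ c)
    (hnd : (t ++ cur ++ rest).Nodup) (hsub : ∀ u ∈ t ++ cur ++ rest, u ∈ A)
    (hcl : ∀ u ∈ t ++ cur ++ rest, ∀ v ∈ A, col v = col u → v ∈ t ++ cur ++ rest)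
    (hk : ∀ q, IsCl A col q → keep (D.clOf S q) = true)
    (h : enum (t.map (D.atom S)) (cur.map (D.atom S)) r e (rest.map (D.atom S))
      (fun X rest => bImp (keep X) (bImp (ok X (ps.map (D.clOf S))) (k X rest))) = true) :
    ∃ X rest' : List U, IsCl A col X ∧ rest'.Nodup ∧ (∀ u ∈ rest', u ∈ A) ∧
      (∀ u ∈ rest', ∀ v ∈ A, col v = col u → v ∈ rest') ∧
      (∀ u ∈ t ++ cur ++ rest, u ∈ X ∨ u ∈ rest') ∧
      k (D.clOf S X) (rest'.map (D.atom S)) = true := by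
  classical
  obtain ⟨X, rest', h1, h2, h3⟩ := D.enum_sound (fun u => decide (col u = c)) _ t _ _ _ _ hr he h
  obtain ⟨u0, hu0⟩ := List.exists_mem_of_ne_nil _ hne
  have mX : ∀ u, u ∈ X ↔ u ∈ t ++ cur ++ rest ∧ col u = c := fun u => by
    rw [h1.mem_iff]
    simp only [List.mem_append, List.mem_filter, decide_eq_true_eq]
    have := hcur u
    have := hrest u
    tauto
  have mR : ∀ u, u ∈ rest' ↔ u ∈ t ++ cur ++ rest ∧ col u ≠ c := fun u => by
    rw [h2.mem_iff]
    simp only [List.mem_append, List.mem_filter, Bool.not_eq_true', decide_eq_false_iff_not]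
    have := hcur u
    have := hrest u
    tauto
  have hn := List.nodup_append.1 hnd
  have hn' := List.nodup_append.1 hn.1
  have hX : IsCl A col X := by
    refine ⟨List.ne_nil_of_mem ((mX u0).2 ⟨by simp [hu0], hcur u0 hu0⟩),
      fun u hu => hsub u ((mX u).1 hu).1, h1.nodup_iff.2 ?_, fun u hu v hv => ?_⟩
    · refine List.nodup_append.2 ⟨hn'.1.filter _, hn'.2.1, fun x hx y hy => ?_⟩
      exact hn'.2.2 x (List.mem_filter.1 hx).1 y hy
    · rw [mX, ((mX u).1 hu).2]
      exact ⟨fun h => h.2, fun h => ⟨hcl u ((mX u).1 hu).1 v hv (h.trans ((mX u).1 hu).2.symm), h⟩⟩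
  refine ⟨X, rest', hX, h2.nodup_iff.2 ?_, fun u hu => hsub u ((mR u).1 hu).1,
    fun u hu v hv e => ?_, fun u hu => ?_, ?_⟩
  · refine List.nodup_append.2 ⟨hn'.1.filter _, hn.2.1, fun x hx y hy => ?_⟩
    exact hn.2.2 x (List.mem_append_left _ (List.mem_filter.1 hx).1) y hy
  · exact (mR v).2 ⟨hcl u ((mR u).1 hu).1 v hv e, e ▸ ((mR u).1 hu).2⟩
  · rw [mX, mR]; tauto
  · rw [bImp_eq, bImp_eq] at h3
    exact h3 (hk X hX) (ok_true hA P hc hX hps)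

lemma go_sound (hA : Atoms S A col) (P : Pair col col)
    [Finite U] (hc : Nat.card U < 31) {leaf : List Cl → Bool} {keep : Cl → Bool}
    (hk : ∀ q, IsCl A col q → keep (D.clOf S q) = true) (f : ℕ) :
    ∀ (ps bs : List (List U)), (∀ q ∈ ps, IsCl A col q) →
    (∀ l ∈ bs, l.Nodup ∧ (∀ u ∈ l, u ∈ A) ∧ ∀ u ∈ l, ∀ v ∈ A, col v = col u → v ∈ l) →
    (∀ u ∈ A, (∃ q ∈ ps, u ∈ q) ∨ ∃ l ∈ bs, u ∈ l) →
    go leaf keep f (ps.map (D.clOf S)) (bs.map (List.map (D.atom S))) = true →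
    ∃ qs : List (List U), (∀ q ∈ qs, IsCl A col q) ∧ (∀ u ∈ A, ∃ q ∈ qs, u ∈ q) ∧
      leaf (qs.map (D.clOf S)) = true := by
  induction f with
  | zero => intro ps bs _ _ _ h; simp [go] at h
  | succ f ih =>
    intro ps bs hps hbs hcov h
    match bs, hbs, hcov, h with
    | [], _, hcov, h => exact ⟨ps, hps, fun u hu => by simpa using hcov u hu, h⟩
    | [] :: bs, hbs, hcov, h =>
      refine ih ps bs hps (fun l hl => hbs l (List.mem_cons_of_mem _ hl)) (fun u hu => ?_) h
      simpa using hcov u hu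
    | (i :: t) :: bs, hbs, hcov, h =>
      obtain ⟨b1, b2, b3⟩ := hbs (i :: t) (by simp)
      have e : ∀ u, u ∈ t ++ [i] ++ [] ↔ u ∈ i :: t := fun u => by simp [or_comm]
      obtain ⟨X, rest', h1, h2, h3, h4, h5, h6⟩ := step_sound hA P hc (D := D) (keep := keep)
        (k := fun X rest => go leaf keep f (X :: ps.map (D.clOf S))
          (rest :: bs.map (List.map (D.atom S)))) (ps := ps) (t := t) (cur := [i]) (rest := [])
        (c := col i) (r := (D.atom S i).r) (e := (D.atom S i).e)
        (by simp [Codec.clOf]) (by simp [Codec.clOf]) hps (by simp)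
        (by simp) (by simp)
        (by
          simp only [List.append_nil]
          exact (List.perm_append_comm (l₁ := t) (l₂ := [i])).nodup_iff.2 (by simpa using b1))
        (fun u hu => b2 u ((e u).1 hu)) (fun u hu v hv huv => (e v).2 (b3 u ((e u).1 hu) v hv huv))
        hk h
      refine ih (X :: ps) (rest' :: bs) ?_ ?_ ?_ h6
      · simpa using ⟨h1, hps⟩
      · intro l hl
        rcases List.mem_cons.1 hl with rfl | hl
        · exact ⟨h2, h3, h4⟩
        · exact hbs l (List.mem_cons_of_mem _ hl)
      · intro u hu
        rcases hcov u hu with ⟨q, hq, huq⟩ | ⟨l, hl, hul⟩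
        · exact .inl ⟨q, List.mem_cons_of_mem _ hq, huq⟩
        · rcases List.mem_cons.1 hl with rfl | hl
          · rcases h5 u ((e u).2 hul) with h | h
            · exact .inl ⟨X, by simp, h⟩
            · exact .inr ⟨rest', by simp, h⟩
          · exact .inr ⟨l, List.mem_cons_of_mem _ hl, hul⟩

lemma start_sound (hA : Atoms S A col) (P : Pair col col)
    [Finite U] (hc : Nat.card U < 31) {leaf : List Cl → Bool} {keep : Cl → Bool}
    (hk : ∀ q, IsCl A col q → keep (D.clOf S q) = true) (f : ℕ)
    {ps bs : List (List U)} {t cur rest : List U} {c : C} {r e : ℕ}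
    (hr : r = (D.clOf S cur).r) (he : e = (D.clOf S cur).e)
    (hps : ∀ q ∈ ps, IsCl A col q)
    (hbs : ∀ l ∈ bs, l.Nodup ∧ (∀ u ∈ l, u ∈ A) ∧ ∀ u ∈ l, ∀ v ∈ A, col v = col u → v ∈ l)
    (hcov : ∀ u ∈ A, (∃ q ∈ ps, u ∈ q) ∨ u ∈ t ++ cur ++ rest ∨ ∃ l ∈ bs, u ∈ l)
    (hne : cur ≠ []) (hcur : ∀ u ∈ cur, col u = c) (hrest : ∀ u ∈ rest, col u ≠ c)
    (hnd : (t ++ cur ++ rest).Nodup) (hsub : ∀ u ∈ t ++ cur ++ rest, u ∈ A)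
    (hcl : ∀ u ∈ t ++ cur ++ rest, ∀ v ∈ A, col v = col u → v ∈ t ++ cur ++ rest)
    (h : start leaf keep f (ps.map (D.clOf S)) (t.map (D.atom S)) (cur.map (D.atom S)) r e
      (rest.map (D.atom S)) (bs.map (List.map (D.atom S))) = true) :
    ∃ qs : List (List U), (∀ q ∈ qs, IsCl A col q) ∧ (∀ u ∈ A, ∃ q ∈ qs, u ∈ q) ∧
      leaf (qs.map (D.clOf S)) = true := by
  obtain ⟨X, rest', h1, h2, h3, h4, h5, h6⟩ :=
    step_sound hA P hc hr he hps hne hcur hrest hnd hsub hcl hk h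
  refine go_sound hA P hc hk f (X :: ps) (rest' :: bs) ?_ ?_ ?_ h6
  · simpa using ⟨h1, hps⟩
  · intro l hl
    rcases List.mem_cons.1 hl with rfl | hl
    · exact ⟨h2, h3, h4⟩
    · exact hbs l hl
  · intro u hu
    rcases hcov u hu with ⟨q, hq, huq⟩ | h | ⟨l, hl, hul⟩
    · exact .inl ⟨q, List.mem_cons_of_mem _ hq, huq⟩
    · rcases h5 u h with h | h
      · exact .inl ⟨X, by simp, h⟩
      · exact .inr ⟨rest', by simp, h⟩
    · exact .inr ⟨l, List.mem_cons_of_mem _ hl, hul⟩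

end SepProof

/-! ### Closed subgroups, restrictions and quotients -/

namespace SepProof

universe u v w x

/-- Every algebraic isomorphism from an S-ring over `U` to one over a finite abelian group is
induced, in the language of colourings. -/
def Sep (U : Type u) [AddCommGroup U] : Prop :=
  ∀ (V : Type v) [AddCommGroup V] [Finite V] (C : Type w) (a : U → C) (b : V → C),
    Pair a b → Ind a b

/-- A subgroup that is a union of colour classes. -/
def Closed {C : Type w} {U : Type u} [AddCommGroup U] (a : U → C) (L : AddSubgroup U) : Prop :=
  ∀ x y, a x = a y → x ∈ L → y ∈ L

/-- The colouring of a quotient: an element gets the set of colours on its fibre. -/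
def qc {C : Type w} {U : Type u} {Q : Type x} (a : U → C) (π : U → Q) (q : Q) : Set C :=
  {c | ∃ x, π x = q ∧ a x = c}

section
variable {C : Type w} {U : Type u} {V : Type v} [AddCommGroup U] [AddCommGroup V]
  {a : U → C} {b : V → C}

/-- A map preserving the colours of differences is an isomorphism. -/
lemma Pair.ind_of_fun [Finite V] (P : Pair a b) (F : U → V)
    (h : ∀ x y, b (F y - F x) = a (y - x)) : Ind a b := by
  obtain ⟨e0, -⟩ := P.base
  have : Finite U := Finite.of_equiv V e0.symm
  have hi : Function.Injective F := fun x y hxy => by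
    have h1 := h x y
    rw [hxy, sub_self] at h1
    exact (sub_eq_zero.1 ((P.zero_iff h1.symm).2 rfl)).symm
  exact ⟨Equiv.ofBijective F (hi.bijective_of_nat_card_le P.card_eq.symm.le), h⟩

/-- The subgroup of `V` that corresponds to a closed subgroup of `U`. -/
def Pair.img (P : Pair a b) (L : AddSubgroup U) (hL : Closed a L) : AddSubgroup V where
  carrier := {h | ∃ x ∈ L, a x = b h}
  zero_mem' := ⟨0, L.zero_mem, P.zero⟩
  add_mem' := by
    rintro h1 h2 ⟨x1, hx1, e1⟩ ⟨x2, hx2, e2⟩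
    obtain ⟨y, hy⟩ := P.symm.surj (h1 + h2)
    obtain ⟨k, l, hkl, hk, hl⟩ := P.symm.exadd hy.symm
    exact ⟨y, hkl ▸ L.add_mem (hL x1 k (e1.trans hk.symm) hx1) (hL x2 l (e2.trans hl.symm) hx2),
      hy⟩
  neg_mem' := by
    rintro h ⟨x, hx, e⟩
    exact ⟨-x, L.neg_mem hx, P.neg e⟩

lemma Pair.mem_img (P : Pair a b) {L : AddSubgroup U} (hL : Closed a L) {x : U} {h : V}
    (e : a x = b h) : h ∈ P.img L hL ↔ x ∈ L :=
  ⟨fun ⟨y, hy, e'⟩ => hL y x (e'.trans e.symm) hy, fun hx => ⟨x, hx, e⟩⟩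

lemma Pair.card_img (P : Pair a b) {L : AddSubgroup U} (hL : Closed a L) :
    Nat.card L = Nat.card (P.img L hL) := by
  obtain ⟨e, he⟩ := P.base
  exact Nat.card_congr (e.subtypeEquiv fun u => (P.mem_img hL (he u).symm).symm)

lemma Pair.restrict {M : Type*} [AddCommGroup M] (P : Pair a b) (ι : M →+ U)
    (hι : Function.Injective ι) (hM : Closed a ι.range) :
    Pair (fun m => a (ι m)) (fun h : P.img ι.range hM => b h) where
  zero := by simpa using P.zero
  zero_iff {x h} e := by
    rw [← map_eq_zero_iff ι hι, P.zero_iff e]; simp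
  neg {x h} e := by simpa using P.neg e
  tri {x h} e := by
    obtain ⟨E, hE⟩ := P.tri e
    refine ⟨(AddMonoidHom.ofInjective hι).toEquiv.trans
      (E.subtypeEquiv fun u => (P.mem_img hM (hE u).1.symm).symm), fun m => ?_⟩
    have := hE (ι m)
    rw [← map_sub] at this
    exact this

section
variable {Q : Type*} {Q' : Type*} [AddCommGroup Q] [AddCommGroup Q'] {π : U →+ Q} {π' : V →+ Q'}

lemma qc_sub (P : Pair a b) (hk : ∀ x h, a x = b h → (π x = 0 ↔ π' h = 0)) {x : U} {h : V}
    (e : a x = b h) : qc a π (π x) ⊆ qc b π' (π' h) := by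
  rintro c ⟨x', hx', rfl⟩
  obtain ⟨k, l, hkl, h1, h2⟩ := P.exadd (u := x') (w := x - x') (h := h) (by simpa using e)
  refine ⟨k, ?_, h1⟩
  have : π' l = 0 := (hk _ _ h2.symm).1 (by simp [hx'])
  rw [← hkl, map_add, this, add_zero]

lemma qc_eq (P : Pair a b) (hk : ∀ x h, a x = b h → (π x = 0 ↔ π' h = 0)) {x : U} {h : V}
    (e : a x = b h) : qc a π (π x) = qc b π' (π' h) :=
  (qc_sub P hk e).antisymm (qc_sub P.symm (fun h x e => (hk x h e.symm).symm) e.symm)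

lemma card_fiber (hπ : Function.Surjective π) (p : Q → Prop) :
    Nat.card {x // p (π x)} = Nat.card {q // p q} * Nat.card {x // π x = 0} := by
  choose s hs using hπ
  rw [← Nat.card_prod]
  refine Nat.card_congr ⟨fun x => (⟨π x.1, x.2⟩, ⟨x.1 - s (π x.1), by simp [hs]⟩),
    fun z => ⟨s z.1.1 + z.2.1, by rw [map_add, hs, z.2.2, add_zero]; exact z.1.2⟩,
    fun x => by simp, fun z => ?_⟩
  obtain ⟨⟨q, hq⟩, ⟨l, hl⟩⟩ := z
  simp [hs, hl]

lemma Pair.quot [Finite U] [Finite V] (P : Pair a b) (hπ : Function.Surjective π)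
    (hπ' : Function.Surjective π') (hk : ∀ x h, a x = b h → (π x = 0 ↔ π' h = 0)) :
    Pair (qc a π) (qc b π') := by
  have lift : ∀ {q η}, qc a π q = qc b π' η → ∃ x h, π x = q ∧ π' h = η ∧ a x = b h := by
    intro q η e
    obtain ⟨x, rfl⟩ := hπ q
    have : a x ∈ qc a π (π x) := ⟨x, rfl, rfl⟩
    rw [e] at this
    obtain ⟨h, h1, h2⟩ := this
    exact ⟨x, h, rfl, h1, h2.symm⟩
  refine ⟨?_, ?_, ?_, ?_⟩
  · simpa using qc_eq P hk P.zero
  · intro q η e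
    obtain ⟨x, h, rfl, rfl, e'⟩ := lift e
    exact hk x h e'
  · intro q η e
    obtain ⟨x, h, rfl, rfl, e'⟩ := lift e
    simpa using qc_eq P hk (P.neg e')
  · intro q η e
    obtain ⟨x, h, rfl, rfl, e'⟩ := lift e
    have : Finite Q := Finite.of_surjective π hπ
    have : Finite Q' := Finite.of_surjective π' hπ'
    obtain ⟨E, hE⟩ := P.tri e'
    obtain ⟨E0, hE0⟩ := P.base
    have hker : Nat.card {x // π x = 0} = Nat.card {x // π' x = 0} :=
      Nat.card_congr (E0.subtypeEquiv fun u => hk _ _ (hE0 u).symm)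
    have hpos : 0 < Nat.card {x // π x = 0} := by
      have : Nonempty {x // π x = 0} := ⟨⟨0, map_zero π⟩⟩
      exact Nat.card_pos
    obtain ⟨f, hf⟩ := exists_equiv_of_fibers (fun q => (qc a π q, qc a π (π x - q)))
      (fun q => (qc b π' q, qc b π' (π' h - q))) (fun k => by
        have h1 := card_fiber hπ fun q => (qc a π q, qc a π (π x - q)) = k
        have h2 := card_fiber hπ' fun q => (qc b π' q, qc b π' (π' h - q)) = k
        have h3 : Nat.card {u // (qc a π (π u), qc a π (π x - π u)) = k} =
            Nat.card {u // (qc b π' (π' u), qc b π' (π' h - π' u)) = k} :=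
          Nat.card_congr (E.subtypeEquiv fun u => by
            rw [← map_sub, ← map_sub, qc_eq P hk (hE u).1.symm, qc_eq P hk (hE u).2.symm])
        rw [h1, h2, ← hker] at h3
        exact Nat.eq_of_mul_eq_mul_right hpos h3)
    exact ⟨f, fun q => by simpa [Prod.ext_iff] using hf q⟩

end

/-! ### Tensor products and wreath products -/

lemma zsmul_congr {p : ℕ} {z : U} (hz : p • z = 0) {i k : ℤ} (h : (p : ℤ) ∣ i - k) :
    i • z = k • z := by
  obtain ⟨m, hm⟩ := h
  rw [← sub_eq_zero, ← sub_smul, hm, mul_comm, mul_zsmul, natCast_zsmul, hz, smul_zero]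

/-- The decomposition of a multiple of an element of order two or three. -/
lemma zsmul_cases {p : ℕ} (hp : p = 2 ∨ p = 3) {z : U} {z' : V} (hz : p • z = 0)
    (hz' : p • z' = 0) (i : ℤ) :
    (i • z = 0 ∧ i • z' = 0) ∨ (i • z = z ∧ i • z' = z') ∨ (i • z = -z ∧ i • z' = -z') := by
  have h : (p : ℤ) ∣ i - 0 ∨ (p : ℤ) ∣ i - 1 ∨ (p : ℤ) ∣ i - (-1) := by
    rcases hp with rfl | rfl <;> push_cast <;> omega
  rcases h with h | h | h
  · exact .inl ⟨by simpa using zsmul_congr hz h, by simpa using zsmul_congr hz' h⟩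
  · exact .inr (.inl ⟨by simpa using zsmul_congr hz h, by simpa using zsmul_congr hz' h⟩)
  · exact .inr (.inr ⟨by simpa using zsmul_congr hz h, by simpa using zsmul_congr hz' h⟩)

/-- An element corresponding to a generator of a closed subgroup of order two or three. -/
lemma Pair.gen (P : Pair a b) [Finite V] {p : ℕ} (hp : p = 2 ∨ p = 3) {z : U} (hz0 : z ≠ 0)
    (hz : p • z = 0) (hL : Closed a (AddSubgroup.zmultiples z)) {z' : V} (hz' : a z = b z') :
    p • z' = 0 ∧ (∀ (h : V) (i : ℤ), a (i • z) = b h → ∃ j : ℤ, h = j • z') := by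
  have : Fact p.Prime := ⟨by rcases hp with rfl | rfl <;> norm_num⟩
  have hc : Nat.card (AddSubgroup.zmultiples z) = p := by
    rw [Nat.card_zmultiples]; exact addOrderOf_eq_prime hz hz0
  rw [P.card_img hL] at hc
  have hm : z' ∈ P.img _ hL := (P.mem_img hL hz').2 (AddSubgroup.mem_zmultiples z)
  have hz'0 : z' ≠ 0 := fun h => hz0 ((P.zero_iff hz').2 h)
  have h1 : p • z' = 0 := by
    have := card_nsmul_eq_zero' (G := P.img _ hL) (x := ⟨z', hm⟩)
    rw [hc] at this
    simpa using congrArg Subtype.val this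
  refine ⟨h1, fun h i e => ?_⟩
  have h2 : AddSubgroup.zmultiples z' = P.img _ hL := by
    apply AddSubgroup.eq_of_le_of_card_ge
    · rw [AddSubgroup.zmultiples_le]; exact hm
    · rw [hc, Nat.card_zmultiples, addOrderOf_eq_prime h1 hz'0]
  have h3 : h ∈ AddSubgroup.zmultiples z' := by
    rw [h2]; exact (P.mem_img hL e).2 (AddSubgroup.zsmul_mem_zmultiples z i)
  obtain ⟨j, hj⟩ := AddSubgroup.mem_zmultiples_iff.1 h3
  exact ⟨j, hj.symm⟩

end

end SepProof

namespace SepProof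

universe u v w x y

variable {C : Type w} {U : Type u} {V : Type v} [AddCommGroup U] [AddCommGroup V]
  {a : U → C} {b : V → C}

/-- Let `⟨z⟩` be closed of order two or three and let `M` be closed with `⟨z⟩ ∩ M = 0`. If `M` is
separable, then `M` can be mapped to `V` so that the colours on `⟨z⟩ + M` are preserved when `z`
is mapped to `z'`. If `z` is alone in its class, any isomorphism on `M` will do; otherwise one
uses an isomorphism of the colouring `m ↦ a (z + m)` of `M`. -/
lemma Pair.core {M : Type x} [AddCommGroup M] (hS : Sep.{x, v, w} M) [Finite V] (P : Pair a b)
    (ι : M →+ U) (hι : Function.Injective ι) (hM : Closed a ι.range) {p : ℕ} (hp : p = 2 ∨ p = 3)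
    {z : U} (hz0 : z ≠ 0) (hz : p • z = 0) (hL : Closed a (AddSubgroup.zmultiples z))
    (hLM : ∀ (i : ℤ) m, i • z = ι m → m = 0) {z' : V} (hzz : a z = b z') :
    ∃ f : M → V, ∀ (i : ℤ) m n, b (i • z' + (f n - f m)) = a (i • z + ι (n - m)) := by
  obtain ⟨hz', hL'⟩ := P.gen hp hz0 hz hL hzz
  have hz'0 : z' ≠ 0 := fun h => hz0 ((P.zero_iff hzz).2 h)
  have hzm : ∀ m, z ≠ ι m := fun m h => by
    have := hLM 1 m (by simpa using h)
    rw [this, map_zero] at h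
    exact hz0 h
  -- an element with the colour of `z` or of `-z`
  have hpm : ∀ {h}, b h = a z ∨ b h = a (-z) → h = z' ∨ h = -z' := by
    intro h hh
    have hh0 : h ≠ 0 := by
      rintro rfl
      rcases hh with hh | hh
      · exact hz0 (P.eq_zero (hh.symm.trans P.zero.symm))
      · exact hz0 (neg_eq_zero.1 (P.eq_zero (hh.symm.trans P.zero.symm)))
    obtain ⟨j, rfl⟩ : ∃ j : ℤ, h = j • z' := by
      rcases hh with hh | hh
      · exact hL' h 1 (by simpa using hh.symm)
      · exact hL' h (-1) (by simpa using hh.symm)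
    rcases zsmul_cases hp hz' hz' j with h | h | h
    · exact absurd h.1 hh0
    · exact .inl h.1
    · exact .inr h.1
  by_cases hthin : a z = a (-z) → z = -z
  · -- thin case
    have uniq : ∀ {h}, b h = a (-z) → h = -z' := by
      intro h hh
      rcases hpm (.inr hh) with rfl | h1
      · have h2 := hthin (hzz.trans hh)
        have h3 : z + z = 0 := by nth_rewrite 2 [h2]; simp
        have h4 : p = 2 := by
          rcases hp with rfl | rfl
          · rfl
          · exfalso; apply hz0
            have : (3 : ℕ) • z = z + z + z := by abel
            rw [this, h3, zero_add] at hz; exact hz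
        subst h4
        rw [two_nsmul] at hz'
        exact eq_neg_of_add_eq_zero_left hz'
      · exact h1
    have plus : ∀ {u h}, a u = b h → a (z + u) = b (z' + h) := by
      intro u h e
      obtain ⟨k, l, hkl, h1, h2⟩ := P.exadd (u := z + u) (w := -z) (h := h) (by simpa using e)
      rw [uniq h2] at hkl
      rw [← h1, ← hkl]; congr 1; abel
    have minus : ∀ {u h}, a u = b h → a (-z + u) = b (-z' + h) := by
      intro u h e
      have := P.neg (plus (P.neg e))
      simpa [add_comm] using this
    obtain ⟨f, hf⟩ := hS _ _ _ _ (P.restrict ι hι hM)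
    refine ⟨fun m => (f m : V), fun i m n => ?_⟩
    have h0 : a (ι (n - m)) = b ((f n : V) - f m) := (hf m n).symm
    rcases zsmul_cases hp hz hz' i with ⟨h1, h2⟩ | ⟨h1, h2⟩ | ⟨h1, h2⟩ <;> rw [h1, h2]
    · simpa using h0.symm
    · exact (plus h0).symm
    · exact (minus h0).symm
  · -- the class of `z` is `{z, -z}`
    push Not at hthin
    obtain ⟨hzn, hne⟩ := hthin
    have hp3 : p = 3 := by
      rcases hp with rfl | rfl
      · rw [two_nsmul] at hz
        exact absurd (eq_neg_of_add_eq_zero_left hz) hne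
      · rfl
    subst hp3
    have e3 : -z - z = z := by
      have : (3 : ℕ) • z = z + z + z := by abel
      rw [this] at hz
      rw [← sub_eq_zero, ← neg_eq_zero, ← hz]; abel
    have e3' : -z' - z' = z' := by
      have : (3 : ℕ) • z' = z' + z' + z' := by abel
      rw [this] at hz'
      rw [← sub_eq_zero, ← neg_eq_zero, ← hz']; abel
    set M' := P.img ι.range hM with hM'
    have memM : ∀ {x h}, a x = b h → (h ∈ M' ↔ ∃ m, ι m = x) := fun e => P.mem_img hM e
    have hzM' : z' ∉ M' := fun h => by
      obtain ⟨m, hm⟩ := (memM hzz).1 h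
      exact hzm m hm.symm
    -- splitting an element with the colour of `z + ι m`
    have split : ∀ {m h}, a (z + ι m) = b h → ∃ l ∈ M', b l = a (ι m) ∧ (h = z' + l ∨ h = -z' + l) := by
      intro m h e
      obtain ⟨k, l, hkl, h1, h2⟩ := P.exadd e
      refine ⟨l, (memM h2.symm).2 ⟨m, rfl⟩, h2, ?_⟩
      rcases hpm (.inl h1) with rfl | rfl
      · exact .inl hkl.symm
      · exact .inr hkl.symm
    have C0 : ∀ {m} {h : V}, h ∈ M' → a (z + ι m) = b (z' + h) → a (ι m) = b h := by
      intro m h hh e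
      obtain ⟨l, hl, h1, h2 | h2⟩ := split e
      · rw [add_left_cancel h2]; exact h1.symm
      · exfalso; apply hzM'
        have : z' = h - l := by
          have h3 : h - l = -z' - z' := by
            rw [sub_eq_iff_eq_add]
            have := congrArg (fun t => t - z') h2
            simp only [add_sub_cancel_left] at this
            rw [this]; abel
          rw [h3, e3']
        rw [this]; exact M'.sub_mem hh hl
    have Cm : ∀ {m} {h : V}, h ∈ M' → a (z + ι m) = b (z' + h) →
        a (-z + ι m) = b (-z' + h) := by
      intro m h hh e
      obtain ⟨k, l, hkl, h1, h2⟩ := P.exadd (u := -z + ι m) (w := -z) (h := z' + h) (by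
        rw [← e]; congr 1; nth_rewrite 3 [← e3]; abel)
      rcases hpm (.inr h2) with rfl | rfl
      · have hk : k = h := by rw [add_comm] at hkl; exact add_left_cancel hkl
        subst hk
        obtain ⟨n, hn⟩ := (memM h1.symm).1 hh
        exfalso
        apply hzm (m - n)
        rw [map_sub, hn]; abel
      · rw [← h1]; congr 1
        rw [← sub_eq_iff_eq_add.2 hkl.symm] 
        nth_rewrite 1 [← e3']; abel
    have PP : Pair (fun m => a (z + ι m)) (fun h : M' => b (z' + h)) := by
      refine ⟨by simpa using hzz, ?_, ?_, ?_⟩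
      · intro m h e
        have := P.zero_iff (C0 h.2 e)
        rw [map_eq_zero_iff ι hι] at this
        simpa using this
      · intro m h e
        have := P.neg (Cm h.2 e)
        simpa [add_comm] using this
      · intro m h e
        obtain ⟨E, hE⟩ := P.tri (Cm h.2 e)
        have key : ∀ n, E (z + ι n) - z' ∈ M' := fun n => by
          obtain ⟨h1, h2⟩ := hE (z + ι n)
          obtain ⟨l, hl, h3, h4 | h4⟩ := split h1.symm
          · rw [h4]; simpa using hl
          · exfalso
            rw [h4] at h2
            have h5 : -z' + (h : V) - (-z' + l) ∈ M' := by
              have : -z' + (h : V) - (-z' + l) = h - l := by abel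
              rw [this]; exact M'.sub_mem h.2 hl
            obtain ⟨n', hn'⟩ := (memM h2.symm).1 h5
            apply hzm (n' - (m - n))
            rw [map_sub, hn', map_sub]
            nth_rewrite 1 [← e3]; abel
        have hinj : Function.Injective fun n => (⟨E (z + ι n) - z', key n⟩ : M') := by
          intro n n' hn
          have := congrArg Subtype.val hn
          simpa using hι (by simpa using this)
        have hc : Nat.card M' ≤ Nat.card M := by
          rw [hM', ← P.card_img hM]
          exact (Nat.card_congr (AddMonoidHom.ofInjective hι).toEquiv).symm.le
        have : Finite M := Finite.of_injective _ hinj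
        refine ⟨Equiv.ofBijective _ (hinj.bijective_of_nat_card_le hc), fun n => ?_⟩
        obtain ⟨h1, h2⟩ := hE (z + ι n)
        constructor
        · simpa using h1
        · simp only [Equiv.ofBijective_apply, AddSubgroup.coe_sub]
          rw [map_sub]
          convert h2 using 2
          · nth_rewrite 1 [← e3']; abel
          · nth_rewrite 1 [← e3]; abel
    obtain ⟨f, hf⟩ := hS _ _ _ _ PP
    refine ⟨fun m => (f m : V), fun i m n => ?_⟩
    have h0 : a (z + ι (n - m)) = b (z' + ((f n - f m : M') : V)) := (hf m n).symm
    rcases zsmul_cases (Or.inr rfl) hz hz' i with ⟨h1, h2⟩ | ⟨h1, h2⟩ | ⟨h1, h2⟩ <;> rw [h1, h2]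
    · simpa using (C0 (f n - f m).2 h0).symm
    · exact h0.symm
    · exact (Cm (f n - f m).2 h0).symm

/-- Tensor products `⟨z⟩ ⊗ M`. -/
lemma Pair.ind_tensor {M : Type x} [AddCommGroup M] (hS : Sep.{x, v, w} M) [Finite V]
    (P : Pair a b) (ι : M →+ U) (hι : Function.Injective ι) (hM : Closed a ι.range) {p : ℕ}
    (hp : p = 2 ∨ p = 3) {z : U} (hz0 : z ≠ 0) (hz : p • z = 0)
    (hL : Closed a (AddSubgroup.zmultiples z)) (hLM : ∀ (i : ℤ) m, i • z = ι m → m = 0)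
    (htop : ∀ x, ∃ (i : ℤ) (m : M), x = i • z + ι m) : Ind a b := by
  obtain ⟨z', hzz⟩ := P.surj z
  obtain ⟨f, hf⟩ := P.core hS ι hι hM hp hz0 hz hL hLM hzz.symm
  choose i m him using htop
  refine P.ind_of_fun (fun x => i x • z' + f (m x)) fun x y => ?_
  have := hf (i y - i x) (m x) (m y)
  rw [sub_zsmul, sub_zsmul] at this
  convert this using 2
  · abel
  · conv_lhs => rw [him y, him x]
    rw [map_sub]; abel

/-- Wreath products of a quotient with the kernel. -/
lemma Pair.ind_wreath {M : Type x} {Q : Type y} [AddCommGroup M] [AddCommGroup Q]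
    (hS : Sep.{x, v, w} M) (hQ : Sep.{y, v, w} Q) [Finite V] (P : Pair a b) (ι : M →+ U)
    (hι : Function.Injective ι) (π : U →+ Q) (hπ : Function.Surjective π)
    (hker : ∀ x, π x = 0 ↔ ∃ m, ι m = x) (hM : Closed a ι.range)
    (hinv : ∀ x m, π x ≠ 0 → a (x + ι m) = a x) : Ind a b := by
  obtain ⟨e0, -⟩ := P.base
  have : Finite U := Finite.of_equiv V e0.symm
  set L' := P.img ι.range hM with hL'
  have hk : ∀ x h, a x = b h → (π x = 0 ↔ QuotientAddGroup.mk' L' h = 0) := fun x h e => by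
    rw [hker, QuotientAddGroup.mk'_apply, QuotientAddGroup.eq_zero_iff, P.mem_img hM e]; rfl
  obtain ⟨φ, hφ0, hφ⟩ := (hQ _ _ _ _ (P.quot hπ (QuotientAddGroup.mk'_surjective L') hk)).fix_zero
  obtain ⟨g, hg⟩ := hS _ _ _ _ (P.restrict ι hι hM)
  choose s hs using hπ
  choose s' hs' using QuotientAddGroup.mk'_surjective L'
  have hn : ∀ x, ∃ m, ι m = x - s (π x) := fun x => (hker _).1 (by simp [hs])
  choose n hn using hn
  have hF : ∀ x, QuotientAddGroup.mk' L' (s' (φ (π x)) + g (n x)) = φ (π x) := fun x => by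
    rw [map_add, hs', QuotientAddGroup.mk'_apply _ (g (n x) : V),
      (QuotientAddGroup.eq_zero_iff _).2 (g (n x)).2, add_zero]
  refine P.ind_of_fun (fun x => s' (φ (π x)) + g (n x)) fun x y => ?_
  by_cases hxy : π x = π y
  · have := hg (n x) (n y)
    simp only [AddSubgroup.coe_sub, map_sub, hn, hxy] at this
    simp only [hxy]
    rw [add_sub_add_left_eq_sub, this]
    congr 1; abel
  · have h1 := hφ (π x) (π y)
    have h2 : b (s' (φ (π y)) + g (n y) - (s' (φ (π x)) + g (n x))) ∈
        qc b (QuotientAddGroup.mk' L') (φ (π y) - φ (π x)) :=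
      ⟨_, by rw [map_sub, hF, hF], rfl⟩
    rw [h1] at h2
    obtain ⟨t, ht1, ht2⟩ := h2
    obtain ⟨m, hm⟩ := (hker (t - (y - x))).1 (by rw [map_sub, ht1, map_sub, sub_self])
    rw [← ht2, ← hinv (y - x) m (by rw [map_sub]; exact sub_ne_zero.2 (Ne.symm hxy)), hm]
    congr 1; abel

/-- Generalized wreath products over `L ≤ L + ⟨k⟩`, where `L` is the kernel of `π` and `⟨k⟩` is
closed of order two or three. -/
lemma Pair.ind_wreath' {M : Type x} {Q : Type y} [AddCommGroup M] [AddCommGroup Q]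
    (hS : Sep.{x, v, w} M) (hQ : Sep.{y, v, w} Q) [Finite V] (P : Pair a b) (ι : M →+ U)
    (hι : Function.Injective ι) (π : U →+ Q) (hπ : Function.Surjective π)
    (hker : ∀ x, π x = 0 ↔ ∃ m, ι m = x) (hM : Closed a ι.range) {p : ℕ}
    (hp : p = 2 ∨ p = 3) {z : U} (hz0 : z ≠ 0) (hz : p • z = 0)
    (hL : Closed a (AddSubgroup.zmultiples z)) (hLM : ∀ (i : ℤ) m, i • z = ι m → m = 0)
    (hinv : ∀ x m, (∀ i : ℤ, π x ≠ i • π z) → a (x + ι m) = a x) : Ind a b := by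
  obtain ⟨e0, -⟩ := P.base
  have : Finite U := Finite.of_equiv V e0.symm
  set L' := P.img ι.range hM with hL'
  set π' := QuotientAddGroup.mk' L' with hπ'
  have hk : ∀ x h, a x = b h → (π x = 0 ↔ π' h = 0) := fun x h e => by
    rw [hker, hπ', QuotientAddGroup.mk'_apply, QuotientAddGroup.eq_zero_iff, P.mem_img hM e]; rfl
  obtain ⟨φ, hφ⟩ := hQ _ _ _ _ (P.quot hπ (QuotientAddGroup.mk'_surjective L') hk)
  -- lifting of a difference in the quotient
  have lift : ∀ q t, ∃ h, π' h = φ (q + π t) - φ q ∧ b h = a t := fun q t => by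
    have h1 : a t ∈ qc a π (q + π t - q) := ⟨t, by simp, rfl⟩
    rw [← hφ] at h1
    exact h1
  choose z' hz'1 hz'2 using fun r => lift (π r) z
  choose f hf using fun r => P.core hS ι hι hM hp hz0 hz hL hLM (hz'2 r).symm
  have hz3 := fun r => P.gen hp hz0 hz hL (hz'2 r).symm
  -- representatives of the cosets of `⟨z⟩ + L`
  let N : AddSubgroup U := (AddSubgroup.zmultiples (π z)).comap π
  let r : U → U := fun x => (QuotientAddGroup.mk (s := N) x).out
  have hr : ∀ x y, y - x ∈ N → r x = r y := fun x y h => by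
    have : (QuotientAddGroup.mk x : U ⧸ N) = QuotientAddGroup.mk y :=
      QuotientAddGroup.eq.2 (by rwa [neg_add_eq_sub])
    simp only [r, this]
  have hrN : ∀ x, ∃ (i : ℤ) (m : M), x = r x + i • z + ι m := fun x => by
    have h1 : (QuotientAddGroup.mk (r x) : U ⧸ N) = QuotientAddGroup.mk x := Quotient.out_eq _
    have h2 := QuotientAddGroup.eq.1 h1
    obtain ⟨i, hi⟩ := AddSubgroup.mem_zmultiples_iff.1 (AddSubgroup.mem_comap.1 h2)
    obtain ⟨m, hm⟩ := (hker (-r x + x - i • z)).1 (by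
      rw [map_sub, map_zsmul, hi]; simp)
    exact ⟨i, m, by rw [hm]; abel⟩
  choose i m him using hrN
  choose s' hs' using QuotientAddGroup.mk'_surjective L'
  -- `f` maps differences into `L'`
  have hfL : ∀ r m n, π' (f r n - f r m) = 0 := fun r m n => by
    have h1 := hf r 0 m n
    simp only [zero_zsmul, zero_add] at h1
    exact (hk _ _ h1.symm).1 ((hker _).2 ⟨_, rfl⟩)
  have hpi : ∀ x, φ (π x) = φ (π (r x)) + i x • π' (z' (r x)) := fun x => by
    have hx : π x = π (r x) + i x • π z := by
      conv_lhs => rw [him x]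
      rw [map_add, map_add, map_zsmul, (hker (ι (m x))).2 ⟨_, rfl⟩, add_zero]
    have hpz : p • π z = 0 := by rw [← map_nsmul, hz, map_zero]
    have hpz' : p • π' (z' (r x)) = 0 := by rw [← map_nsmul, (hz3 _).1, map_zero]
    rw [hx]
    rcases zsmul_cases hp hpz hpz' (i x) with ⟨h1, h2⟩ | ⟨h1, h2⟩ | ⟨h1, h2⟩ <;> rw [h1, h2]
    · simp
    · rw [hz'1]; abel
    · obtain ⟨h, hh1, hh2⟩ := lift (π (r x)) (-z)
      obtain ⟨j, rfl⟩ := (hz3 (r x)).2 h (-1) (by simpa using hh2.symm)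
      rw [map_neg, eq_sub_iff_add_eq] at hh1
      rw [← hh1, map_zsmul, add_comm]
      congr 1
      have hnz : π z ≠ 0 := fun h => by
        obtain ⟨m, hm⟩ := (hker z).1 h
        have := hLM 1 m (by simpa using hm.symm)
        rw [this, map_zero] at hm
        exact hz0 hm.symm
      rcases zsmul_cases hp hpz hpz' j with ⟨h1, h2⟩ | ⟨h1, h2⟩ | ⟨h1, h2⟩
      · rw [map_zsmul, h2, zero_add] at hh1
        exact absurd (by simpa using φ.injective hh1) hnz
      · rw [map_zsmul, h2, hz'1, sub_add_cancel] at hh1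
        have h3 := add_left_cancel (φ.injective hh1)
        rw [h2]
        have h4 : p = 2 := by
          rcases hp with rfl | rfl
          · rfl
          · exfalso; apply hnz
            have : (3 : ℕ) • π z = π z + π z + π z := by abel
            rw [this] at hpz
            nth_rewrite 1 [h3] at hpz
            simpa using hpz
        subst h4
        rw [two_nsmul] at hpz'
        exact eq_neg_of_add_eq_zero_left hpz'
      · exact h2
  let F : U → V := fun x => s' (φ (π (r x))) + i x • z' (r x) + (f (r x) (m x) - f (r x) 0)
  have hF : ∀ x, π' (F x) = φ (π x) := fun x => by
    simp only [F]
    rw [map_add, map_add, map_zsmul, hs', hfL, add_zero, hpi x]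
  refine P.ind_of_fun F fun x y => ?_
  by_cases hxy : y - x ∈ N
  · have h1 := hr x y hxy
    have h2 := hf (r x) (i y - i x) (m x) (m y)
    have h3 : F y - F x =
        (i y - i x) • z' (r x) + (f (r x) (m y) - f (r x) (m x)) := by
      simp only [F, ← h1]
      rw [sub_smul]; abel
    rw [h3, h2]
    congr 1
    conv_rhs => rw [him y, him x, ← h1]
    rw [sub_smul, map_sub]; abel
  · have h1 := hφ (π x) (π y)
    have h2 : b (F y - F x) ∈ qc b π' (φ (π y) - φ (π x)) := ⟨_, by rw [map_sub, hF, hF], rfl⟩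
    rw [h1] at h2
    obtain ⟨t, ht1, ht2⟩ := h2
    obtain ⟨m, hm⟩ := (hker (t - (y - x))).1 (by rw [map_sub, ht1, map_sub, sub_self])
    rw [← ht2, ← hinv (y - x) m (fun i hi => hxy (by
      rw [AddSubgroup.mem_comap, hi]; exact AddSubgroup.zsmul_mem_zmultiples _ _)), hm]
    congr 1; abel

end SepProof

namespace SepProof

universe u v w x y

/-! ### Cyclic groups of prime order, and trivial colourings -/

lemma sep_punit : Sep.{x, v, w} PUnit.{x + 1} := fun V _ _ C a b P =>
  P.ind_of_fun (fun _ => 0) fun x y => by simpa using P.zero.symm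

lemma sep_zmod {p : ℕ} (hp : p = 2 ∨ p = 3) : Sep.{0, v, w} (ZMod p) := fun V _ _ C a b P => by
  have : Fact (1 < p) := ⟨by omega⟩
  have key : ∀ x : ZMod p, ∃ i : ℤ, x = i • (1 : ZMod p) := fun x => ⟨x.cast, by simp⟩
  refine P.ind_tensor sep_punit.{v, w, 0} (0 : PUnit →+ ZMod p) (fun _ _ _ => rfl) ?_ hp
    (one_ne_zero : (1 : ZMod p) ≠ 0) (by simp) ?_ (fun _ _ _ => rfl) (fun x => ?_)
  · rintro x y e ⟨m, rfl⟩
    exact ⟨0, (P.refl.eq_zero (e.symm.trans (by simp))).symm⟩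
  · intro x y _ _
    obtain ⟨i, hi⟩ := key y
    exact AddSubgroup.mem_zmultiples_iff.2 ⟨i, hi.symm⟩
  · obtain ⟨i, hi⟩ := key x
    exact ⟨i, 0, by simpa using hi⟩

variable {C : Type w} {U : Type u} {V : Type v} [AddCommGroup U] [AddCommGroup V]
  {a : U → C} {b : V → C}

lemma Pair.ind_trivial (P : Pair a b) (h : ∀ x y, x ≠ 0 → y ≠ 0 → a x = a y) : Ind a b := by
  obtain ⟨e, -⟩ := P.base
  refine ⟨e, fun x y => ?_⟩
  by_cases hxy : x = y
  · simpa [hxy] using P.zero.symm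
  · obtain ⟨t, ht⟩ := P.symm.surj (e y - e x)
    have h1 : e y - e x ≠ 0 := sub_ne_zero.2 fun h => hxy (e.injective h).symm
    rw [← ht]
    exact h _ _ (fun h0 => h1 ((P.zero_iff ht).1 h0)) (sub_ne_zero.2 (Ne.symm hxy))

/-! ### Symmetrization -/

/-- The colouring whose classes are the unions of a class and its negative. -/
def sym (a : U → C) (x : U) : Set C := {a x, a (-x)}

lemma sym_neg (a : U → C) (x : U) : sym a (-x) = sym a x := by
  simp [sym, Set.pair_comm]

lemma mem_sym {x y : U} (h : sym a x = sym a y) : a x = a y ∨ a x = a (-y) := by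
  have : a x ∈ sym a y := h ▸ Set.mem_insert _ _
  simpa [sym] using this

lemma Pair.sym_eq (P : Pair a b) {x : U} {h : V} (e : a x = b h) : sym a x = sym b h := by
  simp [sym, e, P.neg e]

lemma Pair.sym (P : Pair a b) : Pair (sym a) (sym b) := by
  have key : ∀ {x h}, SepProof.sym a x = SepProof.sym b h → a x = b h ∨ a x = b (-h) :=
    fun {x h} e => by
      have : a x ∈ SepProof.sym b h := e ▸ Set.mem_insert _ _
      simpa [SepProof.sym] using this
  refine ⟨P.sym_eq P.zero, fun {x h} e => ?_, fun {x h} e => by rwa [sym_neg, sym_neg],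
    fun {x h} e => ?_⟩
  · rcases key e with e | e
    · exact P.zero_iff e
    · simpa using P.zero_iff e
  · rcases key e with e | e
    · obtain ⟨E, hE⟩ := P.tri e
      exact ⟨E, fun u => ⟨(P.sym_eq (hE u).1.symm).symm, (P.sym_eq (hE u).2.symm).symm⟩⟩
    · obtain ⟨E, hE⟩ := P.tri e
      refine ⟨E.trans (Equiv.neg V), fun u => ⟨?_, ?_⟩⟩
      · simpa [sym_neg] using (P.sym_eq (hE u).1.symm).symm
      · have h1 := (P.sym_eq (hE u).2.symm).symm
        rw [← sym_neg b] at h1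
        have h2 : -(-h - E u) = h - (E.trans (Equiv.neg V)) u := by simp [add_comm]
        rwa [h2] at h1

open Classical in
/-- If the symmetrized colouring is constant on a coset of a closed subgroup of odd order, then so
is the colouring: otherwise the two colours on the coset would occur equally often. -/
lemma Pair.inv_of_sym [Finite U] (P : Pair a a) {L : AddSubgroup U} (hL : Closed a L)
    (hodd : Odd (Nat.card L)) {x : U} (h : ∀ l ∈ L, SepProof.sym a (x + l) = SepProof.sym a x) :
    ∀ l ∈ L, a (x + l) = a x := by
  intro l0 hl0
  by_contra hne
  have h1 : a (x + l0) = a (-x) := (mem_sym (h l0 hl0)).resolve_left hne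
  have hne' : a (-x) ≠ a x := h1 ▸ hne
  let N : U → C → ℕ := fun y c => Nat.card {u // u ∈ L ∧ a (y - u) = c}
  have hL' : ∀ u, (∃ t ∈ L, a t = a u) ↔ u ∈ L :=
    fun u => ⟨fun ⟨t, ht, e⟩ => hL t u e ht, fun hu => ⟨u, hu, rfl⟩⟩
  have hN : ∀ {y y'} c, a y = a y' → N y c = N y' c := fun {y y'} c e => by
    have := P.count e (fun c1 c2 => (∃ t ∈ L, a t = c1) ∧ c2 = c)
    simpa only [hL'] using this
  have e1 : N (-x) (a (-x)) = N x (a x) := by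
    refine Nat.card_congr ((Equiv.neg U).subtypeEquiv fun u => ?_)
    simp only [Equiv.neg_apply, neg_mem_iff, sub_neg_eq_add]
    refine and_congr_right fun _ => ⟨fun e => ?_, fun e => ?_⟩
    · have := P.neg e
      simpa [add_comm] using this
    · have := P.neg e
      simpa [add_comm, sub_eq_add_neg] using this
  have e2 : N (x + l0) (a (-x)) = N x (a (-x)) := by
    refine Nat.card_congr ((Equiv.subRight l0).subtypeEquiv fun u => ?_)
    show _ ↔ u - l0 ∈ L ∧ a (x - (u - l0)) = _
    have hm : u - l0 ∈ L ↔ u ∈ L :=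
      ⟨fun h => by simpa using L.add_mem h hl0, fun h => L.sub_mem h hl0⟩
    rw [hm]
    have : x - (u - l0) = x + l0 - u := by abel
    rw [this]
  have e3 : N x (a x) + N x (a (-x)) = Nat.card L := by
    have := Fintype.ofFinite U
    simp only [N, Nat.card_eq_fintype_card, Fintype.card_subtype]
    rw [← Finset.card_union_of_disjoint]
    · congr 1
      ext u
      simp only [Finset.mem_union, Finset.mem_filter, Finset.mem_univ, true_and]
      refine ⟨fun h => h.elim And.left And.left, fun hu => ?_⟩
      have := mem_sym (h (-u) (L.neg_mem hu))
      rw [← sub_eq_add_neg] at this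
      tauto
    · rw [Finset.disjoint_filter]
      rintro u _ ⟨_, h3⟩ ⟨_, h4⟩
      exact hne' (h4.symm.trans h3)
  rw [← e2, hN _ h1, e1] at e3
  rw [← e3] at hodd
  exact (Nat.not_odd_iff_even.2 ⟨_, rfl⟩) hodd

/-! ### Elementary abelian groups -/

open Classical in
/-- In a group of odd order, `u ↦ y - u` has exactly one fixed point. -/
lemma odd_card_iff [Finite U] (h : U → U) (hh : ∀ u, h u + h u = u) (hh' : ∀ u, h (u + u) = u)
    (c : C) (y : U) : Odd (Nat.card {u // a u = c ∧ a (y - u) = c}) ↔ a (h y) = c := by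
  have := Fintype.ofFinite U
  have := Fintype.ofFinite {u // a u = c ∧ a (y - u) = c}
  let f : Function.End {u // a u = c ∧ a (y - u) = c} :=
    fun u => ⟨y - u.1, u.2.2, by simpa using u.2.1⟩
  have hf : f ^ 2 ^ 1 = 1 := by
    funext u
    apply Subtype.ext
    show y - (y - u.1) = u.1
    abel
  have key := Equiv.Perm.card_fixedPoints_modEq (p := 2) (n := 1) hf
  have hfix : ∀ u, u ∈ Function.fixedPoints f ↔ u.1 = h y := fun u => by
    rw [Function.mem_fixedPoints, Function.IsFixedPt, Subtype.ext_iff]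
    show y - u.1 = u.1 ↔ _
    rw [sub_eq_iff_eq_add]
    exact ⟨fun e => (hh' u.1).symm.trans (congrArg h e.symm), fun e => by rw [e, hh]⟩
  rw [Nat.card_eq_fintype_card, Nat.odd_iff, key]
  constructor
  · intro h1
    by_contra h2
    have : IsEmpty (Function.fixedPoints f) := ⟨fun u => h2 (by
      have := u.1.2.1
      rwa [(hfix u.1).1 u.2] at this)⟩
    simp at h1
  · intro h1
    have h2 : y - h y = h y := by rw [sub_eq_iff_eq_add, hh]
    have : Unique (Function.fixedPoints f) :=
      ⟨⟨⟨⟨h y, h1, by rw [h2]; exact h1⟩, (hfix _).2 rfl⟩⟩, fun u => by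
        apply Subtype.ext; apply Subtype.ext; exact (hfix u.1).1 u.2⟩
    simp

/-- The multiplier theorem for the multiplier `4`: halving preserves the correspondence, and
halving twice is the identity on `U`. -/
lemma Pair.mult4 [Finite V] (P : Pair a b) (hU : ∀ x : U, 3 • x = 0)
    (hV : ∀ h : V, 27 • h = 0) (h : V) :
    b (4 • h) = b h := by
  obtain ⟨e0, -⟩ := P.base
  have : Finite U := Finite.of_equiv V e0.symm
  have half : ∀ {x h}, a x = b h → a (14 • x) = b (14 • h) := fun {x h} e => by
    have hU' : ∀ x : U, 27 • x = 0 := fun x => by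
      rw [show 27 = 9 * 3 from rfl, mul_nsmul', hU, smul_zero]
    have h1 := P.count e (fun c1 c2 => c1 = a (14 • x) ∧ c2 = a (14 • x))
    have h2 := (odd_card_iff (a := a) (fun x => 14 • x)
      (fun u => by rw [← add_nsmul, show 14 + 14 = 27 + 1 from rfl, succ_nsmul, hU', zero_add])
      (fun u => by rw [← two_nsmul, ← mul_nsmul', show 14 * 2 = 27 + 1 from rfl, succ_nsmul, hU',
        zero_add]) (a (14 • x)) x).2 rfl
    rw [h1] at h2
    exact ((odd_card_iff (a := b) (fun x => 14 • x)
      (fun u => by rw [← add_nsmul, show 14 + 14 = 27 + 1 from rfl, succ_nsmul, hV, zero_add])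
      (fun u => by rw [← two_nsmul, ← mul_nsmul', show 14 * 2 = 27 + 1 from rfl, succ_nsmul, hV,
        zero_add]) (a (14 • x)) h).1 h2).symm
  obtain ⟨x, hx⟩ := P.symm.surj (4 • h)
  have h1 := half (half hx)
  have e1 : 14 • 14 • x = x := by
    rw [← mul_nsmul', show 14 * 14 = 65 * 3 + 1 from rfl, succ_nsmul, mul_nsmul', hU, smul_zero,
      zero_add]
  have e2 : 14 • 14 • 4 • h = h := by
    rw [← mul_nsmul', ← mul_nsmul', show 14 * (14 * 4) = 29 * 27 + 1 from rfl, succ_nsmul,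
      mul_nsmul', hV, smul_zero, zero_add]
  rw [e1, e2] at h1
  rw [← h1, hx]

end SepProof

namespace SepProof

universe u v w x y

variable {C : Type w} {U : Type u} {V : Type v} [AddCommGroup U] [AddCommGroup V]
  {a : U → C} {b : V → C}

/-- If multiplication by `m` has image of exponent three, and `m = 3` or `m = 9`, then many elements
have the same colour as their translates by an element of the image. -/
lemma many_of_mult4 [Finite V] (hb : ∀ h, b (4 • h) = b h) (hc : Nat.card V = 9 ∨ Nat.card V = 27)
    {m : ℕ} (hm : m = 3 ∨ m = 9) (h3 : ∀ h : V, (3 * m) • h = 0) {h0 : V} (h0' : m • h0 ≠ 0) :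
    ∃ c : V, c ≠ 0 ∧ 2 * Nat.card V ≤ 3 * Nat.card {h // b h = b (h - c)} := by
  classical
  let μ : V →+ V := nsmulAddMonoidHom m
  have hμ : ∀ h, μ h = m • h := fun h => rfl
  have h27 : Nat.card V ∣ 27 := by rcases hc with h | h <;> simp [h]
  have hle : μ.range ≤ μ.ker := by
    rintro _ ⟨h, rfl⟩
    rw [AddMonoidHom.mem_ker, hμ, hμ, ← mul_nsmul']
    rcases hm with rfl | rfl
    · exact h3 h
    · rw [show 9 * 9 = 3 * (3 * 9) from rfl, mul_nsmul', h3, smul_zero]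
  have hprod : Nat.card μ.ker * Nat.card μ.range = Nat.card V := by
    rw [← AddSubgroup.card_mul_index μ.ker, AddSubgroup.index_ker]
  have hcle : Nat.card μ.range ≤ Nat.card μ.ker := Nat.card_le_card_of_injective _
    (AddSubgroup.inclusion_injective hle)
  have hdvd : Nat.card μ.range ∣ 27 := (Dvd.intro_left _ hprod).trans h27
  have hne1 : Nat.card μ.range ≠ 1 := fun h => by
    rw [AddSubgroup.card_eq_one] at h
    have : μ h0 ∈ μ.range := ⟨h0, rfl⟩
    rw [h] at this
    exact h0' this
  have hr3 : Nat.card μ.range = 3 := by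
    have h1 : Nat.card μ.range ≤ 5 := by
      by_contra h
      push Not at h
      have h2 : 6 * 6 ≤ Nat.card μ.ker * Nat.card μ.range := Nat.mul_le_mul (by omega) (by omega)
      rw [hprod] at h2
      omega
    have h2 : ∀ n, n ∣ 27 → n ≤ 5 → n ≠ 1 → n = 3 := fun n h1 h2 h3 => by
      interval_cases n <;> first | rfl | omega
    exact h2 _ hdvd h1 hne1
  refine ⟨m • h0, h0', ?_⟩
  have hk : 3 * Nat.card μ.ker = Nat.card V := by rw [← hprod, hr3, mul_comm]
  -- every element outside the kernel has the same colour as its translate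
  have hz : AddSubgroup.zmultiples (m • h0) = μ.range := by
    apply AddSubgroup.eq_of_le_of_card_ge
    · rw [AddSubgroup.zmultiples_le]; exact ⟨h0, rfl⟩
    · rw [hr3, Nat.card_zmultiples]
      have : Fact (Nat.Prime 3) := ⟨by norm_num⟩
      rw [addOrderOf_eq_prime (p := 3) (by rw [← mul_nsmul']; exact h3 h0) h0']
  have hc3 : 3 • (m • h0) = 0 := by rw [← mul_nsmul']; exact h3 h0
  have b4 : ∀ j h, b (4 ^ j • h) = b h := fun j => by
    induction j with
    | zero => simp
    | succ j ih => intro h; rw [pow_succ', mul_nsmul', hb, ih]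
  have bk : ∀ h, b (h + m • h) = b h ∧ b (h - m • h) = b h := fun h => by
    have key : ∀ j n : ℕ, ∀ t : V, (4 ^ j) • h = t + n • ((3 * m) • h) → b t = b h :=
      fun j n t e => by rw [h3, smul_zero, add_zero] at e; rw [← e, b4]
    rcases hm with rfl | rfl
    · exact ⟨key 1 0 _ (by abel), key 2 2 _ (by abel)⟩
    · exact ⟨key 3 2 _ (by abel), key 6 152 _ (by abel)⟩
  have hout : ∀ h, h ∉ μ.ker → b h = b (h - m • h0) := fun h hh => by
    have h1 : μ h ∈ AddSubgroup.zmultiples (m • h0) := hz ▸ ⟨h, rfl⟩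
    obtain ⟨i, hi⟩ := AddSubgroup.mem_zmultiples_iff.1 h1
    rw [hμ] at hi
    rcases zsmul_cases (Or.inr rfl) hc3 hc3 i with ⟨h2, -⟩ | ⟨h2, -⟩ | ⟨h2, -⟩ <;> rw [h2] at hi
    · exact absurd hi.symm hh
    · rw [hi]; exact (bk h).2.symm
    · have h4 : m • h0 = -(m • h) := by rw [← hi, neg_neg]
      rw [h4, sub_neg_eq_add]; exact (bk h).1.symm
  have hcompl : Nat.card V ≤ Nat.card μ.ker + Nat.card {h // b h = b (h - m • h0)} := by
    have := Fintype.ofFinite V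
    rw [show Nat.card μ.ker = Nat.card {h // h ∈ μ.ker} from rfl, Nat.card_eq_fintype_card,
      Nat.card_eq_fintype_card, Nat.card_eq_fintype_card, Fintype.card_subtype,
      Fintype.card_subtype, ← Finset.card_univ]
    refine (Finset.card_le_card fun h _ => ?_).trans (Finset.card_union_le _ _)
    simp only [Finset.mem_union, Finset.mem_filter, Finset.mem_univ, true_and]
    by_cases hh : h ∈ μ.ker
    · exact .inl hh
    · exact .inr (hout h hh)
  omega

/-- If few elements have the same colour as their translates, then a group algebraically isomorphic
to an elementary abelian group of order `9` or `27` is elementary abelian. -/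
lemma Pair.elem [Finite V] (P : Pair a b) (hU : ∀ x : U, 3 • x = 0)
    (hc : Nat.card U = 9 ∨ Nat.card U = 27)
    (hfew : ∀ c : U, c ≠ 0 → 3 * Nat.card {x // a x = a (x - c)} < 2 * Nat.card U) (h : V) :
    3 • h = 0 := by
  have hc' : Nat.card V = 9 ∨ Nat.card V = 27 := P.card_eq ▸ hc
  have hV : ∀ h : V, 27 • h = 0 := fun h => by
    have := card_nsmul_eq_zero' (x := h)
    rcases hc' with e | e <;> rw [e] at this
    · rw [show 27 = 3 * 9 from rfl, mul_nsmul', this, smul_zero]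
    · exact this
  have hb := P.mult4 hU hV
  have key : ¬ ∃ c : V, c ≠ 0 ∧ 2 * Nat.card V ≤ 3 * Nat.card {h // b h = b (h - c)} := by
    rintro ⟨c, hc0, h1⟩
    obtain ⟨t, ht⟩ := P.symm.surj c
    have ht0 : t ≠ 0 := fun h => hc0 ((P.zero_iff ht).1 h)
    have h2 := P.count ht (fun c1 c2 => ∃ u, a u = c1 ∧ a (-u) = c2)
    have h3 : ∀ u, (∃ w, a w = a u ∧ a (-w) = a (t - u)) ↔ a u = a (u - t) := fun u => by
      constructor
      · rintro ⟨w, e1, e2⟩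
        have := P.neg_self ((P.neg_self e1).symm.trans e2)
        simpa using this
      · intro e
        exact ⟨u, rfl, by simpa using P.neg_self e⟩
    have h4 : ∀ u, (∃ w, a w = b u ∧ a (-w) = b (c - u)) ↔ b u = b (u - c) := fun u => by
      constructor
      · rintro ⟨w, e1, e2⟩
        have := P.symm.neg_self ((P.neg e1).symm.trans e2)
        simpa using this
      · intro e
        obtain ⟨w, hw⟩ := P.symm.surj u
        exact ⟨w, hw, by
          rw [P.neg hw]
          have := P.symm.neg_self e
          simpa using this⟩
    simp only [h3, h4] at h2
    have := hfew t ht0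
    rw [h2, P.card_eq] at this
    omega
  by_contra hh
  by_cases h9 : ∀ h : V, 9 • h = 0
  · exact key (many_of_mult4 hb hc' (m := 3) (.inl rfl) (fun h => h9 h) hh)
  · push Not at h9
    obtain ⟨h0, hh0⟩ := h9
    exact key (many_of_mult4 hb hc' (m := 9) (.inr rfl) (fun h => hV h) hh0)

lemma exists_addEquiv_aux [Finite U] [Finite V] {p : ℕ} [Fact p.Prime] [Module (ZMod p) U]
    [Module (ZMod p) V] (hc : Nat.card U = Nat.card V) : Nonempty (U ≃+ V) := by
  have h1 : p ^ Module.finrank (ZMod p) U = p ^ Module.finrank (ZMod p) V :=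
    (FiniteField.pow_finrank_eq_natCard p U).trans
      (hc.trans (FiniteField.pow_finrank_eq_natCard p V).symm)
  have h3 := Nat.pow_right_injective (Fact.out : p.Prime).two_le h1
  exact ⟨(LinearEquiv.ofFinrankEq U V h3).toAddEquiv⟩

/-- Elementary abelian groups of the same order are isomorphic. -/
lemma exists_addEquiv [Finite U] [Finite V] {p : ℕ} [Fact p.Prime] (hU : ∀ x : U, p • x = 0)
    (hV : ∀ x : V, p • x = 0) (hc : Nat.card U = Nat.card V) : Nonempty (U ≃+ V) :=
  let _ : Module (ZMod p) U := AddCommGroup.zmodModule hU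
  let _ : Module (ZMod p) V := AddCommGroup.zmodModule hV
  exists_addEquiv_aux (p := p) hc

/-- Reduction to the case of two colourings of the same group. -/
lemma Pair.ind_of_elem [Finite V] (P : Pair a b) (hU : ∀ x : U, 3 • x = 0)
    (hc : Nat.card U = 9 ∨ Nat.card U = 27)
    (hfew : ∀ c : U, c ≠ 0 → 3 * Nat.card {x // a x = a (x - c)} < 2 * Nat.card U)
    (H : ∀ b : U → C, Pair a b → Ind a b) : Ind a b := by
  have : Fact (Nat.Prime 3) := ⟨by norm_num⟩
  obtain ⟨e0, -⟩ := P.base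
  have : Finite U := Finite.of_equiv V e0.symm
  obtain ⟨T⟩ := exists_addEquiv (p := 3) hU (P.elem hU hc hfew) P.card_eq
  exact (Ind.of_comp T (H _ (P.symm.comp T).symm).symm).symm

end SepProof

/-! ### Patterns and searches for patterns -/

namespace SepProof

universe u w

/-- Evaluate the number before it is passed on. In the kernel, recursion on a number makes it a
literal. -/
def force (n : ℕ) (k : ℕ → Bool) : Bool := Nat.rec (k 0) (fun m _ => k (Nat.succ m)) n

lemma force_eq (n : ℕ) (k : ℕ → Bool) : force n k = k n := by cases n <;> rfl

def forceList : List ℕ → (List ℕ → Bool) → Bool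
  | [], k => k []
  | n :: t, k => force n fun m => forceList t fun l => k (m :: l)

lemma forceList_eq (l : List ℕ) : ∀ k, forceList l k = k l := by
  induction l with
  | nil => exact fun k => rfl
  | cons n t ih => exact fun k => by rw [forceList, force_eq, ih]

/-- A requirement on a colouring of the nonzero elements: the sets in `cl` are unions of colour
classes, and the sets in `mono` are monochromatic. -/
structure Pat (U : Type u) where
  cl : List (List U)
  mono : List (List U)

namespace Pat

variable {U : Type u} {C : Type w}

/-- The colouring meets the requirement. -/
def Holds (F : Pat U) (col : U → C) : Prop :=
  (∀ l ∈ F.cl, ∀ x ∈ l, ∀ y, col y = col x → y ∈ l) ∧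
    ∀ l ∈ F.mono, ∀ x ∈ l, ∀ y ∈ l, col x = col y

/-- The image under a map. -/
def map (F : Pat U) (T : U → U) : Pat U := ⟨F.cl.map (List.map T), F.mono.map (List.map T)⟩

/-- The pattern whose colour classes are exactly the given sets. -/
def full (c : List (List U)) : Pat U := ⟨c, c⟩

lemma Holds.comp {F : Pat U} {T : U → U} (hT : Function.Injective T) {col : U → C}
    (h : (F.map T).Holds col) : F.Holds (col ∘ T) := by
  refine ⟨fun l hl x hx y e => ?_, fun l hl x hx y hy => ?_⟩
  · have := h.1 _ (List.mem_map_of_mem hl) (T x) (List.mem_map_of_mem hx) (T y) e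
    obtain ⟨z, hz, e'⟩ := List.mem_map.1 this
    exact hT e' ▸ hz
  · exact h.2 _ (List.mem_map_of_mem hl) (T x) (List.mem_map_of_mem hx) (T y)
      (List.mem_map_of_mem hy)

/-- The sets have no repetitions and do not contain zero. -/
def Ok [Zero U] (F : Pat U) : Prop := ∀ l ∈ F.cl ++ F.mono, l.Nodup ∧ (0 : U) ∉ l

instance [Zero U] [DecidableEq U] (F : Pat U) : Decidable F.Ok := by unfold Ok; infer_instance

end Pat

/-- Test of a packed requirement on a list of classes. -/
def holdsB (f : List ℕ × List ℕ) (ps : List Cl) : Bool :=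
  f.1.all (fun m => ps.all fun P =>
    (Nat.beq (Nat.land P.r m) 0).or (Nat.beq (Nat.land P.r m) P.r)) &&
  f.2.all (fun m => ps.any fun P => Nat.beq (Nat.land P.r m) m)

def leafB (fs : List (List ℕ × List ℕ)) (ps : List Cl) : Bool := fs.any fun f => holdsB f ps

/-- The class consists of at least two atoms. -/
def two (X : Cl) : Bool :=
  match X.mem with
  | _ :: _ :: _ => true
  | _ => false

namespace Codec

variable {U : Type u} [AddCommGroup U] (D : Codec U) (S : U → List U)

/-- Pass on the evaluated atoms. -/
def ats : List U → (List At → Bool) → Bool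
  | [], k => k []
  | u :: t, k => force (D.atom S u).sh fun sh => force (D.atom S u).r fun r =>
      force (D.atom S u).e fun e => ats t fun l => k (⟨sh, r, e⟩ :: l)

lemma ats_eq (l : List U) : ∀ k, D.ats S l k = k (l.map (D.atom S)) := by
  induction l with
  | nil => exact fun k => rfl
  | cons u t ih => exact fun k => by rw [ats, force_eq, force_eq, force_eq, ih]; rfl

def atss : List (List U) → (List (List At) → Bool) → Bool
  | [], k => k []
  | q :: t, k => D.ats S q fun x => atss t fun l => k (x :: l)

lemma atss_eq (l : List (List U)) : ∀ k, D.atss S l k = k (l.map (List.map (D.atom S))) := by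
  induction l with
  | nil => exact fun k => rfl
  | cons u t ih => exact fun k => by rw [atss, ats_eq, ih]; rfl

/-- Pass on the evaluated classes. -/
def cls : List (List U) → (List Cl → Bool) → Bool
  | [], k => k []
  | q :: t, k => force (D.clOf S q).r fun r => force (D.clOf S q).e fun e =>
      D.ats S q fun x => cls t fun l => k (⟨x, r, e⟩ :: l)

lemma cls_eq (l : List (List U)) : ∀ k, D.cls S l k = k (l.map (D.clOf S)) := by
  induction l with
  | nil => exact fun k => rfl
  | cons u t ih => exact fun k => by rw [cls, force_eq, force_eq, ats_eq, ih]; rfl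

/-- Pass on the packed requirements. -/
def pats : List (Pat U) → (List (List ℕ × List ℕ) → Bool) → Bool
  | [], k => k []
  | F :: t, k => forceList (F.cl.map D.mask) fun x => forceList (F.mono.map D.mask) fun y =>
      pats t fun l => k ((x, y) :: l)

lemma pats_eq (l : List (Pat U)) :
    ∀ k, D.pats l k = k (l.map fun F => (F.cl.map D.mask, F.mono.map D.mask)) := by
  induction l with
  | nil => exact fun k => rfl
  | cons u t ih => exact fun k => by rw [pats, forceList_eq, forceList_eq, ih]; rfl

variable {D S}

lemma land_mask {l m : List U} (hl : l.Nodup) (hm : m.Nodup)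
    (h : Nat.land (D.mask l) (D.mask m) = D.mask m) {x : U} (hx : x ∈ m) : x ∈ l := by
  classical
  have h' : (D.mask l &&& D.mask m) = D.mask m := h
  rw [D.mask_eq hl, D.mask_eq hm, land_pk] at h'
  have h1 := pk_inj h'
  rw [Finset.filter_eq_self] at h1
  have h2 := h1 (D.K - D.code x) (Finset.mem_image_of_mem _ (List.mem_toFinset.2 hx))
  obtain ⟨y, hy, e⟩ := Finset.mem_image.1 h2
  have h3 := D.le x
  have h4 := D.le y
  have : y = x := D.inj (by omega)
  exact this ▸ List.mem_toFinset.1 hy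

lemma land_mask_ne {l m : List U} (hl : l.Nodup) (hm : m.Nodup) {x : U} (hx : x ∈ l)
    (hx' : x ∈ m) : Nat.land (D.mask l) (D.mask m) ≠ 0 := by
  classical
  intro h
  have h' : (D.mask l &&& D.mask m) = pk ∅ := by simpa [pk] using h
  rw [D.mask_eq hl, D.mask_eq hm, land_pk] at h'
  have h1 := pk_inj h'
  rw [Finset.filter_eq_empty_iff] at h1
  exact h1 (Finset.mem_image_of_mem _ (List.mem_toFinset.2 hx'))
    (Finset.mem_image_of_mem _ (List.mem_toFinset.2 hx))

end Codec

variable {U : Type u} [AddCommGroup U] {C : Type w} {D : Codec U} {S : U → List U} {A : List U}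
  {col : U → C}

lemma leaf_sound (hA : Atoms S A col) (P : Pair col col) {Fs : List (Pat U)}
    (hF : ∀ F ∈ Fs, F.Ok) {qs : List (List U)} (hq : ∀ q ∈ qs, IsCl A col q)
    (hcov : ∀ u ∈ A, ∃ q ∈ qs, u ∈ q)
    (h : leafB (Fs.map fun F => (F.cl.map D.mask, F.mono.map D.mask)) (qs.map (D.clOf S)) = true) :
    ∃ F ∈ Fs, F.Holds col := by
  rw [leafB, List.any_eq_true] at h
  obtain ⟨f, hf, h⟩ := h
  obtain ⟨F, hFs, rfl⟩ := List.mem_map.1 hf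
  rw [holdsB, Bool.and_eq_true, List.all_eq_true, List.all_eq_true] at h
  simp only [List.forall_mem_map, List.all_eq_true, List.any_eq_true, Bool.or_eq_true, Nat.beq_eq,
    D.clOf_r_mask] at h
  have hnd : ∀ q ∈ qs, (q.flatMap S).Nodup := fun q h =>
    hA.nodup_flatMap (hq q h).sub (hq q h).nodup
  refine ⟨F, hFs, fun l hl x hx y e => ?_, fun l hl x hx y hy => ?_⟩
  · obtain ⟨h1, h2⟩ := hF F hFs l (List.mem_append_left _ hl)
    have hx0 : x ≠ 0 := fun e => h2 (e ▸ hx)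
    obtain ⟨u, hu, hxu⟩ := hA.cover x hx0
    obtain ⟨q, hqs, huq⟩ := hcov u hu
    have hm := (hq q hqs).mem_iff hA P huq
    have hux := hA.col u hu x hxu
    have hxq : x ∈ q.flatMap S := (hm x).2 hux
    rcases h.1 l hl q hqs with h3 | h3
    · exact absurd h3 (Codec.land_mask_ne (hnd q hqs) h1 hxq hx)
    · refine Codec.land_mask (D := D) h1 (hnd q hqs) ?_ ((hm y).2 (e.trans hux))
      exact (Nat.land_comm (D.mask l) _).trans h3
  · obtain ⟨h1, h2⟩ := hF F hFs l (List.mem_append_right _ hl)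
    obtain ⟨_, hq', h3⟩ := h.2 l hl
    obtain ⟨q, hqs, rfl⟩ := List.mem_map.1 hq'
    rw [D.clOf_r_mask] at h3
    obtain ⟨u, hu⟩ := List.exists_mem_of_ne_nil _ (hq q hqs).ne
    have hm := (hq q hqs).mem_iff hA P hu
    rw [(hm x).1 (Codec.land_mask (hnd q hqs) h1 h3 hx),
      (hm y).1 (Codec.land_mask (hnd q hqs) h1 h3 hy)]

/-- Search for a requirement that is met, starting from a list of blocks. -/
def runGo (D : Codec U) (S : U → List U) (Fs : List (Pat U)) (keep : Cl → Bool)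
    (bs : List (List U)) : Bool :=
  D.pats Fs fun fs => D.atss S bs fun bs => go (leafB fs) keep 40 [] bs

/-- Search for a requirement that is met, starting from known classes, a prescribed part of a
class and a prescribed part of its complement. -/
def runStart (D : Codec U) (S : U → List U) (Fs : List (Pat U)) (keep : Cl → Bool)
    (ps : List (List U)) (t cur rest : List U) : Bool :=
  D.pats Fs fun fs => D.cls S ps fun ps => D.ats S t fun t => D.cls S [cur] fun cs =>
    D.ats S rest fun rest => cs.all fun c => start (leafB fs) keep 40 ps t c.mem c.r c.e rest []

lemma runGo_sound (hA : Atoms S A col) (P : Pair col col) [Finite U] (hc : Nat.card U < 31)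
    {Fs : List (Pat U)} (hF : ∀ F ∈ Fs, F.Ok) {keep : Cl → Bool}
    (hk : ∀ q, IsCl A col q → keep (D.clOf S q) = true) {bs : List (List U)}
    (hbs : ∀ l ∈ bs, l.Nodup ∧ (∀ u ∈ l, u ∈ A))
    (hcl : ∀ l ∈ bs, ∀ u ∈ l, ∀ v ∈ A, col v = col u → v ∈ l)
    (hcov : ∀ u ∈ A, ∃ l ∈ bs, u ∈ l) (h : runGo D S Fs keep bs = true) :
    ∃ F ∈ Fs, F.Holds col := by
  rw [runGo, D.pats_eq, D.atss_eq] at h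
  obtain ⟨qs, h1, h2, h3⟩ := go_sound hA P hc hk 40 [] bs (by simp)
    (fun l hl => ⟨(hbs l hl).1, (hbs l hl).2, hcl l hl⟩) (fun u hu => .inr (hcov u hu)) h
  exact leaf_sound hA P hF h1 h2 h3

lemma runStart_sound (hA : Atoms S A col) (P : Pair col col) [Finite U] (hc : Nat.card U < 31)
    {Fs : List (Pat U)} (hF : ∀ F ∈ Fs, F.Ok) {keep : Cl → Bool}
    (hk : ∀ q, IsCl A col q → keep (D.clOf S q) = true) {ps : List (List U)}
    {t cur rest : List U} {c : C} (hps : ∀ q ∈ ps, IsCl A col q)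
    (hperm : (ps.flatten ++ (t ++ cur ++ rest)).Perm A) (hAn : A.Nodup)
    (hne : cur ≠ []) (hcur : ∀ u ∈ cur, col u = c) (hrest : ∀ u ∈ rest, col u ≠ c)
    (h : runStart D S Fs keep ps t cur rest = true) :
    ∃ F ∈ Fs, F.Holds col := by
  have hn := List.nodup_append.1 (hperm.nodup_iff.2 hAn)
  have hm : ∀ u, u ∈ A ↔ (∃ q ∈ ps, u ∈ q) ∨ u ∈ t ++ cur ++ rest := fun u => by
    rw [← hperm.mem_iff, List.mem_append, List.mem_flatten]
  rw [runStart, D.pats_eq, D.cls_eq, D.ats_eq, D.cls_eq, D.ats_eq] at h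
  simp only [List.map_cons, List.map_nil, List.all_cons, List.all_nil, Bool.and_true] at h
  obtain ⟨qs, h1, h2, h3⟩ := start_sound hA P hc hk 40 (bs := []) rfl rfl hps (by simp)
    (fun u hu => by simpa using (hm u).1 hu)
    hne hcur hrest hn.2.1 (fun u hu => (hm u).2 (.inr hu)) (fun u hu v hv e => by
      refine ((hm v).1 hv).resolve_left ?_
      rintro ⟨q, hq, hvq⟩
      have := ((hps q hq).iff v hvq u ((hm u).2 (.inr hu))).2 e.symm
      exact hn.2.2 u (List.mem_flatten.2 ⟨q, hq, this⟩) u hu rfl) h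
  exact leaf_sound hA P hF h1 h2 h3

end SepProof

/-! ### Decomposable colourings of a product with a group of prime order -/

namespace SepProof

universe u v w

variable {C : Type w} {R : Type u} {V : Type v} [AddCommGroup R] [AddCommGroup V] {p : ℕ}
  {a : ZMod p × R → C} {b : V → C}

lemma mem_zmultiples_inl (x : ZMod p × R) :
    x ∈ AddSubgroup.zmultiples ((1, 0) : ZMod p × R) ↔ x.2 = 0 := by
  rw [AddSubgroup.mem_zmultiples_iff]
  constructor
  · rintro ⟨i, rfl⟩
    simp
  · intro h
    exact ⟨x.1.cast, by ext <;> simp [h]⟩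

lemma Pair.ind_prod_tensor [Finite V] (hR : Sep.{u, v, w} R) (hp : p = 2 ∨ p = 3) (P : Pair a b)
    (h1 : ∀ x y, a x = a y → x.2 = 0 → y.2 = 0) (h2 : ∀ x y, a x = a y → x.1 = 0 → y.1 = 0) :
    Ind a b := by
  have : Fact (1 < p) := ⟨by omega⟩
  have hr : ∀ x, x ∈ (AddMonoidHom.inr (ZMod p) R).range ↔ x.1 = 0 := fun x =>
    ⟨by rintro ⟨m, rfl⟩; rfl, fun h => ⟨x.2, Prod.ext h.symm rfl⟩⟩
  refine P.ind_tensor hR (AddMonoidHom.inr (ZMod p) R) (fun x y h => congrArg Prod.snd h) ?_ hp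
    (z := (1, 0)) (fun h => one_ne_zero (congrArg Prod.fst h)) ?_ ?_ ?_ ?_
  · intro x y e
    rw [hr, hr]
    exact h2 x y e
  · ext <;> simp
  · intro x y e
    rw [mem_zmultiples_inl, mem_zmultiples_inl]
    exact h1 x y e
  · intro i m h
    simpa using (congrArg Prod.snd h).symm
  · intro x
    exact ⟨x.1.cast, x.2, by ext <;> simp⟩

lemma Pair.ind_prod_wreath_inr [Finite V] (hR : Sep.{u, v, w} R) (hp : p = 2 ∨ p = 3)
    (P : Pair a b) (h1 : ∀ x y, a x = a y → x.1 = 0 → y.1 = 0)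
    (h2 : ∀ x m, x.1 ≠ 0 → a (x + (0, m)) = a x) : Ind a b := by
  have hr : ∀ x, x ∈ (AddMonoidHom.inr (ZMod p) R).range ↔ x.1 = 0 := fun x =>
    ⟨by rintro ⟨m, rfl⟩; rfl, fun h => ⟨x.2, Prod.ext h.symm rfl⟩⟩
  refine P.ind_wreath hR (sep_zmod hp) (AddMonoidHom.inr (ZMod p) R)
    (fun x y h => congrArg Prod.snd h) (AddMonoidHom.fst (ZMod p) R) Prod.fst_surjective
    (fun x => (hr x).symm) ?_ h2
  intro x y e
  rw [hr, hr]
  exact h1 x y e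

lemma mem_range_inl (x : ZMod p × R) : x ∈ (AddMonoidHom.inl (ZMod p) R).range ↔ x.2 = 0 :=
  ⟨by rintro ⟨m, rfl⟩; rfl, fun h => ⟨x.1, Prod.ext rfl h.symm⟩⟩

lemma Pair.ind_prod_wreath_inl [Finite V] (hR : Sep.{u, v, w} R) (hp : p = 2 ∨ p = 3)
    (P : Pair a b) (h1 : ∀ x y, a x = a y → x.2 = 0 → y.2 = 0)
    (h2 : ∀ x m, x.2 ≠ 0 → a (x + (m, 0)) = a x) : Ind a b := by
  refine P.ind_wreath (sep_zmod hp) hR (AddMonoidHom.inl (ZMod p) R)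
    (fun x y h => congrArg Prod.fst h) (AddMonoidHom.snd (ZMod p) R) Prod.snd_surjective
    (fun x => (mem_range_inl x).symm) ?_ h2
  intro x y e
  rw [mem_range_inl, mem_range_inl]
  exact h1 x y e

lemma Pair.ind_prod_wreath' [Finite V] (hp : p = 2 ∨ p = 3)
    {a : ZMod p × ZMod p × ZMod p → C} (hR : Sep.{0, v, w} (ZMod p × ZMod p))
    (P : Pair a b) (h1 : ∀ x y, a x = a y → x.2 = 0 → y.2 = 0)
    (h2 : ∀ x y, a x = a y → x.1 = 0 ∧ x.2.2 = 0 → y.1 = 0 ∧ y.2.2 = 0)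
    (h3 : ∀ x m, x.2.2 ≠ 0 → a (x + (m, 0)) = a x) : Ind a b := by
  have : Fact (1 < p) := ⟨by omega⟩
  have hz : ∀ x : ZMod p × ZMod p × ZMod p,
      x ∈ AddSubgroup.zmultiples ((0, 1, 0) : ZMod p × ZMod p × ZMod p) ↔
        x.1 = 0 ∧ x.2.2 = 0 := fun x => by
    rw [AddSubgroup.mem_zmultiples_iff]
    constructor
    · rintro ⟨i, rfl⟩
      simp
    · rintro ⟨h, h'⟩
      exact ⟨x.2.1.cast, by ext <;> simp [h, h']⟩
  refine P.ind_wreath' (sep_zmod hp) hR (AddMonoidHom.inl (ZMod p) (ZMod p × ZMod p))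
    (fun x y h => congrArg Prod.fst h) (AddMonoidHom.snd (ZMod p) _) Prod.snd_surjective
    (fun x => (mem_range_inl x).symm) ?_ hp (z := (0, 1, 0)) ?_ ?_ ?_ ?_ ?_
  · intro x y e
    rw [mem_range_inl, mem_range_inl]
    exact h1 x y e
  · intro h
    exact one_ne_zero (congrArg (fun x => x.2.1) h)
  · ext <;> simp
  · intro x y e
    rw [hz, hz]
    exact h2 x y e
  · intro i m h
    simpa using (congrArg Prod.fst h).symm
  · intro x m h
    refine h3 x m fun h' => h x.2.1.cast ?_
    ext <;> simp [h']

/-- A set of generators of a subgroup that is a colour class generates a union of classes. -/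
lemma Pair.closed_of {U : Type u} [AddCommGroup U] {a : U → C} (P : Pair a a) {L : AddSubgroup U}
    {u : U} (h1 : ∀ x, a x = a u → x ∈ L)
    (h2 : L ≤ AddSubgroup.closure {x | a x = a u}) : Closed a L := by
  have hL : L = AddSubgroup.closure {x | a x = a u} :=
    le_antisymm h2 ((AddSubgroup.closure_le L).2 h1)
  subst hL
  intro x y e hx
  induction hx using AddSubgroup.closure_induction generalizing y with
  | mem x hx => exact AddSubgroup.subset_closure (show a y = a u from e.symm.trans hx)
  | zero => rw [P.eq_zero e.symm]; exact AddSubgroup.zero_mem _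
  | add x1 x2 _ _ ih1 ih2 =>
    obtain ⟨k, l, hkl, e1, e2⟩ := P.exadd e
    rw [← hkl]
    exact AddSubgroup.add_mem _ (ih1 k e1.symm) (ih2 l e2.symm)
  | neg x _ ih =>
    have := ih (-y) (by simpa using P.neg_self e)
    simpa using AddSubgroup.neg_mem _ this

end SepProof

/-! ### Elementary abelian groups of rank two and three -/

namespace SepProof

universe u v w

abbrev E2 (p : ℕ) := ZMod p × ZMod p

abbrev E3 (p : ℕ) := ZMod p × ZMod p × ZMod p

/-- A codec from a map `dec` that recovers an element from each of its codes. -/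
def mkCodec {U : Type*} [AddCommGroup U] (code : U → ℕ) (K : ℕ) (pre : U → List ℕ) (dec : ℕ → U)
    (le : ∀ u, code u ≤ K) (nodup : ∀ u, (pre u).Nodup) (h1 : ∀ u, ∀ c ∈ pre u, dec c = u)
    (h2 : ∀ u, code u ∈ pre u) (mem : ∀ u z, K - code u + code z ∈ pre (z - u)) : Codec U where
  code := code
  K := K
  pre := pre
  le := le
  inj u v h := by rw [← h1 u _ (h2 u), h, h1 v _ (h2 v)]
  nodup := nodup
  disj y y' c h h' := (h1 y c h).symm.trans (h1 y' c h')
  mem := mem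

/-- The coordinates are the digits of the code in base `6`, read modulo `3`. -/
def D33 : Codec (E3 3) := mkCodec (fun x => x.1.val + 6 * x.2.1.val + 36 * x.2.2.val) 129
  (fun x => ([0, 3].flatMap fun i => [0, 18].flatMap fun j => [0, 108].map fun k => i + j + k).map
    (x.1.val + 6 * x.2.1.val + 36 * x.2.2.val + ·))
  (fun n => ((n % 6 : ℕ), (n / 6 % 6 : ℕ), (n / 36 : ℕ)))
  (by decide +kernel) (by decide +kernel) (by decide +kernel) (by decide +kernel)
  (by decide +kernel)

def D23 : Codec (E2 3) := mkCodec (fun x => x.1.val + 6 * x.2.val) 21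
  (fun x => ([0, 3].flatMap fun i => [0, 18].map fun j => i + j).map (x.1.val + 6 * x.2.val + ·))
  (fun n => ((n % 6 : ℕ), (n / 6 : ℕ)))
  (by decide +kernel) (by decide +kernel) (by decide +kernel) (by decide +kernel)
  (by decide +kernel)

/-- The coordinates are the digits of the code in base `4`, read modulo `2`. -/
def D32 : Codec (E3 2) := mkCodec (fun x => x.1.val + 4 * x.2.1.val + 16 * x.2.2.val) 42
  (fun x => ([0, 2].flatMap fun i => [0, 8].flatMap fun j => [0, 32].map fun k => i + j + k).map
    (x.1.val + 4 * x.2.1.val + 16 * x.2.2.val + ·))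
  (fun n => ((n % 4 : ℕ), (n / 4 % 4 : ℕ), (n / 16 : ℕ)))
  (by decide +kernel) (by decide +kernel) (by decide +kernel) (by decide +kernel)
  (by decide +kernel)

def D22 : Codec (E2 2) := mkCodec (fun x => x.1.val + 4 * x.2.val) 10
  (fun x => ([0, 2].flatMap fun i => [0, 8].map fun j => i + j).map (x.1.val + 4 * x.2.val + ·))
  (fun n => ((n % 4 : ℕ), (n / 4 : ℕ)))
  (by decide +kernel) (by decide +kernel) (by decide +kernel) (by decide +kernel)
  (by decide +kernel)

/-- The additive map that sends the standard basis to the entries of `v`. -/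
def lin2 {p : ℕ} (v : E2 p × E2 p) : E2 p →+ E2 p where
  toFun x := (x.1 * v.1.1 + x.2 * v.2.1, x.1 * v.1.2 + x.2 * v.2.2)
  map_zero' := by ext <;> simp
  map_add' x y := by ext <;> simp <;> ring

def lin3 {p : ℕ} (v : E3 p × E3 p × E3 p) : E3 p →+ E3 p where
  toFun x := (x.1 * v.1.1 + x.2.1 * v.2.1.1 + x.2.2 * v.2.2.1,
    x.1 * v.1.2.1 + x.2.1 * v.2.1.2.1 + x.2.2 * v.2.2.2.1,
    x.1 * v.1.2.2 + x.2.1 * v.2.1.2.2 + x.2.2 * v.2.2.2.2)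
  map_zero' := by ext <;> simp
  map_add' x y := by ext <;> simp <;> ring

section
variable {U : Type u} [AddCommGroup U] {C : Type w}

/-- An endomorphism with trivial kernel as an automorphism. -/
noncomputable def toEquiv [Finite U] (f : U →+ U) (h : ∀ x, f x = 0 → x = 0) : U ≃+ U :=
  AddEquiv.ofBijective f (Finite.injective_iff_bijective.1
    ((injective_iff_map_eq_zero f).2 h))

@[simp] lemma toEquiv_apply [Finite U] (f : U →+ U) (h : ∀ x, f x = 0 → x = 0) (x : U) :
    toEquiv f h x = f x := rfl

/-- Every pair with first member `a` is induced. -/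
def Good (a : U → C) : Prop :=
  ∀ (V : Type v) [AddCommGroup V] [Finite V] (b : V → C), Pair a b → Ind a b

lemma Good.of_comp {a : U → C} (T : U ≃+ U) (h : Good.{u, v, w} (a ∘ T)) : Good.{u, v, w} a :=
  fun V _ _ b P => Ind.of_comp T (h V b (P.comp T))

/-- Single elements as atoms. -/
def sing (x : U) : List U := [x]

lemma atoms_sing {A : List U} (a : U → C) (hA : ∀ x, x ≠ 0 → x ∈ A) (hA' : 0 ∉ A) :
    Atoms sing A a where
  nodup u _ := List.nodup_singleton u
  disj u _ v _ x h h' := (List.mem_singleton.1 h).symm.trans (List.mem_singleton.1 h')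
  mem u _ := List.mem_singleton_self u
  cover v hv := ⟨v, hA v hv, List.mem_singleton_self v⟩
  zero u hu h := hA' (List.mem_singleton.1 h ▸ hu)
  col u _ v hv := by rw [List.mem_singleton.1 hv]

/-- The images of standard patterns under endomorphisms. -/
def frames {M : Type} (lin : M → U →+ U) (std : List (Pat U)) (Fs : List (ℕ × M)) : List (Pat U) :=
  Fs.map fun f => (std.getD f.1 (Pat.full [])).map (lin f.2)

lemma of_frames [Finite U] {M : Type} {lin : M → U →+ U} {std : List (Pat U)} {Fs : List (ℕ × M)}
    (hi : ∀ f ∈ Fs, f.1 < std.length ∧ ∀ x, lin f.2 x = 0 → x = 0) {a : U → C}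
    (h : ∃ F ∈ frames lin std Fs, F.Holds a) :
    ∃ F ∈ std, ∃ T : U ≃+ U, F.Holds (a ∘ T) := by
  obtain ⟨F, hF, h⟩ := h
  obtain ⟨f, hf, rfl⟩ := List.mem_map.1 hF
  obtain ⟨h1, h2⟩ := hi f hf
  rw [List.getD_eq_getElem _ _ h1] at h
  exact ⟨_, List.getElem_mem h1, toEquiv (lin f.2) h2, h.comp (toEquiv (lin f.2) h2).injective⟩

/-- The search over all partitions of the nonzero elements. -/
lemma search_all [Finite U] {D : Codec U} (hc : Nat.card U < 31) {A : List U} (hA : ∀ x, x ≠ 0 → x ∈ A)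
    (hA' : 0 ∉ A) (hn : A.Nodup) {Fs : List (Pat U)} (hF : ∀ F ∈ Fs, F.Ok)
    (h : runGo D sing Fs (fun _ => true) [A] = true) {a : U → C} (P : Pair a a) :
    ∃ F ∈ Fs, F.Holds a :=
  runGo_sound (atoms_sing a hA hA') P hc hF (fun _ _ => rfl) (by simpa using hn)
    (by
      simp only [List.mem_singleton, forall_eq]
      exact fun u _ v h _ => h)
    (by simp) h

/-- Read off a closed set. -/
lemma Pat.Holds.closed {F : Pat U} {a : U → C} (h : F.Holds a) (P : Pair a a) {A : List U}
    (hA : ∀ x, x ≠ 0 → x ∈ A) {f : U → Prop} [DecidablePred f]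
    (hl : (A.filter fun x => f x) ∈ F.cl) (x y : U) (e : a x = a y) (hx : f x) : f y := by
  by_cases hx0 : x = 0
  · subst hx0
    rwa [P.eq_zero e.symm]
  · have := h.1 _ hl x (List.mem_filter.2 ⟨hA x hx0, decide_eq_true hx⟩) y e.symm
    simpa using (List.mem_filter.1 this).2

/-- Read off a monochromatic set. -/
lemma Pat.Holds.mono' {F : Pat U} {a : U → C} (h : F.Holds a) {A : List U}
    (hA : ∀ x, x ≠ 0 → x ∈ A) {f : U → Prop} [DecidablePred f] (f0 : ¬ f 0)
    (hl : (A.filter fun x => f x) ∈ F.mono) (x y : U) (hx : f x) (hy : f y) : a x = a y := by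
  have hm : ∀ z, f z → z ∈ A.filter fun x => f x := fun z hz =>
    List.mem_filter.2 ⟨hA z fun e => f0 (e ▸ hz), decide_eq_true hz⟩
  exact h.2 _ hl x (hm x hx) y (hm y hy)

end

end SepProof

/-! ### The standard decomposable patterns, and the groups of order four, eight and nine -/

namespace SepProof

universe u v w

/-- The nonzero elements. -/
def nz2 (p : ℕ) : List (E2 p) :=
  ((List.range p).flatMap fun i => (List.range p).map fun j => ((i : ZMod p), (j : ZMod p))).tail

def nz3 (p : ℕ) : List (E3 p) :=
  ((List.range p).flatMap fun i => (List.range p).flatMap fun j => (List.range p).map fun k =>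
    ((i : ZMod p), (j : ZMod p), (k : ZMod p))).tail

/-- The standard patterns of rank two: a tensor product, a wreath product, the trivial S-ring, and
a partition of the nonzero elements into the two axes and the rest. -/
def std2 (p : ℕ) : List (Pat (E2 p)) :=
  [⟨[(nz2 p).filter fun x => x.2 = 0, (nz2 p).filter fun x => x.1 = 0], []⟩,
    ⟨[(nz2 p).filter fun x => x.1 = 0],
      ((List.range p).tail.map fun i : ℕ => (nz2 p).filter fun x => x.1 = (i : ZMod p))⟩,
    ⟨[], [(nz2 p).filter fun x => x ≠ 0]⟩,
    Pat.full [(nz2 p).filter fun x => x.1 = 0 ∨ x.2 = 0, (nz2 p).filter fun x => x.1 ≠ 0 ∧ x.2 ≠ 0]]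

/-- The decomposable standard patterns of rank three: a tensor product, wreath products with a
plane or a line, a generalized wreath product, and the trivial S-ring. -/
def std3 (p : ℕ) : List (Pat (E3 p)) :=
  [⟨[(nz3 p).filter fun x => x.2 = 0, (nz3 p).filter fun x => x.1 = 0], []⟩,
    ⟨[(nz3 p).filter fun x => x.1 = 0],
      ((List.range p).tail.map fun i : ℕ => (nz3 p).filter fun x => x.1 = (i : ZMod p))⟩,
    ⟨[(nz3 p).filter fun x => x.2 = 0], (nz2 p).map fun q => (nz3 p).filter fun x => x.2 = q⟩,
    ⟨[(nz3 p).filter fun x => x.2 = 0, (nz3 p).filter fun x => x.1 = 0 ∧ x.2.2 = 0],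
      ((nz2 p).filter fun q => q.2 ≠ 0).map fun q => (nz3 p).filter fun x => x.2 = q⟩,
    ⟨[], [(nz3 p).filter fun x => x ≠ 0]⟩]

lemma mem_nz2 {p : ℕ} (hp : p = 2 ∨ p = 3) : ∀ x : E2 p, x ≠ 0 → x ∈ nz2 p := by
  rcases hp with rfl | rfl <;> decide +kernel

lemma mem_nz3 {p : ℕ} (hp : p = 2 ∨ p = 3) : ∀ x : E3 p, x ≠ 0 → x ∈ nz3 p := by
  rcases hp with rfl | rfl <;> decide +kernel

lemma mem_range_tail {p : ℕ} (hp : p = 2 ∨ p = 3) :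
    ∀ c : ZMod p, c ≠ 0 → ∃ i ∈ (List.range p).tail, (i : ZMod p) = c := by
  rcases hp with rfl | rfl <;> decide +kernel

section
variable {p : ℕ} {C : Type w}

lemma good_std2 (hp : p = 2 ∨ p = 3) {a : E2 p → C} (P : Pair a a) {F : Pat (E2 p)}
    (hF : F ∈ (std2 p).take 3) (h : F.Holds a) : Good.{0, v, w} a := by
  intro V _ _ b Q
  have hA := mem_nz2 hp
  simp only [std2, List.take_succ_cons, List.take_zero, List.mem_cons, List.not_mem_nil,
    or_false] at hF
  rcases hF with rfl | rfl | rfl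
  · exact Q.ind_prod_tensor (sep_zmod hp) hp (h.closed P hA (by simp))
      (h.closed P hA (by simp))
  · refine Q.ind_prod_wreath_inr (sep_zmod hp) hp (h.closed P hA (by simp)) fun x m hx => ?_
    obtain ⟨i, hi, e⟩ := mem_range_tail hp x.1 hx
    exact h.mono' hA (f := fun x => x.1 = (i : ZMod p)) (by simpa [e] using hx.symm)
      (List.mem_map.2 ⟨i, hi, rfl⟩) _ _ (by simp [e]) e.symm
  · exact Q.ind_trivial fun x y hx hy =>
      h.mono' hA (f := fun x => x ≠ 0) (by simp) (by simp) x y hx hy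

lemma good_std3 (hp : p = 2 ∨ p = 3) (hR : Sep.{0, v, w} (E2 p)) {a : E3 p → C} (P : Pair a a)
    {F : Pat (E3 p)} (hF : F ∈ std3 p) (h : F.Holds a) : Good.{0, v, w} a := by
  intro V _ _ b Q
  have hA := mem_nz3 hp
  simp only [std3, List.mem_cons, List.not_mem_nil, or_false] at hF
  rcases hF with rfl | rfl | rfl | rfl | rfl
  · exact Q.ind_prod_tensor hR hp (h.closed P hA (by simp)) (h.closed P hA (by simp))
  · refine Q.ind_prod_wreath_inr hR hp (h.closed P hA (by simp)) fun x m hx => ?_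
    obtain ⟨i, hi, e⟩ := mem_range_tail hp x.1 hx
    exact h.mono' hA (f := fun x => x.1 = (i : ZMod p)) (by simpa [e] using hx.symm)
      (List.mem_map.2 ⟨i, hi, rfl⟩) _ _ (by simp [e]) e.symm
  · refine Q.ind_prod_wreath_inl hR hp (h.closed P hA (by simp)) fun x m hx => ?_
    exact h.mono' hA (f := fun y => y.2 = x.2) (by simpa using hx.symm)
      (List.mem_map.2 ⟨x.2, mem_nz2 hp _ hx, rfl⟩) _ _ (by simp) rfl
  · refine Q.ind_prod_wreath' hp hR (h.closed P hA (by simp))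
      (h.closed P hA (f := fun x => x.1 = 0 ∧ x.2.2 = 0) (by simp)) fun x m hx => ?_
    have hx' : x.2 ≠ 0 := fun e => hx (congrArg Prod.snd e)
    exact h.mono' hA (f := fun y => y.2 = x.2) (by simpa using hx'.symm)
      (List.mem_map.2 ⟨x.2, List.mem_filter.2 ⟨mem_nz2 hp _ hx', by simpa using hx⟩, rfl⟩) _ _
      (by simp) rfl
  · exact Q.ind_trivial fun x y hx hy =>
      h.mono' hA (f := fun x => x ≠ 0) (by simp) (by simp) x y hx hy

end

/-- Indices of standard patterns, with bases to which they are moved, that suffice for the search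
over the group of order four. -/
def frames22 : List (ℕ × E2 2 × E2 2) :=
  [(0, ((0, 1), (1, 0))), (1, ((0, 1), (1, 0))), (1, ((0, 1), (1, 1))), (1, ((1, 0), (0, 1))),
   (2, ((0, 1), (1, 0)))]

/-- The analogue of `frames22` for the group of order nine. -/
def frames23 : List (ℕ × E2 3 × E2 3) :=
  [(0, ((0, 1), (1, 0))), (1, ((0, 1), (1, 0))), (1, ((0, 1), (1, 1))), (1, ((0, 1), (1, 2))),
   (1, ((1, 0), (0, 1))), (0, ((0, 1), (1, 1))), (0, ((0, 1), (1, 2))), (0, ((1, 0), (1, 1))),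
   (0, ((1, 0), (1, 2))), (0, ((1, 1), (1, 2))), (2, ((0, 1), (1, 0))), (3, ((0, 1), (1, 0))),
   (3, ((0, 1), (1, 1))), (3, ((0, 1), (1, 2)))]

/-- The analogue of `frames22` for the group of order eight. -/
def frames32 : List (ℕ × E3 2 × E3 2 × E3 2) :=
  [(0, ((0, 0, 1), (0, 1, 0), (1, 0, 0))), (1, ((0, 0, 1), (0, 1, 0), (1, 0, 0))),
   (1, ((0, 0, 1), (0, 1, 0), (1, 0, 1))), (1, ((0, 0, 1), (0, 1, 1), (1, 0, 0))),
   (1, ((0, 0, 1), (0, 1, 1), (1, 0, 1))), (1, ((0, 1, 0), (0, 0, 1), (1, 0, 0))),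
   (1, ((0, 1, 0), (0, 0, 1), (1, 1, 0))), (1, ((1, 0, 0), (0, 0, 1), (0, 1, 0))),
   (0, ((0, 1, 0), (0, 0, 1), (1, 0, 0))), (0, ((1, 0, 0), (0, 0, 1), (0, 1, 0))),
   (0, ((0, 0, 1), (0, 1, 0), (1, 0, 1))), (0, ((0, 1, 0), (0, 0, 1), (1, 1, 0))),
   (0, ((0, 1, 1), (0, 0, 1), (1, 0, 0))), (0, ((0, 1, 1), (0, 0, 1), (1, 1, 0))),
   (0, ((1, 0, 1), (0, 0, 1), (0, 1, 0))), (0, ((0, 0, 1), (0, 1, 1), (1, 0, 0))),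
   (0, ((1, 1, 0), (0, 0, 1), (0, 1, 0))), (2, ((0, 0, 1), (0, 1, 0), (1, 0, 0))),
   (2, ((0, 1, 0), (0, 0, 1), (1, 0, 0))), (2, ((0, 1, 1), (0, 0, 1), (1, 0, 0))),
   (2, ((1, 0, 0), (0, 0, 1), (0, 1, 0))), (2, ((1, 0, 1), (0, 0, 1), (0, 1, 0))),
   (2, ((1, 1, 0), (0, 0, 1), (0, 1, 0))), (2, ((1, 1, 1), (0, 0, 1), (0, 1, 0))),
   (0, ((0, 0, 1), (0, 1, 1), (1, 0, 1))), (0, ((0, 1, 0), (0, 1, 1), (1, 0, 0))),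
   (0, ((0, 1, 0), (0, 1, 1), (1, 0, 1))), (0, ((0, 1, 1), (0, 1, 0), (1, 0, 0))),
   (0, ((0, 1, 1), (0, 1, 0), (1, 0, 1))), (0, ((1, 0, 0), (0, 0, 1), (1, 1, 0))),
   (0, ((1, 0, 0), (0, 1, 0), (1, 0, 1))), (0, ((1, 0, 0), (0, 1, 1), (1, 0, 1))),
   (0, ((1, 0, 1), (0, 0, 1), (1, 1, 0))), (0, ((1, 0, 1), (0, 1, 0), (1, 0, 0))),
   (0, ((1, 0, 1), (0, 1, 1), (1, 0, 0))), (0, ((1, 1, 0), (0, 0, 1), (1, 0, 0))),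
   (0, ((1, 1, 0), (0, 1, 0), (1, 0, 1))), (0, ((1, 1, 0), (0, 1, 1), (1, 0, 0))),
   (0, ((1, 1, 1), (0, 0, 1), (0, 1, 0))), (0, ((1, 1, 1), (0, 0, 1), (1, 0, 0))),
   (0, ((1, 1, 1), (0, 1, 0), (1, 0, 0))), (0, ((1, 1, 1), (0, 1, 1), (1, 0, 1))),
   (4, ((0, 0, 1), (0, 1, 0), (1, 0, 0)))]

lemma sep_E22 : Sep.{0, v, w} (E2 2) := by
  intro V _ _ C a b Q
  have P : Pair a a := Pair.refl Q
  obtain ⟨F, hF, T, h⟩ := of_frames (lin := lin2) (Fs := frames22) (std := (std2 2).take 3)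
    (by decide +kernel) (search_all (D := D22) (by simp) (mem_nz2 (.inl rfl)) (by decide)
      (by decide) (by decide +kernel) (by decide +kernel) P)
  exact (good_std2 (.inl rfl) (P.comp T).refl hF h).of_comp T V b Q

lemma sep_E32 : Sep.{0, v, w} (E3 2) := by
  intro V _ _ C a b Q
  have P : Pair a a := Pair.refl Q
  obtain ⟨F, hF, T, h⟩ := of_frames (lin := lin3) (Fs := frames32) (std := std3 2)
    (by decide +kernel) (search_all (D := D32) (by simp) (mem_nz3 (.inl rfl)) (by decide)
      (by decide) (by decide +kernel) (by decide +kernel) P)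
  exact (good_std3 (.inl rfl) sep_E22 (P.comp T).refl hF h).of_comp T V b Q

lemma class_E23 {C : Type w} {a : E2 3 → C} (P : Pair a a) :
    ∃ F ∈ std2 3, ∃ T : E2 3 ≃+ E2 3, F.Holds (a ∘ T) :=
  of_frames (lin := lin2) (Fs := frames23) (by decide +kernel)
    (search_all (D := D23) (by simp) (mem_nz2 (.inr rfl)) (by decide) (by decide)
      (by decide +kernel) (by decide +kernel) P)

end SepProof

/-! ### Matching two patterns -/

namespace SepProof

universe u v w

/-- Compare the count of the first two classes at the third class for two triples. -/
def cntE (X Y Z X' Y' Z' : Cl) : Bool :=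
  match Z.mem, Z'.mem with
  | z :: _, z' :: _ => Nat.beq (cnt X.r Y.e z) (cnt X'.r Y'.e z')
  | _, _ => true

/-- The two classes may correspond, as far as sizes and counts with the correspondence `d` of
classes can tell. -/
def compat (X X' : Cl) (d : List (Cl × List ℕ × Cl)) : Bool :=
  bAnd (Nat.beq X.mem.length X'.mem.length) <|
    d.all fun y => bAnd (cntE X y.1 X X' y.2.2 X') <| d.all fun z =>
      bAnd (cntE X y.1 z.1 X' y.2.2 z.2.2) (cntE y.1 z.1 X y.2.2 z.2.2 X')

/-- Run through the correspondences between the classes of two partitions. -/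
def mt (leaf : List (Cl × List ℕ × Cl) → Bool) :
    List (Cl × List ℕ) → List Cl → List (Cl × List ℕ × Cl) → Bool
  | [], _, d => leaf d
  | X :: t, cs, d => cs.all fun X' =>
      bImp (compat X.1 X' ((X.1, X.2, X') :: d)) (mt leaf t cs ((X.1, X.2, X') :: d))

/-- One of the first `n` listed images of each class is contained in the corresponding class. -/
def mtLeaf (n : ℕ) (d : List (Cl × List ℕ × Cl)) : Bool :=
  (List.range n).any fun i => d.all fun x => Nat.beq (x.2.1.getD i 0) x.2.2.r

section
variable {U : Type u} {C : Type w} {A : List U} {a : U → C}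

lemma flatMap_sing (q : List U) : q.flatMap sing = q := List.flatMap_singleton' q

lemma isCl_of_full {c : List (List U)} (h : (Pat.full c).Holds a)
    (hs : ∀ q ∈ c, q ≠ [] ∧ q.Nodup ∧ ∀ x ∈ q, x ∈ A) {q : List U} (hq : q ∈ c) :
    IsCl A a q where
  ne := (hs q hq).1
  sub := (hs q hq).2.2
  nodup := (hs q hq).2.1
  iff u hu v _ := ⟨fun hv => h.2 q hq v hv u hu, fun e => h.1 q hq u hu v e⟩

/-- The index of the part that contains an element. -/
def partOf [DecidableEq U] (c : List (List U)) (x : U) : ℕ := c.findIdx fun q => x ∈ q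

lemma partOf_eq [DecidableEq U] {c : List (List U)} (h : (Pat.full c).Holds a) {x y : U}
    (e : a x = a y) : partOf c x = partOf c y := by
  unfold partOf
  have : ∀ q ∈ c, (decide (x ∈ q)) = decide (y ∈ q) := fun q hq =>
    decide_eq_decide.2 ⟨fun hx => h.1 q hq x hx y e.symm, fun hy => h.1 q hq y hy x e⟩
  clear h
  induction c with
  | nil => rfl
  | cons q t ih =>
    rw [List.findIdx_cons, List.findIdx_cons, this q (by simp),
      ih fun q hq => this q (List.mem_cons_of_mem _ hq)]

end

section
variable {U : Type u} [AddCommGroup U] {C : Type w} (D : Codec U)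

/-- The packed images of a set. -/
def ims (Ts : List (U → U)) (q : List U) : List ℕ := Ts.map fun T => D.mask (q.map T)

def clsIms (Ts : List (U → U)) : List (List U) → (List (Cl × List ℕ) → Bool) → Bool
  | [], k => k []
  | q :: t, k => D.cls sing [q] fun X => forceList (ims D Ts q) fun l =>
      clsIms Ts t fun ls => X.all fun X => k ((X, l) :: ls)

lemma clsIms_eq (Ts : List (U → U)) (c : List (List U)) :
    ∀ k, clsIms D Ts c k = k (c.map fun q => (D.clOf sing q, ims D Ts q)) := by
  induction c with
  | nil => exact fun k => rfl
  | cons q t ih => exact fun k => by rw [clsIms, D.cls_eq, forceList_eq, ih]; simp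

/-- Every correspondence of the classes of two partitions that respects the counts comes from one
of the maps in the list. -/
def runMatch (Ts : List (U → U)) (c c' : List (List U)) : Bool :=
  clsIms D Ts c fun cs => D.cls sing c' fun cs' => mt (mtLeaf Ts.length) cs cs' []

variable {D}

variable {A : List U} {a b : U → C}

/-- The second class has the same colour as the first one. -/
structure Corr (A : List U) (a b : U → C) (q q' : List U) : Prop where
  left : IsCl A a q
  right : IsCl A b q'
  col : ∀ x ∈ q, ∀ x' ∈ q', a x = b x'

lemma Corr.cntE [Finite U] (hc : Nat.card U < 31) (hA : Atoms sing A a) (hA' : Atoms sing A b)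
    (P : Pair a b) {X X' Y Y' Z Z' : List U} (hX : Corr A a b X X') (hY : Corr A a b Y Y')
    (hZ : Corr A a b Z Z') :
    cntE (D.clOf sing X) (D.clOf sing Y) (D.clOf sing Z) (D.clOf sing X') (D.clOf sing Y')
      (D.clOf sing Z') = true := by
  obtain ⟨x, hx⟩ := List.exists_mem_of_ne_nil _ hX.left.ne
  obtain ⟨x', hx'⟩ := List.exists_mem_of_ne_nil _ hX.right.ne
  obtain ⟨y, hy⟩ := List.exists_mem_of_ne_nil _ hY.left.ne
  obtain ⟨y', hy'⟩ := List.exists_mem_of_ne_nil _ hY.right.ne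
  obtain ⟨z, t, rfl⟩ := List.exists_cons_of_ne_nil hZ.left.ne
  obtain ⟨z', t', rfl⟩ := List.exists_cons_of_ne_nil hZ.right.ne
  have h1 := hX.left.cnt_eq (D := D) hA P.refl hc hY.left hx hy z
  have h2 := hX.right.cnt_eq (D := D) hA' P.symm.refl hc hY.right hx' hy' z'
  have h3 := P.count (hZ.col z (by simp) z' (by simp)) fun c d => c = a x ∧ d = a y
  rw [hX.col x hx x' hx', hY.col y hy y' hy', ← h2, ← hX.col x hx x' hx',
    ← hY.col y hy y' hy', ← h1] at h3
  rw [← Nat.beq_eq] at h3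
  exact h3

lemma IsCl.length [Finite U] (hA : Atoms sing A a) (P : Pair a a) {q : List U} (h : IsCl A a q)
    {x : U} (hx : x ∈ q) : q.length = Nat.card {u // a u = a x} := by
  classical
  have := Fintype.ofFinite U
  rw [← List.toFinset_card_of_nodup h.nodup, Nat.card_eq_fintype_card, Fintype.card_subtype]
  congr 1
  ext u
  have := h.mem_iff hA P hx u
  rw [flatMap_sing] at this
  simp [this]

lemma compat_true [Finite U] (hc : Nat.card U < 31) (hA : Atoms sing A a) (hA' : Atoms sing A b)
    (P : Pair a b) {Ts : List (U → U)} {X X' : List U} (hX : Corr A a b X X')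
    {d : List (List U × List U)} (hd : ∀ x ∈ d, Corr A a b x.1 x.2) :
    compat (D.clOf sing X) (D.clOf sing X')
      (d.map fun x => (D.clOf sing x.1, ims D Ts x.1, D.clOf sing x.2)) = true := by
  obtain ⟨x, hx⟩ := List.exists_mem_of_ne_nil _ hX.left.ne
  obtain ⟨k, hk⟩ := List.exists_mem_of_ne_nil _ hX.right.ne
  rw [compat, bAnd_eq]
  constructor
  · rw [Nat.beq_eq]
    simp only [Codec.clOf, List.length_map]
    rw [hX.left.length hA P.refl hx, hX.right.length hA' P.symm.refl hk, ← hX.col x hx k hk]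
    exact P.count1 fun c => c = a x
  · simp only [List.all_eq_true, bAnd_eq, List.forall_mem_map]
    exact fun y hy => ⟨hX.cntE hc hA hA' P (hd y hy) hX, fun z hz =>
      ⟨hX.cntE hc hA hA' P (hd y hy) (hd z hz), (hd y hy).cntE hc hA hA' P (hd z hz) hX⟩⟩

lemma mt_sound [Finite U] (hc : Nat.card U < 31) (hA : Atoms sing A a) (hA' : Atoms sing A b)
    (P : Pair a b) {leaf : List (Cl × List ℕ × Cl) → Bool} {Ts : List (U → U)}
    {c' : List (List U)} (h' : ∀ q' ∈ c', IsCl A b q') (hcov : ∀ x ∈ A, ∃ q' ∈ c', x ∈ q')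
    (hA0 : ∀ x, x ≠ 0 → x ∈ A) (hA0' : 0 ∉ A) :
    ∀ (t : List (List U)) (d : List (List U × List U)), (∀ q ∈ t, IsCl A a q) →
      (∀ x ∈ d, Corr A a b x.1 x.2) →
      mt leaf (t.map fun q => (D.clOf sing q, ims D Ts q)) (c'.map (D.clOf sing))
        (d.map fun x => (D.clOf sing x.1, ims D Ts x.1, D.clOf sing x.2)) = true →
      ∃ d' : List (List U × List U), (∀ x ∈ d', Corr A a b x.1 x.2) ∧
        (∀ q, q ∈ t ∨ (∃ q', (q, q') ∈ d) → ∃ q', (q, q') ∈ d') ∧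
        leaf (d'.map fun x => (D.clOf sing x.1, ims D Ts x.1, D.clOf sing x.2)) = true := by
  intro t
  induction t with
  | nil => exact fun d _ hd h => ⟨d, hd, by simp, h⟩
  | cons X t ih =>
    intro d hq hd h
    obtain ⟨hX, ht⟩ := List.forall_mem_cons.1 hq
    obtain ⟨x, hx⟩ := List.exists_mem_of_ne_nil _ hX.ne
    obtain ⟨k, hk⟩ := P.surj x
    have hk0 : k ≠ 0 := fun e =>
      (fun e' : x ≠ 0 => e' ((P.zero_iff hk.symm).2 e)) fun e' => hA0' (e' ▸ hX.sub x hx)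
    obtain ⟨X', hX', hkX⟩ := hcov k (hA0 k hk0)
    have hXX : Corr A a b X X' := ⟨hX, h' X' hX', fun y hy y' hy' => by
      rw [(hX.iff x hx y (hX.sub y hy)).1 hy, ← hk,
        ((h' X' hX').iff k hkX y' ((h' X' hX').sub y' hy')).1 hy']⟩
    have hd' : ∀ z ∈ (X, X') :: d, Corr A a b z.1 z.2 := List.forall_mem_cons.2 ⟨hXX, hd⟩
    rw [List.map_cons, mt, List.all_eq_true] at h
    have h1 := bImp_eq.1 (h _ (List.mem_map_of_mem hX')) (compat_true hc hA hA' P hXX hd')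
    obtain ⟨d', h2, h3, h4⟩ := ih ((X, X') :: d) ht hd' h1
    refine ⟨d', h2, fun q hq => h3 q ?_, h4⟩
    rcases hq with hq | ⟨q', hq⟩
    · rcases List.mem_cons.1 hq with rfl | hq
      · exact .inr ⟨X', by simp⟩
      · exact .inl hq
    · exact .inr ⟨q', by simp [hq]⟩

/-- The sets are nonempty, without repetition, and cover the list. -/
def Parts (A : List U) (c : List (List U)) : Prop :=
  (∀ q ∈ c, q ≠ [] ∧ q.Nodup ∧ ∀ x ∈ q, x ∈ A) ∧ ∀ x ∈ A, ∃ q ∈ c, x ∈ q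

instance [DecidableEq U] (A : List U) (c : List (List U)) : Decidable (Parts A c) := by
  unfold Parts; infer_instance

lemma runMatch_sound [Finite U] (hc : Nat.card U < 31) (hA0 : ∀ x, x ≠ 0 → x ∈ A) (hA0' : 0 ∉ A)
    (P : Pair a b) {Ts : List (U → U)} (hT : ∀ T ∈ Ts, ∃ f : U →+ U, T = f ∧ Function.Injective f)
    {c c' : List (List U)} (hp : Parts A c) (hp' : Parts A c') (h : (Pat.full c).Holds a)
    (h' : (Pat.full c').Holds b) (hr : runMatch D Ts c c' = true) : Ind a b := by
  rw [runMatch, clsIms_eq, D.cls_eq] at hr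
  have hq' : ∀ q' ∈ c', IsCl A b q' := fun q hq => isCl_of_full h' hp'.1 hq
  obtain ⟨d, h1, h2, h3⟩ := mt_sound hc (atoms_sing a hA0 hA0') (atoms_sing b hA0 hA0') P
    hq' hp'.2 hA0 hA0' c [] (fun q hq => isCl_of_full h hp.1 hq) (by simp) hr
  rw [mtLeaf, List.any_eq_true] at h3
  obtain ⟨i, hi, h3⟩ := h3
  rw [List.mem_range] at hi
  obtain ⟨f, hf, hinj⟩ := hT _ (List.getElem_mem hi)
  simp only [List.all_map, List.all_eq_true, Function.comp, Nat.beq_eq, D.clOf_r_mask] at h3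
  have hf0 : ∀ x, b (f x) = a x := by
    intro x
    by_cases hx : x = 0
    · rw [hx, map_zero, P.zero]
    obtain ⟨q, hq, hxq⟩ := hp.2 x (hA0 x hx)
    obtain ⟨q', hd⟩ := h2 q (.inl hq)
    have hcor := h1 _ hd
    have h4 := h3 _ hd
    simp only [ims] at h4
    rw [List.getD_eq_getElem _ _ (by simpa using hi), List.getElem_map, hf] at h4
    rw [flatMap_sing] at h4
    refine (hcor.col x hxq (f x) ?_).symm
    refine Codec.land_mask (D := D) hcor.right.nodup
      (m := q.map f) ((List.nodup_map_iff hinj).2 hcor.left.nodup) ?_ (List.mem_map_of_mem hxq)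
    rw [h4]
    exact Nat.and_self _
  refine ⟨Equiv.ofBijective f (Finite.injective_iff_bijective.1 hinj), fun x y => ?_⟩
  rw [Equiv.ofBijective_apply, Equiv.ofBijective_apply, ← map_sub, hf0]

/-- Every translation by a nonzero element moves more than a third of the elements to another
part. -/
def Few [DecidableEq U] (A : List U) (c : List (List U)) : Prop :=
  ∀ u ∈ A, 3 * ((0 :: A).countP fun x => partOf c x == partOf c (x - u)) < 2 * (A.length + 1)

instance [DecidableEq U] (A : List U) (c : List (List U)) : Decidable (Few A c) := by
  unfold Few; infer_instance

lemma Few.few [DecidableEq U] [Finite U] (hA0 : ∀ x, x ≠ 0 → x ∈ A) (hA0' : 0 ∉ A)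
    (hn : A.Nodup) {c : List (List U)} (h : (Pat.full c).Holds a) (hf : Few A c) (u : U)
    (hu : u ≠ 0) : 3 * Nat.card {x // a x = a (x - u)} < 2 * Nat.card U := by
  classical
  have := Fintype.ofFinite U
  have hn' : (0 :: A).Nodup := List.nodup_cons.2 ⟨hA0', hn⟩
  have hall : ∀ x, x ∈ (0 :: A) := fun x => by
    by_cases hx : x = 0
    · simp [hx]
    · exact List.mem_cons_of_mem _ (hA0 x hx)
  have h1 : Nat.card U = A.length + 1 := by
    rw [← List.length_cons (a := 0), ← List.toFinset_card_of_nodup hn',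
      Nat.card_eq_fintype_card, ← Finset.card_univ]
    congr 1
    ext x
    simp only [Finset.mem_univ, List.mem_toFinset, hall]
  have h2 : Nat.card {x // a x = a (x - u)} ≤
      (0 :: A).countP fun x => partOf c x == partOf c (x - u) := by
    rw [Nat.card_eq_fintype_card, Fintype.card_subtype, List.countP_eq_length_filter,
      ← List.toFinset_card_of_nodup (hn'.filter _)]
    refine Finset.card_le_card fun x hx => ?_
    rw [List.mem_toFinset, List.mem_filter]
    exact ⟨hall x, beq_iff_eq.2 (partOf_eq h (Finset.mem_filter.1 hx).2)⟩
  have := hf u (hA0 u hu)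
  omega

/-- If every colouring is good or has one of the special patterns, and every correspondence between
special patterns that preserves the structure constants is realized by one of the listed maps, then
the special patterns are good as well. -/
lemma good_special [DecidableEq U] [Finite U] (hU : ∀ x : U, 3 • x = 0)
    (hc : Nat.card U = 9 ∨ Nat.card U = 27) (hA0 : ∀ x, x ≠ 0 → x ∈ A) (hA0' : 0 ∉ A)
    (hn : A.Nodup) {sp : List (List (List U))}
    (hcl : ∀ b : U → C, Pair b b → Good.{u, u, w} b ∨
      ∃ c ∈ sp, ∃ T : U ≃+ U, (Pat.full c).Holds (b ∘ T))
    {Ts : List (U → U)} (hT : ∀ T ∈ Ts, ∃ f : U →+ U, T = f ∧ Function.Injective f)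
    (hsp : ∀ c ∈ sp, Parts A c ∧ Few A c) (hm : ∀ c ∈ sp, ∀ c' ∈ sp, runMatch D Ts c c' = true)
    {c : List (List U)} (hcs : c ∈ sp) (h : (Pat.full c).Holds a) : Good.{u, v, w} a := by
  intro V _ _ b P
  refine P.ind_of_elem hU hc (Few.few hA0 hA0' hn h (hsp c hcs).2) fun b P => ?_
  rcases hcl b P.symm.refl with hb | ⟨c', hc', T, h'⟩
  · exact (hb U a P.symm).symm
  · refine (Ind.of_comp T (Ind.symm ?_)).symm
    exact runMatch_sound (by omega) hA0 hA0' (P.symm.comp T).symm hT (hsp c hcs).1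
      (hsp c' hc').1 h h' (hm c hcs c' hc')

end

/-- The partition into the two axes and the rest. -/
def cross : List (List (E2 3)) := ((std2 3).getD 3 (Pat.full [])).cl

lemma class_E23' {C : Type w} {a : E2 3 → C} (P : Pair a a) : Good.{0, v, w} a ∨
    ∃ c ∈ [cross], ∃ T : E2 3 ≃+ E2 3, (Pat.full c).Holds (a ∘ T) := by
  obtain ⟨F, hF, T, h⟩ := class_E23 P
  have : std2 3 = (std2 3).take 3 ++ [Pat.full cross] := rfl
  rw [this, List.mem_append, List.mem_singleton] at hF
  rcases hF with hF | rfl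
  · exact .inl (Good.of_comp T (good_std2 (.inr rfl) (P.comp T).refl hF h))
  · exact .inr ⟨cross, by simp, T, h⟩

lemma sep_E23 : Sep.{0, v, w} (E2 3) := by
  intro V _ _ C a b P
  rcases class_E23' P.refl with h | ⟨c, hc, T, h⟩
  · exact h V b P
  · refine Good.of_comp T (good_special (D := D23) (A := nz2 3) (by decide) (by simp)
      (mem_nz2 (.inr rfl)) (by decide) (by decide) (fun b P => class_E23' P)
      (Ts := [((1, 0), (0, 1)), ((1, 1), (1, 2))].map fun v => ⇑(lin2 v)) ?_ (by decide +kernel)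
      (by decide +kernel) hc h) V b P
    intro T hT
    obtain ⟨v, hv, rfl⟩ := List.mem_map.1 hT
    refine ⟨_, rfl, (injective_iff_map_eq_zero _).2 ?_⟩
    revert v
    decide +kernel

end SepProof

/-! ### Symmetric S-rings of order twenty-seven -/

namespace SepProof

universe u v w

/-- Opposite pairs as atoms. -/
def pm {U : Type u} [AddCommGroup U] (x : U) : List U := [x, -x]

/-- One element of each opposite pair: the first nonzero coordinate is `1`. -/
def pts : List (E3 3) := (nz3 3).filter fun x =>
  x.1 = 1 ∨ (x.1 = 0 ∧ x.2.1 = 1) ∨ (x.1 = 0 ∧ x.2.1 = 0 ∧ x.2.2 = 1)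

/-- A line, the rest of a plane, and three parabolic cones. -/
def hParts : List (List (E3 3)) :=
  [(nz3 3).filter fun x => x.2 = 0, (nz3 3).filter fun x => x.2.1 ≠ 0 ∧ x.2.2 = 0] ++
    [0, 1, 2].map fun t : ZMod 3 =>
      (nz3 3).filter fun x => x.2.2 ≠ 0 ∧ x.1 * x.2.2 = x.2.1 ^ 2 + t

/-- The elements of Hamming weight one, two, and three, in terms of the sum of squares. -/
def kParts : List (List (E3 3)) :=
  [1, 2, 0].map fun t : ZMod 3 => (nz3 3).filter fun x => x.1 ^ 2 + x.2.1 ^ 2 + x.2.2 ^ 2 = t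

/-- The patterns of symmetric colourings. -/
def sstd : List (Pat (E3 3)) :=
  [⟨[(nz3 3).filter fun x => x.2 = 0, (nz3 3).filter fun x => x.1 = 0], []⟩,
    ⟨[(nz3 3).filter fun x => x.1 = 0], [(nz3 3).filter fun x => x.1 ≠ 0]⟩,
    ⟨[(nz3 3).filter fun x => x.2 = 0, (nz3 3).filter fun x => x.1 = 0 ∧ x.2.2 = 0],
      ((nz2 3).filter fun q => q.2 ≠ 0).map fun q => (nz3 3).filter fun x => x.2 = q⟩,
    Pat.full hParts, Pat.full kParts, ⟨[], [(nz3 3).filter fun x => x ≠ 0]⟩]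

/-- Indices in `sstd`, with bases, that suffice for symmetric colourings in which the first axis is
closed. -/
def framesI : List (ℕ × E3 3 × E3 3 × E3 3) :=
  [(0, ((1, 0, 0), (0, 0, 1), (0, 1, 0))), (0, ((1, 0, 0), (0, 1, 0), (1, 0, 1))),
   (0, ((1, 0, 0), (0, 1, 0), (1, 0, 2))), (2, ((1, 0, 0), (0, 1, 0), (0, 0, 1))),
   (2, ((1, 1, 0), (0, 1, 0), (0, 0, 1))), (2, ((1, 2, 0), (0, 1, 0), (0, 0, 1))),
   (3, ((1, 0, 0), (0, 0, 1), (0, 1, 0))), (3, ((1, 0, 0), (0, 0, 1), (0, 1, 1))),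
   (3, ((1, 0, 0), (0, 0, 1), (0, 1, 2))), (3, ((1, 0, 0), (0, 0, 1), (0, 2, 0))),
   (3, ((1, 0, 0), (0, 0, 1), (0, 2, 1))), (3, ((1, 0, 0), (0, 0, 1), (0, 2, 2))),
   (3, ((1, 0, 0), (0, 1, 1), (0, 0, 1))), (3, ((1, 0, 0), (0, 1, 1), (0, 0, 2))),
   (3, ((1, 0, 0), (0, 1, 1), (0, 1, 0))), (3, ((1, 0, 0), (0, 1, 1), (0, 1, 2))),
   (3, ((1, 0, 0), (0, 1, 1), (0, 2, 0))), (3, ((1, 0, 0), (0, 1, 1), (0, 2, 1))),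
   (3, ((1, 0, 0), (0, 1, 2), (0, 0, 1))), (3, ((1, 0, 0), (0, 1, 2), (0, 0, 2))),
   (3, ((1, 0, 0), (0, 1, 2), (0, 1, 0))), (3, ((1, 0, 0), (0, 1, 2), (0, 1, 1))),
   (3, ((1, 0, 0), (0, 1, 2), (0, 2, 0))), (3, ((1, 0, 0), (0, 1, 2), (0, 2, 2)))]

/-- Indices in `sstd`, with bases, that suffice for symmetric colourings without classes of size
two. -/
def framesN : List (ℕ × E3 3 × E3 3 × E3 3) :=
  [(1, ((0, 0, 1), (0, 1, 1), (1, 0, 1))), (1, ((0, 0, 1), (0, 1, 1), (1, 0, 2))),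
   (1, ((0, 0, 1), (0, 1, 2), (1, 0, 1))), (1, ((0, 0, 1), (0, 1, 2), (1, 0, 2))),
   (1, ((0, 1, 0), (0, 0, 1), (1, 1, 0))), (1, ((0, 1, 0), (0, 0, 1), (1, 2, 0))),
   (1, ((0, 0, 1), (0, 1, 0), (1, 0, 0))), (4, ((0, 0, 1), (0, 1, 0), (1, 0, 0))),
   (4, ((0, 0, 1), (0, 1, 1), (1, 0, 1))), (4, ((0, 0, 1), (0, 1, 1), (1, 0, 2))),
   (4, ((0, 0, 1), (0, 1, 1), (1, 1, 1))), (4, ((0, 0, 1), (0, 1, 1), (1, 2, 2))),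
   (4, ((0, 0, 1), (0, 1, 2), (1, 0, 1))), (4, ((0, 0, 1), (0, 1, 2), (1, 0, 2))),
   (4, ((0, 0, 1), (0, 1, 2), (1, 1, 2))), (4, ((0, 0, 1), (0, 1, 2), (1, 2, 1))),
   (4, ((0, 0, 1), (1, 0, 1), (1, 1, 1))), (4, ((0, 0, 1), (1, 0, 1), (1, 2, 1))),
   (4, ((0, 0, 1), (1, 0, 2), (1, 1, 2))), (4, ((0, 0, 1), (1, 0, 2), (1, 2, 2))),
   (4, ((0, 0, 1), (1, 1, 0), (1, 2, 0))), (4, ((0, 0, 1), (1, 1, 0), (1, 2, 1))),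
   (4, ((0, 0, 1), (1, 1, 0), (1, 2, 2))), (4, ((0, 0, 1), (1, 1, 1), (1, 2, 0))),
   (4, ((0, 0, 1), (1, 1, 2), (1, 2, 0))), (4, ((0, 1, 0), (0, 1, 1), (1, 0, 0))),
   (4, ((0, 1, 0), (0, 1, 2), (1, 0, 0))), (4, ((0, 1, 0), (1, 0, 0), (1, 0, 1))),
   (4, ((0, 1, 0), (1, 0, 0), (1, 0, 2))), (4, ((0, 1, 0), (1, 0, 0), (1, 1, 1))),
   (4, ((0, 1, 0), (1, 0, 0), (1, 1, 2))), (4, ((0, 1, 0), (1, 0, 0), (1, 2, 1))),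
   (4, ((0, 1, 0), (1, 0, 0), (1, 2, 2))), (4, ((0, 1, 1), (0, 1, 2), (1, 1, 1))),
   (4, ((0, 1, 1), (0, 1, 2), (1, 1, 2))), (4, ((0, 1, 1), (0, 1, 2), (1, 2, 1))),
   (4, ((0, 1, 1), (0, 1, 2), (1, 2, 2))), (4, ((0, 1, 1), (1, 0, 1), (1, 1, 0))),
   (4, ((0, 1, 1), (1, 0, 1), (1, 1, 1))), (4, ((0, 1, 1), (1, 0, 2), (1, 2, 0))),
   (4, ((0, 1, 1), (1, 0, 2), (1, 2, 2))), (4, ((0, 1, 1), (1, 1, 0), (1, 1, 2))),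
   (4, ((0, 1, 1), (1, 1, 0), (1, 2, 0))), (4, ((0, 1, 1), (1, 1, 1), (1, 2, 1))),
   (4, ((0, 1, 1), (1, 1, 2), (1, 2, 2))), (4, ((0, 1, 1), (1, 2, 0), (1, 2, 1))),
   (4, ((0, 1, 2), (1, 0, 1), (1, 2, 0))), (4, ((0, 1, 2), (1, 0, 1), (1, 2, 1))),
   (4, ((0, 1, 2), (1, 0, 2), (1, 1, 0))), (4, ((0, 1, 2), (1, 0, 2), (1, 1, 2))),
   (4, ((0, 1, 2), (1, 1, 0), (1, 1, 1))), (4, ((0, 1, 2), (1, 1, 0), (1, 2, 0))),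
   (4, ((0, 1, 2), (1, 1, 1), (1, 2, 1))), (4, ((0, 1, 2), (1, 1, 2), (1, 2, 2))),
   (4, ((0, 1, 2), (1, 2, 0), (1, 2, 2))), (4, ((1, 0, 1), (1, 0, 2), (1, 1, 1))),
   (4, ((1, 0, 1), (1, 0, 2), (1, 1, 2))), (4, ((1, 0, 1), (1, 0, 2), (1, 2, 1))),
   (4, ((1, 0, 1), (1, 0, 2), (1, 2, 2))), (4, ((1, 0, 1), (1, 1, 0), (1, 1, 2))),
   (4, ((1, 0, 1), (1, 1, 0), (1, 2, 0))), (4, ((1, 0, 1), (1, 1, 1), (1, 2, 2))),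
   (4, ((1, 0, 1), (1, 1, 2), (1, 2, 1))), (4, ((1, 0, 1), (1, 2, 0), (1, 2, 2))),
   (4, ((1, 0, 2), (1, 1, 0), (1, 1, 1))), (4, ((1, 0, 2), (1, 1, 0), (1, 2, 0))),
   (4, ((1, 0, 2), (1, 1, 1), (1, 2, 2))), (4, ((1, 0, 2), (1, 1, 2), (1, 2, 1))),
   (4, ((1, 0, 2), (1, 2, 0), (1, 2, 1))), (4, ((1, 1, 0), (1, 1, 1), (1, 2, 0))),
   (4, ((1, 1, 0), (1, 1, 2), (1, 2, 0))), (4, ((1, 1, 0), (1, 2, 0), (1, 2, 1))),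
   (4, ((1, 1, 0), (1, 2, 0), (1, 2, 2))), (4, ((1, 1, 0), (1, 2, 1), (1, 2, 2))),
   (4, ((1, 1, 1), (1, 1, 2), (1, 2, 0))), (4, ((1, 1, 1), (1, 1, 2), (1, 2, 1))),
   (4, ((1, 1, 1), (1, 1, 2), (1, 2, 2))), (4, ((1, 1, 1), (1, 2, 1), (1, 2, 2))),
   (4, ((1, 1, 2), (1, 2, 1), (1, 2, 2))), (5, ((0, 0, 1), (0, 1, 0), (1, 0, 0)))]

section
variable {C : Type w} {a : E3 3 → C}

lemma sym_comp (T : E3 3 ≃+ E3 3) : sym (a ∘ T) = sym a ∘ T := by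
  funext x
  simp [sym]

lemma neg_mem_pts : ∀ x : E3 3, x ≠ 0 → x ∈ pts ∨ -x ∈ pts := by decide +kernel

lemma atoms_sym (a : E3 3 → C) : Atoms pm pts (sym a) where
  nodup := by decide +kernel
  disj := by decide +kernel
  mem u _ := by simp [pm]
  cover := by decide +kernel
  zero := by decide +kernel
  col u _ v hv := by
    rcases List.mem_cons.1 hv with rfl | hv
    · rfl
    · rw [List.mem_singleton.1 hv, sym_neg]

lemma of_framesI (P : Pair a a) (h1 : ∀ y, sym a y = sym a (1, 0, 0) → y = (1, 0, 0) ∨ y = (2, 0, 0))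
    (h2 : sym a (1, 1, 0) ≠ sym a (0, 1, 0)) (h3 : sym a (1, 2, 0) ≠ sym a (0, 1, 0)) :
    ∃ F ∈ sstd, ∃ T : E3 3 ≃+ E3 3, F.Holds (sym a ∘ T) := by
  refine of_frames (lin := lin3) (Fs := framesI) (by decide +kernel)
    (runStart_sound (D := D33) (atoms_sym a) P.sym (by simp) (by decide +kernel)
      (keep := fun _ => true) (fun _ _ => rfl) (ps := [[(1, 0, 0)]])
      (t := [(0, 0, 1), (0, 1, 1), (0, 1, 2), (1, 0, 1), (1, 0, 2), (1, 1, 1), (1, 1, 2),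
        (1, 2, 1), (1, 2, 2)]) (cur := [(0, 1, 0)]) (rest := [(1, 1, 0), (1, 2, 0)])
      (c := sym a (0, 1, 0)) ?_ (by decide +kernel) (by decide +kernel) (by simp) (by simp)
      (by simpa using ⟨h2, h3⟩) (by decide +kernel))
  simp only [List.mem_singleton, forall_eq]
  refine ⟨by simp, by decide +kernel, by simp, ?_⟩
  simp only [List.mem_singleton, forall_eq]
  intro v hv
  refine ⟨fun e => e ▸ rfl, fun e => (h1 v e).resolve_right fun e => ?_⟩
  exact absurd (e ▸ hv) (by decide +kernel)

lemma of_framesN (P : Pair a a) (h1 : ∀ x, x ≠ 0 → ∃ y, sym a y = sym a x ∧ y ≠ x ∧ y ≠ -x)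
    (h2 : sym a (0, 1, 0) = sym a (1, 0, 0)) :
    ∃ F ∈ sstd, ∃ T : E3 3 ≃+ E3 3, F.Holds (sym a ∘ T) := by
  refine of_frames (lin := lin3) (Fs := framesN) (by decide +kernel)
    (runStart_sound (D := D33) (atoms_sym a) P.sym (by simp) (by decide +kernel)
      (keep := two) ?_ (ps := [])
      (t := [(0, 0, 1), (0, 1, 1), (0, 1, 2), (1, 0, 1), (1, 0, 2), (1, 1, 0), (1, 1, 1), (1, 1, 2),
        (1, 2, 0), (1, 2, 1), (1, 2, 2)]) (cur := [(1, 0, 0), (0, 1, 0)]) (rest := [])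
      (c := sym a (1, 0, 0)) (by simp) (by decide +kernel) (by decide +kernel) (by simp)
      (by simpa using h2) (by simp) (by decide +kernel))
  intro q hq
  match q, hq with
  | [], hq => exact absurd rfl hq.ne
  | _ :: _ :: _, _ => rfl
  | [x], hq =>
    have hx := hq.sub x (by simp)
    have hx0 : x ≠ 0 := fun e => absurd (e ▸ hx) (by decide +kernel)
    obtain ⟨y, h3, h4, h5⟩ := h1 x hx0
    have hy0 : y ≠ 0 := fun e => hx0 (P.sym.eq_zero (by rw [← h3, e]))
    rcases neg_mem_pts y hy0 with hy | hy
    · exact absurd (List.mem_singleton.1 ((hq.iff x (by simp) y hy).2 h3)) h4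
    · have := List.mem_singleton.1 ((hq.iff x (by simp) (-y) hy).2 ((sym_neg a y).trans h3))
      exact absurd (neg_eq_iff_eq_neg.1 this) h5

end

end SepProof

/-! ### Symmetrizations of S-rings of order twenty-seven -/

namespace SepProof

universe u v w

lemma lin3_apply (v : E3 3 × E3 3 × E3 3) (i j k : ZMod 3) :
    lin3 v (i, j, k) = (i * v.1.1 + j * v.2.1.1 + k * v.2.2.1,
      i * v.1.2.1 + j * v.2.1.2.1 + k * v.2.2.2.1,
      i * v.1.2.2 + j * v.2.1.2.2 + k * v.2.2.2.2) := rfl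

lemma ex_basis1 : ∀ u : E3 3, u ≠ 0 → ∃ v ∈ [(u, (0, 1, 0), (0, 0, 1)),
    (u, (1, 0, 0), (0, 0, 1)), (u, (1, 0, 0), (0, 1, 0))], ∀ x, lin3 v x = 0 → x = 0 := by
  decide +kernel

lemma ex_basis2 : ∀ u : E3 3, u.2 ≠ 0 → ∃ w ∈ [(0, 1, 0), (0, 0, 1)],
    ∀ x, lin3 ((1, 0, 0), u, w) x = 0 → x = 0 := by
  decide +kernel

/-- An automorphism with a prescribed image of the first basis vector. -/
lemma ex_equiv1 {u : E3 3} (hu : u ≠ 0) : ∃ T : E3 3 ≃+ E3 3, T (1, 0, 0) = u := by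
  obtain ⟨v, hv, h⟩ := ex_basis1 u hu
  refine ⟨toEquiv _ h, ?_⟩
  simp only [List.mem_cons, List.not_mem_nil, or_false] at hv
  rw [toEquiv_apply, lin3_apply]
  rcases hv with rfl | rfl | rfl <;> ext <;> simp

/-- An automorphism that fixes the first basis vector and has a prescribed image of the second. -/
lemma ex_equiv2 {u : E3 3} (hu : u.2 ≠ 0) : ∃ T : E3 3 ≃+ E3 3, ∀ i j : ZMod 3,
    T (i, j, 0) = (i + j * u.1, j * u.2.1, j * u.2.2) := by
  obtain ⟨w, -, h⟩ := ex_basis2 u hu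
  refine ⟨toEquiv _ h, fun i j => ?_⟩
  rw [toEquiv_apply, lin3_apply]
  ext <;> simp

lemma odd_card_range {R : Type u} {U : Type v} [AddCommGroup R] [AddCommGroup U] (f : R →+ U)
    (hf : Function.Injective f) (h : Odd (Nat.card R)) : Odd (Nat.card f.range) := by
  rwa [← Nat.card_congr (AddMonoidHom.ofInjective hf).toEquiv]

section
variable {C : Type w} {a : E3 3 → C}

/-- The colouring is good, or its symmetrization has one of the listed patterns. -/
def SymGood (a : E3 3 → C) : Prop :=
  Good.{0, v, w} a ∨ ∃ F ∈ sstd, ∃ T : E3 3 ≃+ E3 3, F.Holds (sym a ∘ T)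

lemma SymGood.of_comp (T : E3 3 ≃+ E3 3) (h : SymGood.{v, w} (a ∘ T)) : SymGood.{v, w} a := by
  rcases h with h | ⟨F, hF, T', h⟩
  · exact .inl (h.of_comp T)
  · exact .inr ⟨F, hF, T'.trans T, by rw [sym_comp] at h; exact h⟩

/-- A subgroup of order three consisting of classes of the symmetrization leads to a wreath product
unless it splits another coset. -/
lemma symGood_of_line (P : Pair a a)
    (h1 : ∀ y, sym a y = sym a (1, 0, 0) → y = (1, 0, 0) ∨ y = (2, 0, 0)) : SymGood.{v, w} a := by
  by_cases hf : ∀ (x : E3 3) (m : ZMod 3), x.2 ≠ 0 → sym a (x + (m, 0)) = sym a x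
  · left
    intro V _ _ b Q
    have hL : Closed a (AddMonoidHom.inl (ZMod 3) (E2 3)).range := by
      refine P.closed_of (u := (1, 0, 0)) (fun x e => ?_) ?_
      · rw [mem_range_inl]
        rcases h1 x (P.sym_eq e) with rfl | rfl <;> rfl
      · intro x hx
        rw [mem_range_inl, ← mem_zmultiples_inl] at hx
        have h0 : (1, 0, 0) ∈ AddSubgroup.closure {x | a x = a (1, 0, 0)} :=
          AddSubgroup.subset_closure (show a _ = a _ from rfl)
        exact AddSubgroup.zmultiples_le_of_mem h0 hx
    refine Q.ind_prod_wreath_inl sep_E23 (.inr rfl) ?_ ?_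
    · intro x y e hx
      exact (mem_range_inl y).1 (hL x y e ((mem_range_inl x).2 hx))
    · intro x m hx
      refine P.inv_of_sym hL (odd_card_range _ (fun x y h => congrArg Prod.fst h) ?_) ?_ _
        ⟨m, rfl⟩
      · rw [Nat.card_zmod]; decide
      · rintro _ ⟨m, rfl⟩
        exact hf x m hx
  · push Not at hf
    obtain ⟨x, m, hx, hm⟩ := hf
    obtain ⟨z, hz, h2⟩ : ∃ z : E3 3, z.2 ≠ 0 ∧
        ∀ m : ZMod 3, m ≠ 0 → sym a (z + (m, 0)) ≠ sym a z := by
      have hm0 : m ≠ 0 := by rintro rfl; exact hm (by rw [Prod.mk_zero_zero, add_zero])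
      have hmm : ∀ n m : ZMod 3, m ≠ 0 → n ≠ 0 → n = m ∨ n = m + m := by decide
      have h3 : ∀ m : ZMod 3, m + (m + m) = 0 := by decide
      by_cases hc : sym a (x + (m + m, 0)) = sym a x
      · refine ⟨x + (m, 0), by simpa using hx, fun n hn => ?_⟩
        rw [add_assoc]
        rcases hmm n m hm0 hn with rfl | rfl
        · have : ((n, 0) + (n, 0) : E3 3) = (n + n, 0) := by simp
          rw [this, hc]
          exact hm.symm
        · have : ((m, 0) + (m + m, 0) : E3 3) = 0 := by rw [Prod.mk_add_mk, h3]; simp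
          rw [this, add_zero]
          exact hm.symm
      · refine ⟨x, hx, fun n hn => ?_⟩
        rcases hmm n m hm0 hn with rfl | rfl
        · exact hm
        · exact hc
    obtain ⟨T, hT⟩ := ex_equiv2 hz
    refine SymGood.of_comp T (.inr (of_framesI (P.comp T).refl ?_ ?_ ?_))
    · intro y hy
      have e1 : T (1, 0, 0) = (1, 0, 0) := by rw [hT]; simp
      have e2 : T (2, 0, 0) = (2, 0, 0) := by rw [hT]; simp
      rw [sym_comp, Function.comp, Function.comp, e1] at hy
      exact (h1 _ hy).imp (fun h => T.injective (h.trans e1.symm))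
        fun h => T.injective (h.trans e2.symm)
    · rw [sym_comp, Function.comp, Function.comp, hT, hT]
      have e1 : (1 + 1 * z.1, 1 * z.2.1, 1 * z.2.2) = z + (1, 0) := by ext <;> simp [add_comm]
      have e2 : (0 + 1 * z.1, 1 * z.2.1, 1 * z.2.2) = z := by ext <;> simp
      rw [e1, e2]
      exact h2 1 (by decide)
    · rw [sym_comp, Function.comp, Function.comp, hT, hT]
      have e1 : (1 + 2 * z.1, 2 * z.2.1, 2 * z.2.2) = -(z + (2, 0)) := by
        have h2 : (2 : ZMod 3) = -1 := by decide
        ext <;> simp [h2]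
      have e2 : (0 + 1 * z.1, 1 * z.2.1, 1 * z.2.2) = z := by ext <;> simp
      rw [e1, e2, sym_neg]
      exact h2 2 (by decide)

lemma symGood (P : Pair a a) : SymGood.{v, w} a := by
  by_cases h : ∃ u, u ≠ 0 ∧ ∀ y, sym a y = sym a u → y = u ∨ y = -u
  · obtain ⟨u, hu, h⟩ := h
    obtain ⟨T, rfl⟩ := ex_equiv1 hu
    refine SymGood.of_comp T (symGood_of_line (P.comp T).refl fun y hy => ?_)
    rw [sym_comp] at hy
    rw [← map_neg] at h
    exact (h _ hy).imp (fun h => T.injective h) fun h => T.injective h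
  · push Not at h
    obtain ⟨y, e, h1, h2⟩ := h (1, 0, 0) (by decide)
    have hy : ∀ y : E3 3, y ≠ 0 → y ≠ (1, 0, 0) → y ≠ -(1, 0, 0) → y.2 ≠ 0 := by decide +kernel
    obtain ⟨T, hT⟩ := ex_equiv2 (hy y (fun h => absurd (P.sym.eq_zero (by rw [← e, h]))
      (by decide)) h1 h2)
    refine SymGood.of_comp T (.inr (of_framesN (P.comp T).refl ?_ ?_))
    · intro x hx
      obtain ⟨y, h1, h2, h3⟩ := h (T x) (by simpa using hx)
      refine ⟨T.symm y, ?_, ?_, ?_⟩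
      · rw [sym_comp]
        simpa using h1
      · rintro rfl
        simp at h2
      · intro e
        apply h3
        rw [← map_neg, ← e, AddEquiv.apply_symm_apply]
    · rw [sym_comp, Function.comp, Function.comp, hT, hT]
      simpa using e

end

end SepProof

/-! ### S-rings of order twenty-seven with two opposite classes -/

namespace SepProof

universe u v w

/-- Run `k` on all ways to add one atom of each pair of corresponding list entries to `cur`. -/
def enumS : List At → List At → List At → ℕ → ℕ → (Cl → Bool) → Bool
  | i :: t, j :: t', cur, r, e, k =>
    bAnd (enumS t t' (i :: cur) (Nat.add r i.r) (Nat.add e i.e) k)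
      (enumS t t' (j :: cur) (Nat.add r j.r) (Nat.add e j.e) k)
  | _, _, cur, r, e, k => k ⟨cur, r, e⟩

lemma Codec.enumS_sound {U : Type u} [AddCommGroup U] (D : Codec U) (S : U → List U) (f : U → U)
    (k : Cl → Bool) (t : List U) (hf : ∀ u ∈ t, f u = u ∨ f u = -u) :
    ∀ (cur : List U) (r e : ℕ), r = (D.clOf S cur).r → e = (D.clOf S cur).e →
    enumS (t.map (D.atom S)) ((t.map (- ·)).map (D.atom S)) (cur.map (D.atom S)) r e k = true →
    k (D.clOf S ((t.map f).reverse ++ cur)) = true := by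
  induction t with
  | nil =>
    rintro cur r e rfl rfl h
    exact h
  | cons j t ih =>
    intro cur r e hr he h
    simp only [List.map_cons, enumS, bAnd_eq] at h
    obtain ⟨hj, ht⟩ := List.forall_mem_cons.1 hf
    rw [List.map_cons, List.reverse_cons, List.append_assoc, List.singleton_append]
    have h' := ih ht (f j :: cur)
    rcases hj with e1 | e1 <;> rw [e1] at h' ⊢
    · exact h' _ _ (show r + _ = _ by subst hr; simp [clOf, add_comm])
        (show e + _ = _ by subst he; simp [clOf, add_comm]) h.1
    · exact h' _ _ (show r + _ = _ by subst hr; simp [clOf, add_comm])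
        (show e + _ = _ by subst he; simp [clOf, add_comm]) h.2

/-- The nonzero squares of the field of order twenty-seven, in suitable coordinates. -/
def dset : List (E3 3) :=
  [(0, 0, 1), (0, 1, 0), (0, 1, 2), (0, 2, 2), (1, 0, 0), (1, 0, 2), (1, 1, 0), (2, 0, 2),
   (2, 1, 0), (2, 1, 1), (2, 1, 2), (2, 2, 1), (2, 2, 2)]

/-- The nonzero squares and the non-squares. -/
def palParts : List (List (E3 3)) := [dset, dset.map (- ·)]

/-- Bases for the images of `dset` that contain the standard basis, as used by `runP`. -/
def framesP : List (E3 3 × E3 3 × E3 3) :=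
  [((0, 0, 1), (0, 1, 0), (1, 0, 0)), ((0, 0, 1), (0, 1, 0), (1, 1, 1)), ((0, 0, 1), (0, 1, 0), (1, 2, 1)),
   ((0, 0, 1), (0, 1, 0), (2, 0, 1)), ((0, 0, 1), (0, 1, 0), (2, 0, 2)), ((0, 0, 1), (0, 1, 0), (2, 1, 0)),
   ((0, 0, 1), (0, 1, 0), (2, 1, 2)), ((0, 0, 1), (0, 1, 0), (2, 2, 0)), ((0, 0, 1), (0, 1, 0), (2, 2, 2)),
   ((0, 0, 1), (1, 0, 0), (0, 1, 0)), ((0, 0, 1), (1, 0, 0), (0, 2, 1)), ((0, 0, 1), (1, 0, 0), (0, 2, 2)),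
   ((0, 0, 1), (1, 0, 0), (1, 1, 1)), ((0, 0, 1), (1, 0, 0), (1, 2, 0)), ((0, 0, 1), (1, 0, 0), (1, 2, 2)),
   ((0, 0, 1), (1, 0, 0), (2, 1, 1)), ((0, 0, 1), (1, 0, 0), (2, 2, 0)), ((0, 0, 1), (1, 0, 0), (2, 2, 2)),
   ((0, 0, 1), (1, 1, 0), (0, 1, 0)), ((0, 0, 1), (1, 1, 0), (0, 2, 1)), ((0, 0, 1), (1, 1, 0), (1, 0, 0)),
   ((0, 0, 1), (1, 1, 0), (2, 0, 1)), ((0, 0, 1), (1, 2, 0), (0, 2, 2)), ((0, 0, 1), (1, 2, 0), (1, 1, 0)),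
   ((0, 0, 1), (1, 2, 0), (1, 1, 2)), ((0, 0, 1), (1, 2, 0), (2, 0, 2)), ((0, 0, 1), (1, 2, 0), (2, 2, 1)),
   ((0, 0, 1), (2, 1, 0), (0, 2, 2)), ((0, 0, 1), (2, 1, 0), (1, 1, 0)), ((0, 0, 1), (2, 1, 0), (1, 1, 2)),
   ((0, 0, 1), (2, 1, 0), (2, 0, 2)), ((0, 0, 1), (2, 1, 0), (2, 2, 1)), ((0, 0, 1), (2, 2, 0), (0, 1, 0)),
   ((0, 0, 1), (2, 2, 0), (0, 2, 1)), ((0, 0, 1), (2, 2, 0), (1, 0, 0)), ((0, 0, 1), (2, 2, 0), (2, 0, 1))]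

def basis : List (E3 3) := [(1, 0, 0), (0, 1, 0), (0, 0, 1)]

def pts' : List (E3 3) := pts.filter fun x => x ∉ basis

/-- Every half of the nonzero elements that contains the basis and is the colour class of an S-ring
contains one of the listed images of `dset`. -/
def runP : Bool :=
  forceList (framesP.map fun v => D33.mask (dset.map (lin3 v))) fun ms =>
  D33.cls sing [basis] fun bs => D33.ats sing pts' fun t => D33.ats sing (pts'.map (- ·)) fun t' =>
    bs.all fun B => enumS t t' B.mem B.r B.e fun X =>
      bImp (cst X X X.mem) (ms.any fun m => Nat.beq (Nat.land X.r m) m)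

lemma runP_true : runP = true := by decide +kernel

section
variable {C : Type w} {a : E3 3 → C}

lemma ex_signs : ∀ i j : ZMod 3, i ≠ 0 → j ≠ 0 →
    ∀ x : E3 3, lin3 ((1, 0, 0), (0, i, 0), (0, 0, j)) x = 0 → x = 0 := by decide +kernel

/-- A colouring with two opposite classes that contain the basis and its opposite. -/
lemma paley_basis (P : Pair a a) (h : ∀ x, x ≠ 0 → a x = a (1, 0, 0) ∨ a (-x) = a (1, 0, 0))
    (hn : ∀ x, x ≠ 0 → a (-x) ≠ a x) (hb : ∀ x ∈ basis, a x = a (1, 0, 0)) :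
    ∃ T : E3 3 ≃+ E3 3, (Pat.full palParts).Holds (a ∘ T) := by
  classical
  generalize hcc : a (1, 0, 0) = c at *
  have hr := runP_true
  rw [runP, forceList_eq, Codec.cls_eq, Codec.ats_eq, Codec.ats_eq] at hr
  simp only [List.map_cons, List.map_nil, List.all_cons, List.all_nil, Bool.and_true] at hr
  let f : E3 3 → E3 3 := fun u => if a u = c then u else -u
  have hf : ∀ u, f u = u ∨ f u = -u := fun u => by
    by_cases hu : a u = c <;> simp [f, hu]
  have hfc : ∀ u, u ≠ 0 → a (f u) = c := fun u hu => by
    by_cases hu' : a u = c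
    · simp [f, hu']
    · simpa [f, hu'] using (h u hu).resolve_left hu'
  have h0 : ∀ u ∈ pts, u ≠ 0 := by decide +kernel
  have hpm : ∀ u ∈ pts, ∀ v ∈ pts, u ≠ -v := by decide +kernel
  have hr := D33.enumS_sound sing f _ pts' (fun u _ => hf u) basis _ _ rfl rfl hr
  set X := (pts'.map f).reverse ++ basis with hX
  have hXp : X.Perm (pts.map f) := by
    have h1 : basis = basis.map f := by
      conv_lhs => rw [← List.map_id basis]
      exact List.map_congr_left fun x hx => by simp [f, hb x hx]
    have h2 : (pts' ++ basis).Perm pts := by decide +kernel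
    rw [hX, h1]
    refine ((List.reverse_perm _).append_right _).trans ?_
    rw [← List.map_append]
    exact h2.map f
  have hXc : ∀ x ∈ X, a x = c := fun x hx => by
    obtain ⟨u, hu, rfl⟩ := List.mem_map.1 (hXp.mem_iff.1 hx)
    exact hfc u (h0 u hu)
  have hXn : X.Nodup := by
    rw [hXp.nodup_iff]
    refine List.Nodup.map_on (fun u hu v hv e => ?_) (by decide +kernel)
    by_contra hne
    rcases hf u with e1 | e1 <;> rcases hf v with e2 | e2 <;> rw [e1, e2] at e
    · exact hne e
    · exact hpm u hu v hv e
    · exact hpm v hv u hu e.symm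
    · exact hne (neg_injective e)
  have hXi : IsCl (nz3 3) a X := by
    have h00 : ∀ x ∈ nz3 3, x ≠ 0 := by decide +kernel
    refine ⟨by simp [hX, basis], fun u hu => mem_nz3 (.inr rfl) u ?_, hXn, fun u hu v hv => ?_⟩
    · obtain ⟨w, hw, rfl⟩ := List.mem_map.1 (hXp.mem_iff.1 hu)
      rcases hf w with e | e <;> rw [e]
      · exact h0 w hw
      · exact neg_ne_zero.2 (h0 w hw)
    · rw [hXc u hu]
      refine ⟨hXc v, fun e => hXp.mem_iff.2 (List.mem_map.2 ?_)⟩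
      rcases neg_mem_pts v (h00 v hv) with hv' | hv'
      · exact ⟨v, hv', by simp [f, e]⟩
      · have hne : a (-v) ≠ c := fun e' => hn v (h00 v hv) (e'.trans e.symm)
        exact ⟨-v, hv', by simp [f, hne]⟩
  have hr := bImp_eq.1 hr (cst_true (atoms_sing a (mem_nz3 (.inr rfl)) (by decide +kernel)) P
    (by simp) hXi hXi hXi)
  rw [List.any_eq_true] at hr
  obtain ⟨m, hm, hr⟩ := hr
  obtain ⟨v, hv, rfl⟩ := List.mem_map.1 hm
  rw [Nat.beq_eq, D33.clOf_r_mask, flatMap_sing] at hr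
  have hinj : ∀ v ∈ framesP, ∀ x, lin3 v x = 0 → x = 0 := by decide +kernel
  let T := toEquiv (lin3 v) (hinj v hv)
  have hd : ∀ x ∈ dset, a (T x) = c := fun x hx => hXc _ (Codec.land_mask (D := D33) hXn
    ((List.nodup_map_iff T.injective).2 (by decide +kernel)) hr (List.mem_map_of_mem hx))
  have hd0 : ∀ x ∈ dset, x ≠ 0 := by decide +kernel
  have hdd : ∀ x, x ≠ 0 → x ∈ dset ∨ -x ∈ dset := by decide +kernel
  have hT0 : ∀ x, T x = 0 ↔ x = 0 := fun x => by simp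
  have hcl : ∀ x ∈ dset, ∀ y, a (T y) = a (T x) → y ∈ dset := fun x hx y e => by
    have hy : y ≠ 0 := by
      rintro rfl
      rw [map_zero] at e
      exact hd0 x hx ((hT0 x).1 (P.eq_zero e.symm))
    refine (hdd y hy).resolve_right fun h' => ?_
    have := hd _ h'
    rw [map_neg] at this
    exact hn (T y) (fun h => hy ((hT0 y).1 h)) (by rw [this, e, hd x hx])
  refine ⟨T, ?_, ?_⟩
  · intro l hl
    simp only [Pat.full, palParts, List.mem_cons, List.not_mem_nil, or_false] at hl
    rcases hl with rfl | rfl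
    · exact hcl
    · rintro x hx y e
      obtain ⟨x, hx', rfl⟩ := List.mem_map.1 hx
      refine List.mem_map.2 ⟨-y, hcl x hx' (-y) ?_, neg_neg y⟩
      have := P.neg e
      simpa using this
  · intro l hl
    simp only [Pat.full, palParts, List.mem_cons, List.not_mem_nil, or_false] at hl
    rcases hl with rfl | rfl
    · exact fun x hx y hy => (hd x hx).trans (hd y hy).symm
    · rintro x hx y hy
      obtain ⟨x, hx', rfl⟩ := List.mem_map.1 hx
      obtain ⟨y, hy', rfl⟩ := List.mem_map.1 hy
      simpa using P.neg ((hd x hx').trans (hd y hy').symm)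

/-- A colouring with trivial symmetrization is trivial or has two opposite classes. -/
lemma paley (P : Pair a a) (h : ∀ x y, x ≠ 0 → y ≠ 0 → sym a x = sym a y) :
    Good.{0, v, w} a ∨ ∃ T : E3 3 ≃+ E3 3, (Pat.full palParts).Holds (a ∘ T) := by
  have he : ((1, 0, 0) : E3 3) ≠ 0 := by decide
  have h1 : ∀ x, x ≠ 0 → a x = a (1, 0, 0) ∨ a x = a (-(1, 0, 0)) := fun x hx =>
    mem_sym (h x _ hx he)
  by_cases hs : a (-(1, 0, 0)) = a (1, 0, 0)
  · left
    intro V _ _ b Q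
    rw [hs] at h1
    simp only [or_self] at h1
    exact Q.ind_trivial fun x y hx hy => (h1 x hx).trans (h1 y hy).symm
  right
  have h2 : ∀ x, x ≠ 0 → a x = a (1, 0, 0) ∨ a (-x) = a (1, 0, 0) := fun x hx =>
    (h1 x hx).imp_right fun e => by simpa using P.neg e
  have h3 : ∀ x, x ≠ 0 → a (-x) ≠ a x := fun x hx e => by
    rcases h1 x hx with e1 | e1
    · exact hs ((P.neg e1).symm.trans (e.trans e1))
    · have := P.neg e1
      rw [neg_neg] at this
      exact hs (e1.symm.trans (e.symm.trans this))
  have h4 : ∀ u : E3 3, u ≠ 0 → ∃ i : ZMod 3, i ≠ 0 ∧ a (i * u.1, i * u.2.1, i * u.2.2) =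
      a (1, 0, 0) := fun u hu => by
    rcases h2 u hu with e | e
    · exact ⟨1, by decide, by simpa using e⟩
    · refine ⟨-1, by decide, ?_⟩
      rw [← e]
      congr 1
      ext <;> simp
  obtain ⟨i, hi, ei⟩ := h4 (0, 1, 0) (by decide)
  obtain ⟨j, hj, ej⟩ := h4 (0, 0, 1) (by decide)
  let T := toEquiv _ (ex_signs i j hi hj)
  have eT : T (1, 0, 0) = (1, 0, 0) := by simp [T, lin3_apply]
  have hT0 : ∀ x, x ≠ 0 → T x ≠ 0 := fun x hx => by simpa using hx
  obtain ⟨T', h'⟩ := paley_basis (a := a ∘ T) (P.comp T).refl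
    (fun x hx => by simpa [eT] using h2 (T x) (hT0 x hx))
    (fun x hx => by simpa using h3 (T x) (hT0 x hx)) (by
      simp only [basis, List.mem_cons, List.not_mem_nil, or_false]
      rintro x (rfl | rfl | rfl)
      · rfl
      · simpa [eT, T, lin3_apply] using ei
      · simpa [eT, T, lin3_apply] using ej)
  exact ⟨T'.trans T, h'⟩

end

end SepProof

/-! ### The elementary abelian group of order twenty-seven -/

namespace SepProof

universe u v w

/-- Split a list by the sign of a function. -/
def spl (l : List (E3 3)) (f : E3 3 → ZMod 3) : List (List (E3 3)) :=
  [l.filter fun x => f x = 1, l.filter fun x => f x = 2]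

def kPart (i : ℕ) : List (E3 3) := kParts.getD i []

def hPart (i : ℕ) : List (E3 3) := hParts.getD i []

/-- The indecomposable partitions: the two that refine the partition by Hamming weight, the four
that refine the partition into parabolic cones, and the partition into the nonzero squares
and non-squares of the field of order twenty-seven. -/
def sp27 : List (List (List (E3 3))) :=
  [kParts, [kPart 0, kPart 1] ++ spl (kPart 2) fun x => x.1 * x.2.1 * x.2.2,
    spl (hPart 0) (·.1) ++ spl (hPart 1) (·.2.1) ++ (hParts.drop 2).flatMap (spl · (·.2.2)),
    spl (hPart 0) (·.1) ++ [hPart 1] ++ (hParts.drop 2).flatMap (spl · (·.2.2)),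
    [hPart 0] ++ spl (hPart 1) (·.2.1) ++ hParts.drop 2, hParts, palParts]

/-- The decomposable patterns, followed by the indecomposable ones. -/
def std27 : List (Pat (E3 3)) := std3 3 ++ sp27.map Pat.full

/-- Indices in `std27`, with bases, for the refinements of `kParts`. -/
def framesK : List (ℕ × E3 3 × E3 3 × E3 3) :=
  [(5, ((1, 0, 0), (0, 1, 0), (0, 0, 1))), (6, ((1, 0, 0), (0, 1, 0), (0, 0, 1)))]

/-- Indices in `std27`, with bases, for the refinements of `hParts`. -/
def framesH : List (ℕ × E3 3 × E3 3 × E3 3) :=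
  [(0, ((0, 0, 1), (0, 1, 0), (1, 0, 0))), (0, ((0, 1, 1), (0, 0, 1), (1, 2, 0))),
   (0, ((0, 1, 2), (0, 0, 1), (1, 1, 0))), (7, ((1, 0, 0), (0, 1, 0), (0, 0, 1))),
   (8, ((1, 0, 0), (0, 1, 0), (0, 0, 1))), (9, ((1, 0, 0), (0, 1, 0), (0, 0, 1))),
   (10, ((1, 0, 0), (0, 1, 0), (0, 0, 1)))]

/-- The class consists of at least three atoms. -/
def three (X : Cl) : Bool := Nat.ble 3 X.mem.length

section
variable {C : Type w} {a : E3 3 → C}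

lemma class_H (P : Pair a a) (h : (Pat.full hParts).Holds (sym a)) :
    ∃ F ∈ std27, ∃ T : E3 3 ≃+ E3 3, F.Holds (a ∘ T) :=
  of_frames (lin := lin3) (Fs := framesH) (by decide +kernel)
    (runGo_sound (D := D33) (A := nz3 3) (atoms_sing a (mem_nz3 (.inr rfl)) (by decide +kernel)) P
      (by simp) (by decide +kernel) (keep := fun _ => true) (fun _ _ => rfl) (bs := hParts)
      (by decide +kernel) (fun l hl u hu v _ e => h.1 l hl u hu v (P.sym_eq e))
      (by decide +kernel) (by decide +kernel))

lemma class_K (P : Pair a a) (h : (Pat.full kParts).Holds (sym a)) :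
    ∃ F ∈ std27, ∃ T : E3 3 ≃+ E3 3, F.Holds (a ∘ T) := by
  have hbs : ∀ l ∈ [kPart 0, kPart 2, kPart 1], l ∈ kParts := by decide +kernel
  have hcov : ∀ u ∈ nz3 3, ∃ l ∈ [kPart 0, kPart 2, kPart 1], u ∈ l := by decide +kernel
  refine of_frames (lin := lin3) (Fs := framesK) (by decide +kernel)
    (runGo_sound (D := D33) (A := nz3 3) (atoms_sing a (mem_nz3 (.inr rfl)) (by decide +kernel)) P
      (by simp) (by decide +kernel) (keep := three) ?_ (bs := [kPart 0, kPart 2, kPart 1])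
      (by decide +kernel) (fun l hl u hu v _ e => h.1 l (hbs l hl) u hu v (P.sym_eq e))
      hcov (by decide +kernel))
  intro q hq
  -- The class and its opposite cover a part, and the parts have at least six elements.
  obtain ⟨x, hx⟩ := List.exists_mem_of_ne_nil _ hq.ne
  obtain ⟨l, hl, hxl⟩ := hcov x (hq.sub x hx)
  have hln : ∀ l ∈ [kPart 0, kPart 2, kPart 1],
      l.Nodup ∧ 6 ≤ l.length ∧ ∀ y ∈ l, y ∈ nz3 3 ∧ -y ∈ nz3 3 := by decide +kernel
  replace hln := hln l hl
  have hsub : l ⊆ q ++ q.map (- ·) := by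
    intro y hy
    rw [List.mem_append]
    have h1 := hln.2.2 y hy
    refine (mem_sym (h.2 l (hbs l hl) y hy x hxl)).imp (hq.iff x hx y h1.1).2 fun e => ?_
    exact List.mem_map.2 ⟨-y, (hq.iff x hx (-y) h1.2).2 (by simpa using P.neg e), neg_neg y⟩
  have := (hln.1.subperm hsub).length_le
  rw [List.length_append, List.length_map] at this
  rw [three, Nat.ble_eq]
  simp only [Codec.clOf, List.length_map]
  omega

/-- The patterns of the symmetrization, one by one: for the decomposable ones the colouring itself
is decomposable since the orders of the subgroups are odd. -/
lemma class_of_sym (P : Pair a a) {F : Pat (E3 3)} (hF : F ∈ sstd) (h : F.Holds (sym a)) :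
    Good.{0, v, w} a ∨ ∃ c ∈ sp27, ∃ T : E3 3 ≃+ E3 3, (Pat.full c).Holds (a ∘ T) := by
  have hA := mem_nz3 (p := 3) (.inr rfl)
  have key : (∃ F ∈ std27, ∃ T : E3 3 ≃+ E3 3, F.Holds (a ∘ T)) → Good.{0, v, w} a ∨
      ∃ c ∈ sp27, ∃ T : E3 3 ≃+ E3 3, (Pat.full c).Holds (a ∘ T) := by
    rintro ⟨F, hF, T, h⟩
    rcases List.mem_append.1 hF with hF | hF
    · exact .inl (Good.of_comp T (good_std3 (.inr rfl) sep_E23 (P.comp T).refl hF h))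
    · obtain ⟨c, hc, rfl⟩ := List.mem_map.1 hF
      exact .inr ⟨c, hc, T, h⟩
  have hcl : ∀ {f : E3 3 → Prop} [DecidablePred f], ((nz3 3).filter fun x => f x) ∈ F.cl →
      ∀ x y, a x = a y → f x → f y := fun hl x y e hx =>
    h.closed P.sym hA hl x y (P.sym_eq e) hx
  simp only [sstd, List.mem_cons, List.not_mem_nil, or_false] at hF
  rcases hF with rfl | rfl | rfl | rfl | rfl | rfl
  · left
    intro V _ _ b Q
    exact Q.ind_prod_tensor sep_E23 (.inr rfl) (hcl (by simp)) (hcl (by simp))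
  · left
    intro V _ _ b Q
    have h1 : ∀ x y, a x = a y → x.1 = 0 → y.1 = 0 := hcl (by simp)
    have hr : ∀ x, x ∈ (AddMonoidHom.inr (ZMod 3) (E2 3)).range ↔ x.1 = 0 := fun x =>
      ⟨by rintro ⟨m, rfl⟩; rfl, fun h => ⟨x.2, Prod.ext h.symm rfl⟩⟩
    refine Q.ind_prod_wreath_inr sep_E23 (.inr rfl) h1 fun x m hx => ?_
    refine P.inv_of_sym (L := (AddMonoidHom.inr (ZMod 3) (E2 3)).range)
      (fun x y e hx => (hr y).2 (h1 x y e ((hr x).1 hx)))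
      (odd_card_range _ (fun x y h => congrArg Prod.snd h) ?_) ?_ _ ⟨m, rfl⟩
    · rw [Nat.card_prod, Nat.card_zmod]; decide
    · rintro _ ⟨m, rfl⟩
      exact h.mono' hA (f := fun x => x.1 ≠ 0) (by simp) (by simp) _ _ (by simpa using hx) hx
  · left
    intro V _ _ b Q
    have h1 : ∀ x y, a x = a y → x.2 = 0 → y.2 = 0 := hcl (by simp)
    refine Q.ind_prod_wreath' (.inr rfl) sep_E23 h1
      (hcl (f := fun x => x.1 = 0 ∧ x.2.2 = 0) (by simp)) fun x m hx => ?_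
    have hx' : x.2 ≠ 0 := fun e => hx (congrArg Prod.snd e)
    refine P.inv_of_sym (L := (AddMonoidHom.inl (ZMod 3) (E2 3)).range)
      (fun x y e hx => (mem_range_inl y).2 (h1 x y e ((mem_range_inl x).1 hx)))
      (odd_card_range _ (fun x y h => congrArg Prod.fst h) ?_) ?_ _ ⟨m, rfl⟩
    · rw [Nat.card_zmod]; decide
    · rintro _ ⟨m, rfl⟩
      exact h.mono' hA (f := fun y => y.2 = x.2) (by simpa using hx'.symm)
        (List.mem_map.2 ⟨x.2, List.mem_filter.2 ⟨mem_nz2 (.inr rfl) _ hx', by simpa using hx⟩,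
          rfl⟩) _ _ (by simp) rfl
  · exact key (class_H P h)
  · exact key (class_K P h)
  · refine (paley P fun x y hx hy => ?_).imp_right fun ⟨T, h⟩ => ⟨palParts, by simp [sp27], T, h⟩
    exact h.mono' hA (f := fun x => x ≠ 0) (by simp) (by simp) x y hx hy

lemma class_E33 (P : Pair a a) :
    Good.{0, v, w} a ∨ ∃ c ∈ sp27, ∃ T : E3 3 ≃+ E3 3, (Pat.full c).Holds (a ∘ T) := by
  rcases symGood P with h | ⟨F, hF, T, h⟩
  · exact .inl h
  · rw [← sym_comp] at h
    rcases class_of_sym (P.comp T).refl hF h with h | ⟨c, hc, T', h⟩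
    · exact .inl (h.of_comp T)
    · exact .inr ⟨c, hc, T'.trans T, h⟩

end

end SepProof

namespace SepProof

universe u v w

/-- The linear maps that realize the correspondences between the partitions in `sp27` that preserve
the structure constants. -/
def maps27 : List (E3 3 × E3 3 × E3 3) :=
  [((1, 0, 0), (0, 1, 0), (0, 0, 1)), ((2, 0, 0), (0, 2, 0), (0, 0, 2)),
    ((1, 0, 0), (0, 2, 0), (2, 0, 1)), ((2, 0, 0), (2, 2, 0), (1, 1, 2)),
    ((2, 0, 0), (1, 1, 0), (0, 1, 2)), ((1, 0, 0), (2, 1, 0), (2, 1, 1)),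
    ((1, 0, 0), (0, 2, 0), (1, 0, 1)), ((2, 0, 0), (0, 1, 0), (2, 0, 2)),
    ((1, 0, 0), (0, 1, 0), (2, 0, 1)), ((2, 0, 0), (2, 1, 0), (2, 2, 2)),
    ((1, 0, 0), (0, 2, 0), (0, 0, 1)), ((2, 0, 0), (0, 2, 0), (1, 0, 2))]

lemma sep_E33 : Sep.{0, v, w} (E3 3) := by
  intro V _ _ C a b P
  rcases class_E33 P.refl with h | ⟨c, hc, T, h⟩
  · exact h V b P
  · refine Good.of_comp T (good_special (D := D33) (A := nz3 3) (by decide) (by simp)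
      (mem_nz3 (.inr rfl)) (by decide +kernel) (by decide +kernel) (fun b P => class_E33 P)
      (Ts := maps27.map fun v => ⇑(lin3 v)) ?_ (by decide +kernel)
      (by decide +kernel) hc h) V b P
    intro T hT
    obtain ⟨v, hv, rfl⟩ := List.mem_map.1 hT
    refine ⟨_, rfl, (injective_iff_map_eq_zero _).2 ?_⟩
    revert v
    decide +kernel

end SepProof

open SRingPaper in
/-- for `p ∈ {2,3}` and `k ≥ 1`, the group `C_p × C_p × C_{p^k}` is
separable with respect to the class of finite abelian groups iff `k = 1`. -/
theorem Cp_Cp_Cpk_separable_iff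
    (p k : ℕ) (hp : p = 2 ∨ p = 3) (hk : 1 ≤ k)
    (G : Type*) [Group G] [Finite G]
    (hG : Nonempty (G ≃* Multiplicative (ZMod p × ZMod p × ZMod (p ^ k)))) :
    (∀ A : SRing G, SepAbelian A) ↔ k = 1 := by
  obtain ⟨σ⟩ := hG
  constructor
  · intro h
    by_contra hk1
    exact SepProof.not_sep_of_two_le p k hp (by omega) σ h
  · rintro rfl A
    rw [pow_one] at σ
    rcases hp with rfl | rfl
    · exact SepProof.sepAbelian_of σ.symm SepProof.sep_E32 A
    · exact SepProof.sepAbelian_of σ.symm SepProof.sep_E33 A
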